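/- Let $m$ be a squarefree positive integer and $q$ an integer coprime to $m$ that is not a perfect $p$-th power for any prime $p \mid m$. Then the set of primes $p$ for which $x^m \equiv q \pmod p$ is solvable has natural density $\varphi(m)/m$. -/

import Mathlib

/-!
That `q` is an `m`-th power modulo `p` is, by the Möbius function, a signed combination over
`d ∣ n ∣ m` of the conditions that `n ∣ p - 1` and `q` is a `d`-th power modulo `p`. Up to finitely
many `p`, the latter says that `p` splits completely in `L = ℚ(ζₙ, q^(1/d))`. The primes
dividing `q` are unramified in `ℚ(ζₙ)`, which does not contain `√-1` as `n` is squarefree; so `q` is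
not an `l`-th power there for any prime `l ∣ d`, and `[L : ℚ] = φ(n) d`.

Only totally split primes occur, so the full Chebotarev theorem is not needed: the prime ideal
theorem for `L` (the Wiener–Ikehara theorem applied to `-ζ_L'/ζ_L`, whose boundary behaviour comes
from the continuation of `ζ_L` slightly past `re s = 1` and its non-vanishing there) says that there
is on average one prime of norm `p`, and there are `[L : ℚ]` of them when `p` splits completely.
Hence these `p` have density `1 / (φ(n) d)`, and
`∑_{n ∣ m} μ(n)/φ(n) ∑_{d ∣ n} μ(d)/d = φ(m)/m`.
-/

/-! ### The Wiener–Ikehara theorem -/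

section Fejer

open MeasureTheory Set Complex

/-- The tent function supported on `[-1, 1]`; its integer translates form a Lipschitz partition of
unity on `ℝ`, and its Fourier transform is nonnegative. -/
noncomputable def tent (x : ℝ) : ℝ := max 0 (1 - |x|)

theorem tent_nonneg (x : ℝ) : 0 ≤ tent x := le_max_left _ _

theorem tent_eq_zero {x : ℝ} (h : 1 ≤ |x|) : tent x = 0 := max_eq_left (by linarith)

theorem tent_eq_one_sub {x : ℝ} (hx₀ : 0 ≤ x) (hx₁ : x ≤ 1) : tent x = 1 - x := by
  rw [tent, abs_of_nonneg hx₀, max_eq_right (by linarith)]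

theorem tent_neg (x : ℝ) : tent (-x) = tent x := by rw [tent, tent, abs_neg]

@[fun_prop]
theorem continuous_tent : Continuous tent := by
  unfold tent
  fun_prop

theorem hasCompactSupport_tent_div {l : ℝ} (hl : 0 < l) :
    HasCompactSupport fun y => tent (y / l) := by
  refine HasCompactSupport.intro (isCompact_Icc (a := -l) (b := l)) fun y hy => tent_eq_zero ?_
  rw [abs_div, abs_of_pos hl, one_le_div hl]
  by_contra! h
  exact hy (abs_le.1 h.le)

theorem integral_one_sub_mul_cexp {c : ℂ} (hc : c ≠ 0) :
    ∫ y in (0 : ℝ)..1, (1 - (y : ℂ)) * cexp (c * y) = (cexp c - 1 - c) / c ^ 2 := by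
  have hexp (y : ℝ) : HasDerivAt (fun y : ℝ => cexp (c * y)) (cexp (c * y) * c) y := by
    simpa using ((hasDerivAt_id y).ofReal_comp.const_mul c).cexp
  have hprimitive (y : ℝ) : HasDerivAt
      (fun y : ℝ => (1 - (y : ℂ)) * (cexp (c * y) / c) + cexp (c * y) / c ^ 2)
      ((1 - (y : ℂ)) * cexp (c * y)) y := by
    refine ((((hasDerivAt_id y).ofReal_comp.const_sub 1).mul ((hexp y).div_const c)).add
      ((hexp y).div_const (c ^ 2))).congr_deriv ?_
    simp only [id_eq, ofReal_one]
    field_simp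
    ring
  rw [intervalIntegral.integral_eq_sub_of_hasDerivAt (fun y _ => hprimitive y)
    (Continuous.intervalIntegrable (by fun_prop) _ _)]
  simp only [ofReal_one, ofReal_zero, mul_one, mul_zero, sub_self, zero_mul, sub_zero, one_mul,
    zero_add, Complex.exp_zero]
  field_simp
  ring

theorem integral_Ioi_tent_mul_cexp {c : ℂ} (hc : c ≠ 0) :
    ∫ y in Ioi (0 : ℝ), (tent y : ℂ) * cexp (c * y) = (cexp c - 1 - c) / c ^ 2 := by
  rw [← integral_one_sub_mul_cexp hc, intervalIntegral.integral_of_le zero_le_one,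
    setIntegral_eq_of_subset_of_forall_sdiff_eq_zero measurableSet_Ioi Ioc_subset_Ioi_self]
  · refine setIntegral_congr_fun measurableSet_Ioc fun y hy => ?_
    simp only [tent_eq_one_sub hy.1.le hy.2, ofReal_sub, ofReal_one]
  · rintro y ⟨hy₀, hy₁⟩
    rw [tent_eq_zero, ofReal_zero, zero_mul]
    exact (not_le.1 fun h => hy₁ ⟨hy₀, h⟩).le.trans (le_abs_self y)

theorem integral_tent_mul_cexp {c : ℂ} (hc : c ≠ 0) :
    ∫ y : ℝ, (tent y : ℂ) * cexp (c * y) = (cexp c + cexp (-c) - 2) / c ^ 2 := by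
  have hint : Integrable fun y : ℝ => (tent y : ℂ) * cexp (c * y) := by
    refine Continuous.integrable_of_hasCompactSupport (by fun_prop) (HasCompactSupport.mul_right ?_)
    simpa only [div_one, Function.comp_def] using
      (hasCompactSupport_tent_div one_pos).comp_left ofReal_zero
  have hneg : ∫ y in Iic (0 : ℝ), (tent y : ℂ) * cexp (c * y) =
      ∫ y in Ioi (0 : ℝ), (tent y : ℂ) * cexp (-c * y) := by
    have h := integral_comp_neg_Ioi 0 fun y : ℝ => (tent y : ℂ) * cexp (c * y)
    rw [neg_zero] at h
    rw [← h]
    simp only [tent_neg, ofReal_neg, mul_neg, neg_mul]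
  rw [← intervalIntegral.integral_Iic_add_Ioi hint.integrableOn hint.integrableOn, hneg,
    integral_Ioi_tent_mul_cexp hc, integral_Ioi_tent_mul_cexp (neg_ne_zero.2 hc)]
  field_simp
  ring

/-- The Fejér kernel, the Fourier transform of the tent function of width `l`. -/
noncomputable def fejerKernel (l v : ℝ) : ℝ := l * Real.sinc (l * v / 2) ^ 2

theorem integral_tent_mul_cexp_I {v : ℝ} (hv : v ≠ 0) :
    ∫ y : ℝ, (tent y : ℂ) * cexp (I * v * y) = (Real.sinc (v / 2) ^ 2 : ℝ) := by
  have hvc : (v : ℂ) ≠ 0 := ofReal_ne_zero.2 hv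
  have hcos : cexp (I * v) + cexp (-(I * v)) = 2 * (Real.cos v : ℂ) := by
    rw [ofReal_cos, Complex.cos, mul_comm I]
    ring_nf
  have hsin : Real.cos v = 1 - 2 * Real.sin (v / 2) ^ 2 := by
    rw [← mul_div_cancel₀ v two_ne_zero, Real.cos_two_mul, Real.cos_sq']
    ring_nf
  rw [integral_tent_mul_cexp (mul_ne_zero I_ne_zero hvc), hcos, hsin,
    Real.sinc_of_ne_zero (div_ne_zero hv two_ne_zero), mul_pow, I_sq]
  push_cast
  field_simp
  ring

theorem integral_tent_div_mul_cexp {l v : ℝ} (hl : 0 < l) (hv : v ≠ 0) :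
    ∫ y : ℝ, (tent (y / l) : ℂ) * cexp (I * y * v) = fejerKernel l v := by
  have h := Measure.integral_comp_div
    (fun y : ℝ => (tent y : ℂ) * cexp (I * (l * v : ℝ) * y)) l
  rw [integral_tent_mul_cexp_I (mul_ne_zero hl.ne' hv), abs_of_pos hl, real_smul,
    ← ofReal_mul] at h
  rw [fejerKernel, ← h]
  congr 1 with y
  congr 2
  have hlc : (l : ℂ) ≠ 0 := ofReal_ne_zero.2 hl.ne'
  push_cast
  field_simp

@[fun_prop]
theorem continuous_fejerKernel (l : ℝ) : Continuous (fejerKernel l) := by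
  have := Real.continuous_sinc
  unfold fejerKernel
  fun_prop

theorem fejerKernel_nonneg {l : ℝ} (hl : 0 < l) (v : ℝ) : 0 ≤ fejerKernel l v := by
  unfold fejerKernel
  positivity

theorem sq_mul_fejerKernel_le {l : ℝ} (hl : 0 < l) (v : ℝ) : v ^ 2 * fejerKernel l v ≤ 4 / l := by
  rcases eq_or_ne v 0 with rfl | hv
  · simp only [ne_eq, OfNat.ofNat_ne_zero, not_false_eq_true, zero_pow, zero_mul]
    positivity
  · rw [fejerKernel, Real.sinc_of_ne_zero (by positivity)]
    calc v ^ 2 * (l * (Real.sin (l * v / 2) / (l * v / 2)) ^ 2)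
        = 4 / l * Real.sin (l * v / 2) ^ 2 := by field_simp; ring
      _ ≤ 4 / l * 1 := by gcongr; exact Real.sin_sq_le_one _
      _ = 4 / l := mul_one _

theorem fejerKernel_le {l : ℝ} (hl : 0 < l) (v : ℝ) : fejerKernel l v ≤ l := by
  have h : Real.sinc (l * v / 2) ^ 2 ≤ 1 := (sq_le_one_iff_abs_le_one _).2 (Real.abs_sinc_le_one _)
  exact mul_le_of_le_one_right hl.le h

theorem fejerKernel_ge {l v : ℝ} (hl : 0 < l) (h : |v| ≤ 1 / l) : l / 4 ≤ fejerKernel l v := by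
  have hsinc : ∀ x : ℝ, 0 ≤ x → x ≤ 1 / 2 → 1 / 2 ≤ Real.sinc x := by
    intro x hx hx'
    rcases hx.eq_or_lt with rfl | hx
    · norm_num
    rw [Real.sinc_of_ne_zero hx.ne', le_div_iff₀ hx]
    have hsin := Real.mul_le_sin hx.le (by linarith [Real.pi_gt_three])
    have hpi : 1 / 2 ≤ 2 / Real.pi := by
      rw [div_le_div_iff₀ two_pos Real.pi_pos]
      linarith [Real.pi_le_four]
    nlinarith
  have habs : Real.sinc (l * v / 2) = Real.sinc (l * |v| / 2) := by
    rcases abs_choice v with hv | hv <;> rw [hv]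
    rw [← Real.sinc_neg]
    ring_nf
  have hlv : l * |v| ≤ 1 := by rwa [le_div_iff₀' hl] at h
  rw [fejerKernel, habs]
  calc l / 4 = l * (1 / 2) ^ 2 := by ring
    _ ≤ l * Real.sinc (l * |v| / 2) ^ 2 := by
      gcongr
      exact hsinc _ (by positivity) (by linarith)

theorem integrable_fejerKernel {l : ℝ} (hl : 0 < l) : Integrable (fejerKernel l) := by
  refine (integrable_inv_one_add_sq.const_mul (l + 4 / l)).mono'
    (continuous_fejerKernel l).aestronglyMeasurable (.of_forall fun v => ?_)
  rw [Real.norm_of_nonneg (fejerKernel_nonneg hl v), ← div_eq_mul_inv, le_div_iff₀ (by positivity)]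
  linarith [sq_mul_fejerKernel_le hl v, fejerKernel_le hl v]

theorem fejerKernel_le_of_le_abs {l δ v : ℝ} (hl : 0 < l) (hδ : 0 < δ) (hv : δ ≤ |v|) :
    fejerKernel l v ≤ 4 / l * (1 + 1 / δ ^ 2) * (1 + v ^ 2)⁻¹ := by
  have hδv : δ ^ 2 ≤ v ^ 2 := (sq_abs v).symm ▸ pow_le_pow_left₀ hδ.le hv 2
  have hK : fejerKernel l v ≤ 4 / l * (1 / δ ^ 2) := by
    have h : δ ^ 2 * fejerKernel l v ≤ 4 / l :=
      (mul_le_mul_of_nonneg_right hδv (fejerKernel_nonneg hl v)).trans (sq_mul_fejerKernel_le hl v)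
    rwa [mul_one_div, le_div_iff₀' (by positivity)]
  rw [← div_eq_mul_inv, le_div_iff₀ (by positivity)]
  linarith [sq_mul_fejerKernel_le hl v]

end Fejer

section Tauberian

open Filter MeasureTheory Set Topology Complex

theorem tendsto_setIntegral_exp_neg_mul {φ : ℝ → ℝ} (hφ : IntegrableOn φ (Ioi 0)) :
    Tendsto (fun e : ℝ => ∫ t in Ioi (0 : ℝ), Real.exp (-e * t) * φ t) (𝓝[>] 0)
      (𝓝 (∫ t in Ioi (0 : ℝ), φ t)) := by
  refine tendsto_integral_filter_of_dominated_convergence (fun t => ‖φ t‖) ?_ ?_ hφ.norm ?_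
  · exact .of_forall fun e => (by fun_prop : Continuous fun t => Real.exp (-e * t))
      |>.aestronglyMeasurable.mul hφ.1
  · filter_upwards [self_mem_nhdsWithin] with e (he : 0 < e)
    filter_upwards [ae_restrict_mem measurableSet_Ioi] with t (ht : 0 < t)
    rw [norm_mul, Real.norm_of_nonneg (Real.exp_pos _).le]
    exact mul_le_of_le_one_left (norm_nonneg _) (Real.exp_le_one_iff.2 (by nlinarith))
  · refine .of_forall fun t => tendsto_nhdsWithin_of_tendsto_nhds ?_
    have h : Continuous fun e : ℝ => Real.exp (-e * t) * φ t := by fun_prop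
    simpa using h.tendsto 0

theorem tendsto_integral_mul_comp_add_I_mul {ψ : ℝ → ℂ} (hψ : Continuous ψ)
    (hψc : HasCompactSupport ψ) {g : ℂ → ℂ} (hg : ContinuousOn g {z | 0 ≤ z.re}) :
    Tendsto (fun e : ℝ => ∫ y : ℝ, ψ y * g (e + I * y)) (𝓝[>] 0)
      (𝓝 (∫ y : ℝ, ψ y * g (I * y))) := by
  have hcont : ContinuousOn (fun e : ℝ => ∫ y : ℝ, ψ y * g (e + I * y)) (Ici 0) := by
    refine continuousOn_integral_of_compact_support hψc.isCompact ?_ fun e y _ hy => ?_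
    · refine ContinuousOn.mul (by fun_prop) (hg.comp (by fun_prop) fun p hp => ?_)
      simpa using hp.1
    · rw [image_eq_zero_of_notMem_tsupport hy, zero_mul]
  have h := (hcont 0 self_mem_Ici).tendsto.mono_left (nhdsWithin_mono 0 Ioi_subset_Ici_self)
  simpa using h

variable {b : ℝ → ℝ} {M l : ℝ} {g : ℂ → ℂ}

theorem integrable_mul_fejerKernel_comp_sub (hbm : Measurable b) (hM : ∀ t, |b t| ≤ M) (hl : 0 < l)
    (u : ℝ) : Integrable fun t => b t * fejerKernel l (u - t) :=
  ((integrable_fejerKernel hl).comp_sub_left u).bdd_mul hbm.aestronglyMeasurable (.of_forall hM)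

theorem integral_tent_mul_laplace (hbm : Measurable b) (hM : ∀ t, |b t| ≤ M)
    (hg : ∀ z : ℂ, 0 < z.re → ∫ t in Ioi (0 : ℝ), (b t : ℂ) * cexp (-z * t) = g z)
    (hl : 0 < l) (u : ℝ) {e : ℝ} (he : 0 < e) :
    ∫ y : ℝ, (tent (y / l) : ℂ) * cexp (I * y * u) * g (e + I * y) =
      (∫ t in Ioi (0 : ℝ), Real.exp (-e * t) * (b t * fejerKernel l (u - t)) : ℝ) := by
  have hlaplace (y : ℝ) : (tent (y / l) : ℂ) * cexp (I * y * u) * g (e + I * y) =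
      ∫ t in Ioi (0 : ℝ),
        (tent (y / l) : ℂ) * cexp (I * y * u) * ((b t : ℂ) * cexp (-(e + I * y) * t)) := by
    rw [integral_const_mul, hg _ (by simpa using he)]
  simp_rw [hlaplace]
  rw [integral_integral_swap]
  · rw [← integral_complex_ofReal]
    refine setIntegral_congr_ae measurableSet_Ioi ?_
    filter_upwards [compl_mem_ae_iff.2 (measure_singleton u)] with t (ht : t ≠ u) _
    have hexp (y : ℝ) : cexp (I * y * u) * cexp (-(e + I * y) * t) =
        cexp (-e * t) * cexp (I * y * (u - t : ℝ)) := by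
      rw [← Complex.exp_add, ← Complex.exp_add]
      push_cast
      ring_nf
    push_cast
    rw [← integral_tent_div_mul_cexp hl (sub_ne_zero.2 ht.symm), ← mul_assoc, ← integral_const_mul]
    congr 1 with y
    linear_combination (tent (y / l) : ℂ) * b t * hexp y
  · have hy : Integrable fun y : ℝ => tent (y / l) :=
      Continuous.integrable_of_hasCompactSupport (by fun_prop) (hasCompactSupport_tent_div hl)
    have ht : IntegrableOn (fun t : ℝ => M * Real.exp (-e * t)) (Ioi 0) :=
      (integrableOn_exp_mul_Ioi (by linarith) 0).const_mul M
    refine (hy.mul_prod ht).mono' ?_ (.of_forall fun ⟨y, t⟩ => ?_)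
    · exact Measurable.aestronglyMeasurable (by unfold Function.uncurry; fun_prop)
    · have hre₁ : (I * (y : ℂ) * u).re = 0 := by simp
      have hre₂ : (-((e : ℂ) + I * y) * t).re = -e * t := by simp
      simp only [Function.uncurry, norm_mul, Complex.norm_real, Complex.norm_exp, hre₁, hre₂,
        Real.exp_zero, mul_one, Real.norm_of_nonneg (tent_nonneg _)]
      gcongr
      exacts [tent_nonneg _, hM t]

theorem integral_tent_mul_boundary (hbm : Measurable b) (hM : ∀ t, |b t| ≤ M)
    (hg : ∀ z : ℂ, 0 < z.re → ∫ t in Ioi (0 : ℝ), (b t : ℂ) * cexp (-z * t) = g z)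
    (hgc : ContinuousOn g {z | 0 ≤ z.re}) (hl : 0 < l) (u : ℝ) :
    ∫ y : ℝ, (tent (y / l) : ℂ) * cexp (I * y * u) * g (I * y) =
      (∫ t in Ioi (0 : ℝ), b t * fejerKernel l (u - t) : ℝ) := by
  have hboundary := tendsto_integral_mul_comp_add_I_mul (g := g)
    (ψ := fun y => (tent (y / l) : ℂ) * cexp (I * y * u)) (by fun_prop)
    (HasCompactSupport.mul_right ((hasCompactSupport_tent_div hl).comp_left ofReal_zero)) hgc
  have habel := (Complex.continuous_ofReal.tendsto _).comp (tendsto_setIntegral_exp_neg_mul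
    (integrable_mul_fejerKernel_comp_sub hbm hM hl u).integrableOn)
  refine tendsto_nhds_unique hboundary (habel.congr' ?_)
  filter_upwards [self_mem_nhdsWithin] with e he
  exact (integral_tent_mul_laplace hbm hM hg hl u he).symm

/-- By the Riemann-Lebesgue lemma, applied to the boundary values of `g` on `[-l, l]`. -/
theorem tendsto_integral_mul_fejerKernel_zero (hbm : Measurable b) (hM : ∀ t, |b t| ≤ M)
    (hg : ∀ z : ℂ, 0 < z.re → ∫ t in Ioi (0 : ℝ), (b t : ℂ) * cexp (-z * t) = g z)
    (hgc : ContinuousOn g {z | 0 ≤ z.re}) (hl : 0 < l) :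
    Tendsto (fun u : ℝ => ∫ t in Ioi (0 : ℝ), b t * fejerKernel l (u - t)) atTop (𝓝 0) := by
  have hfreq : Tendsto (fun u : ℝ => -u / (2 * Real.pi)) atTop (cocompact ℝ) :=
    (tendsto_neg_atTop_atBot.atBot_div_const (by positivity)).mono_right atBot_le_cocompact
  have hRL := (Real.tendsto_integral_exp_smul_cocompact
    fun y : ℝ => (tent (y / l) : ℂ) * g (I * y)).comp hfreq
  have hlim : Tendsto
      (fun u : ℝ => ((∫ t in Ioi (0 : ℝ), b t * fejerKernel l (u - t) : ℝ) : ℂ)) atTop (𝓝 0) := by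
    refine hRL.congr fun u => ?_
    rw [← integral_tent_mul_boundary hbm hM hg hgc hl u]
    simp only [Function.comp]
    congr 1 with y
    have hphase : 2 * Real.pi * -(y * (-u / (2 * Real.pi))) = y * u := by field_simp
    rw [Circle.smul_def, Real.fourierChar_apply, smul_eq_mul, hphase]
    push_cast
    rw [mul_comm _ I, ← mul_assoc I]
    ring
  simpa [Function.comp_def] using (Complex.continuous_re.tendsto 0).comp hlim

variable {δ η u : ℝ}

/-- The Cauchy density `(1 + v²)⁻¹` dominates the tail of the Fejér kernel. -/
theorem indicator_sub_le_mul_fejerKernel (hM : ∀ t, |b t| ≤ M) (hl : 0 < l) (hδ : 0 < δ)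
    (hη : 0 ≤ η) (hlδ : 1 / l ≤ δ) (hb : ∀ t, |u - t| ≤ δ → η ≤ b t) (t : ℝ) :
    (Icc (u - 1 / l) (u + 1 / l)).indicator (fun _ => η * (l / 4)) t -
      M * (4 / l * (1 + 1 / δ ^ 2)) * (1 + (u - t) ^ 2)⁻¹ ≤ b t * fejerKernel l (u - t) := by
  have hM₀ : 0 ≤ M := (abs_nonneg _).trans (hM 0)
  have hK := fejerKernel_nonneg hl (u - t)
  have hcauchy : 0 ≤ M * (4 / l * (1 + 1 / δ ^ 2)) * (1 + (u - t) ^ 2)⁻¹ := by positivity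
  by_cases hnear : |u - t| ≤ 1 / l
  · have hbt := hb t (hnear.trans hlδ)
    have := mul_le_mul hbt (fejerKernel_ge hl hnear) (by positivity) (hη.trans hbt)
    rw [abs_le] at hnear
    rw [indicator_of_mem (mem_Icc.2 ⟨by linarith, by linarith⟩)]
    linarith
  rw [indicator_of_notMem fun ht => hnear (abs_le.2 ⟨by linarith [ht.2], by linarith [ht.1]⟩)]
  by_cases hmid : |u - t| ≤ δ
  · linarith [mul_nonneg (hη.trans (hb t hmid)) hK]
  · have htail := mul_le_mul_of_nonneg_left
      (fejerKernel_le_of_le_abs hl hδ (not_le.1 hmid).le) hM₀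
    have := mul_le_mul_of_nonneg_right (abs_le.1 (hM t)).1 hK
    linarith

theorem le_integral_mul_fejerKernel (hbm : Measurable b) (hM : ∀ t, |b t| ≤ M) (hl : 0 < l)
    (hδ : 0 < δ) (hη : 0 ≤ η) (hlδ : 1 / l ≤ δ) (hu : δ < u) (hb : ∀ t, |u - t| ≤ δ → η ≤ b t) :
    η / 2 - M * (4 / l * (1 + 1 / δ ^ 2)) * Real.pi ≤
      ∫ t in Ioi (0 : ℝ), b t * fejerKernel l (u - t) := by
  have hM₀ : 0 ≤ M := (abs_nonneg _).trans (hM 0)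
  set A : ℝ := M * (4 / l * (1 + 1 / δ ^ 2))
  set J : Set ℝ := Icc (u - 1 / l) (u + 1 / l)
  have hl' : 0 < 1 / l := one_div_pos.2 hl
  have hcauchy : Integrable fun t : ℝ => A * (1 + (u - t) ^ 2)⁻¹ :=
    (integrable_inv_one_add_sq.comp_sub_left u).const_mul A
  have hind : Integrable (J.indicator fun _ => η * (l / 4)) :=
    (integrable_indicator_iff measurableSet_Icc).2 (integrableOn_const (by simp))
  have hnear : ∫ t in Ioi (0 : ℝ), J.indicator (fun _ => η * (l / 4)) t = η / 2 := by
    have hJ : Ioi (0 : ℝ) ∩ J = J :=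
      inter_eq_right.2 fun t ht => show 0 < t by linarith [ht.1]
    rw [setIntegral_indicator measurableSet_Icc, hJ, setIntegral_const,
      Real.volume_real_Icc_of_le (by linarith), smul_eq_mul]
    field_simp
    ring
  have htail : ∫ t in Ioi (0 : ℝ), A * (1 + (u - t) ^ 2)⁻¹ ≤ A * Real.pi := by
    refine (setIntegral_le_integral hcauchy (.of_forall fun t => by positivity)).trans_eq ?_
    rw [integral_const_mul, integral_sub_left_eq_self (fun t : ℝ => (1 + t ^ 2)⁻¹) volume u,
      integral_univ_inv_one_add_sq]
  calc η / 2 - A * Real.pi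
      ≤ ∫ t in Ioi (0 : ℝ), (J.indicator (fun _ => η * (l / 4)) t - A * (1 + (u - t) ^ 2)⁻¹) := by
        rw [integral_sub hind.integrableOn hcauchy.integrableOn, hnear]
        linarith
    _ ≤ _ := setIntegral_mono (hind.sub hcauchy).integrableOn
        (integrable_mul_fejerKernel_comp_sub hbm hM hl u).integrableOn
        (indicator_sub_le_mul_fejerKernel hM hl hδ hη hlδ hb)

theorem eventually_exists_lt_of_tendsto_fejer (hbm : Measurable b) (hM : ∀ t, |b t| ≤ M)
    (hconv : ∀ l : ℝ, 0 < l →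
      Tendsto (fun u : ℝ => ∫ t in Ioi (0 : ℝ), b t * fejerKernel l (u - t)) atTop (𝓝 0))
    (hδ : 0 < δ) (hη : 0 < η) :
    ∀ᶠ u in atTop, ∃ t, |u - t| ≤ δ ∧ b t < η := by
  have hinv : Tendsto (fun l : ℝ => 1 / l) atTop (𝓝 0) := by
    simpa using tendsto_inv_atTop_zero (𝕜 := ℝ)
  have herr : Tendsto (fun l : ℝ => M * (4 / l * (1 + 1 / δ ^ 2)) * Real.pi) atTop (𝓝 0) := by
    have h := hinv.const_mul (M * (4 * (1 + 1 / δ ^ 2)) * Real.pi)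
    rw [mul_zero] at h
    exact h.congr fun l => by ring
  obtain ⟨l, hl, hlδ, hlη⟩ := ((eventually_gt_atTop 0).and ((hinv.eventually_le_const hδ).and
    (herr.eventually_le_const (show 0 < η / 4 by linarith)))).exists
  filter_upwards [(hconv l hl).eventually_lt_const (show 0 < η / 4 by linarith),
    eventually_gt_atTop δ] with u hsmall hu
  by_contra! hb
  linarith [le_integral_mul_fejerKernel hbm hM hl hδ hη.le hlδ hu hb]

variable {f : ℝ → ℝ} {A C : ℝ}

theorem measurable_of_monotone_mul_exp (hmono : Monotone fun t => f t * Real.exp t) :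
    Measurable f := by
  have h : f = fun t => f t * Real.exp t * Real.exp (-t) := by
    ext t
    rw [mul_assoc, ← Real.exp_add, add_neg_cancel, Real.exp_zero, mul_one]
  rw [h]
  exact hmono.measurable.mul (by fun_prop)

theorem exists_forall_le_add_of_monotone_mul_exp (hf₀ : ∀ t, 0 ≤ f t) (hfC : ∀ t, f t ≤ C)
    (hmono : Monotone fun t => f t * Real.exp t) {ε : ℝ} (hε : 0 < ε) :
    ∃ δ > 0, ∀ t t', t ≤ t' → t' - t ≤ δ → f t ≤ f t' + ε := by
  obtain ⟨δ, hδ, hδε⟩ : ∃ δ : ℝ, 0 < δ ∧ C * (Real.exp δ - 1) ≤ ε := by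
    have hcont : Continuous fun δ : ℝ => C * (Real.exp δ - 1) := by fun_prop
    have h : Tendsto (fun δ : ℝ => C * (Real.exp δ - 1)) (𝓝[>] 0) (𝓝 0) :=
      tendsto_nhdsWithin_of_tendsto_nhds (by simpa using hcont.tendsto 0)
    exact (eventually_mem_nhdsWithin.and (h.eventually_le_const hε)).exists
  refine ⟨δ, hδ, fun t t' h h' => ?_⟩
  have hexp : 0 ≤ Real.exp δ - 1 := sub_nonneg.2 (Real.one_le_exp hδ.le)
  calc f t ≤ f t' * Real.exp (t' - t) := by
        rw [Real.exp_sub, ← mul_div_assoc, le_div_iff₀ (Real.exp_pos _)]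
        exact hmono h
    _ ≤ f t' * Real.exp δ := by
        gcongr
        exact hf₀ t'
    _ = f t' + f t' * (Real.exp δ - 1) := by ring
    _ ≤ f t' + C * (Real.exp δ - 1) := by
        gcongr
        exact hfC t'
    _ ≤ f t' + ε := by gcongr

/-- Monotonicity of `f t * exp t` makes a value of `f` away from `A` persist over an interval of
fixed length, which is incompatible with the vanishing of the Fejér means of `f - A`. -/
theorem tendsto_of_monotone_mul_exp_of_laplace (hf₀ : ∀ t, 0 ≤ f t) (hfC : ∀ t, f t ≤ C)
    (hmono : Monotone fun t => f t * Real.exp t) (hgc : ContinuousOn g {z | 0 ≤ z.re})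
    (hg : ∀ z : ℂ, 0 < z.re → ∫ t in Ioi (0 : ℝ), ((f t - A : ℝ) : ℂ) * cexp (-z * t) = g z) :
    Tendsto f atTop (𝓝 A) := by
  have hbm : Measurable fun t => f t - A := (measurable_of_monotone_mul_exp hmono).sub_const A
  have hM (t : ℝ) : |f t - A| ≤ C + |A| :=
    (abs_sub _ _).trans (by rw [abs_of_nonneg (hf₀ t)]; linarith [hfC t])
  have hconv (l : ℝ) (hl : 0 < l) := tendsto_integral_mul_fejerKernel_zero hbm hM hg hgc hl
  have hconv_neg (l : ℝ) (hl : 0 < l) : Tendsto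
      (fun u : ℝ => ∫ t in Ioi (0 : ℝ), -(f t - A) * fejerKernel l (u - t)) atTop (𝓝 0) := by
    simpa only [neg_mul, integral_neg, neg_zero] using (hconv l hl).neg
  rw [Metric.tendsto_nhds]
  intro ε hε
  obtain ⟨δ, hδ, hslow⟩ := exists_forall_le_add_of_monotone_mul_exp hf₀ hfC hmono (half_pos hε)
  have hupper := eventually_exists_lt_of_tendsto_fejer hbm hM hconv (half_pos hδ) (half_pos hε)
  have hlower := eventually_exists_lt_of_tendsto_fejer (b := fun t => -(f t - A)) hbm.neg
    (fun t => (abs_neg _).trans_le (hM t)) hconv_neg (half_pos hδ) (half_pos hε)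
  filter_upwards [(tendsto_atTop_add_const_right _ (δ / 2) tendsto_id).eventually hupper,
    (tendsto_atTop_add_const_right _ (-(δ / 2)) tendsto_id).eventually hlower]
    with u ⟨t, ht, htA⟩ ⟨t', ht', htA'⟩
  rw [id_eq, abs_le] at ht ht'
  rw [Real.dist_eq, abs_lt]
  have := hslow u t (by linarith) (by linarith)
  have := hslow t' u (by linarith) (by linarith)
  constructor <;> linarith

end Tauberian

section WienerIkehara

open Filter MeasureTheory Set Topology Complex

variable {a : ℕ → ℝ} {B : ℝ}

/-- The summatory function of `a` in the exponential variable, `t ↦ e⁻ᵗ ∑_{1 ≤ n ≤ eᵗ} a n`. -/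
noncomputable def expMeanSum (a : ℕ → ℝ) (t : ℝ) : ℝ :=
  Real.exp (-t) * ∑ k ∈ Finset.Icc 1 ⌊Real.exp t⌋₊, a k

theorem expMeanSum_mul_exp (a : ℕ → ℝ) (t : ℝ) :
    expMeanSum a t * Real.exp t = ∑ k ∈ Finset.Icc 1 ⌊Real.exp t⌋₊, a k := by
  rw [expMeanSum, mul_right_comm, ← Real.exp_add, neg_add_cancel, Real.exp_zero, one_mul]

theorem expMeanSum_log {n : ℕ} (hn : 0 < n) :
    expMeanSum a (Real.log n) = (∑ k ∈ Finset.Icc 1 n, a k) / n := by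
  have hn' : (0 : ℝ) < n := Nat.cast_pos.2 hn
  rw [expMeanSum, Real.exp_neg, Real.exp_log hn', Nat.floor_natCast, inv_mul_eq_div]

theorem expMeanSum_nonneg (ha : ∀ n, 0 ≤ a n) (t : ℝ) : 0 ≤ expMeanSum a t :=
  mul_nonneg (Real.exp_pos _).le (Finset.sum_nonneg fun k _ => ha k)

theorem monotone_expMeanSum_mul_exp (ha : ∀ n, 0 ≤ a n) :
    Monotone fun t => expMeanSum a t * Real.exp t := by
  intro t t' h
  simp only [expMeanSum_mul_exp]
  exact Finset.sum_le_sum_of_subset_of_nonneg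
    (Finset.Icc_subset_Icc_right (Nat.floor_mono (Real.exp_le_exp.2 h))) fun k _ _ => ha k

theorem expMeanSum_le (hB : ∀ n : ℕ, ∑ k ∈ Finset.Icc 1 n, a k ≤ B * n) (ha : ∀ n, 0 ≤ a n)
    (t : ℝ) : expMeanSum a t ≤ B := by
  have hB₀ : 0 ≤ B := by simpa using (ha 1).trans (by simpa using hB 1)
  refine le_of_mul_le_mul_right ?_ (Real.exp_pos t)
  rw [expMeanSum_mul_exp]
  exact (hB _).trans (by gcongr; exact Nat.floor_le (Real.exp_pos t).le)

theorem LSeries_one_add_eq_mul_laplace (ha : ∀ n, 0 ≤ a n)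
    (hB : ∀ n : ℕ, ∑ k ∈ Finset.Icc 1 n, a k ≤ B * n) {z : ℂ} (hz : 0 < z.re) :
    LSeries (fun n => (a n : ℂ)) (1 + z) =
      (1 + z) * ∫ t in Ioi (0 : ℝ), (expMeanSum a t : ℂ) * cexp (-z * t) := by
  have hO : (fun n : ℕ => ∑ k ∈ Finset.Icc 1 n, a k) =O[atTop] fun n => (n : ℝ) ^ (1 : ℝ) := by
    refine Asymptotics.IsBigO.of_bound B (.of_forall fun n => ?_)
    rw [Real.rpow_one, Real.norm_of_nonneg (Finset.sum_nonneg fun k _ => ha k), Real.norm_natCast]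
    exact hB n
  have hexp := integral_comp_exp_Ioi
    (fun t : ℝ => (∑ k ∈ Finset.Icc 1 ⌊t⌋₊, (a k : ℂ)) * (t : ℂ) ^ (-((1 + z) + 1))) 0
  rw [Real.exp_zero] at hexp
  rw [LSeries_eq_mul_integral_of_nonneg a zero_le_one (by simpa using hz) hO ha, ← hexp]
  congr 2 with t
  have hpow : ((Real.exp t : ℝ) : ℂ) ^ (-((1 + z) + 1)) = cexp (t * (-((1 + z) + 1))) := by
    rw [cpow_def_of_ne_zero (ofReal_ne_zero.2 (Real.exp_pos t).ne'),
      ← ofReal_log (Real.exp_pos t).le, Real.log_exp]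
  have hmul : cexp t * cexp (t * (-((1 + z) + 1))) = cexp (-t) * cexp (-z * t) := by
    rw [← Complex.exp_add, ← Complex.exp_add]
    ring_nf
  rw [hpow, expMeanSum, real_smul]
  push_cast
  linear_combination (∑ k ∈ Finset.Icc 1 ⌊Real.exp t⌋₊, (a k : ℂ)) * hmul

/-- The Wiener-Ikehara theorem, for coefficients with linearly bounded partial sums. -/
theorem tendsto_sum_div_of_LSeries_eq {A : ℝ} (ha : ∀ n, 0 ≤ a n)
    (hB : ∀ n : ℕ, ∑ k ∈ Finset.Icc 1 n, a k ≤ B * n) {H : ℂ → ℂ}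
    (hH : ContinuousOn H {s | 1 ≤ s.re})
    (hL : ∀ s : ℂ, 1 < s.re → LSeries (fun n => (a n : ℂ)) s = A / (s - 1) + H s) :
    Tendsto (fun n : ℕ => (∑ k ∈ Finset.Icc 1 n, a k) / n) atTop (𝓝 A) := by
  have hne {z : ℂ} (hz : 0 ≤ z.re) : 1 + z ≠ 0 := fun h => by
    have : 1 + z.re = 0 := by simpa using congrArg re h
    linarith
  have hH' : ContinuousOn (fun z => H (1 + z)) {z : ℂ | 0 ≤ z.re} :=
    hH.comp (by fun_prop) fun z hz => by simpa using hz
  have hgc : ContinuousOn (fun z => (H (1 + z) - A) / (1 + z)) {z : ℂ | 0 ≤ z.re} :=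
    (hH'.sub continuousOn_const).div (by fun_prop) fun z hz => hne hz
  have hmono := monotone_expMeanSum_mul_exp ha
  have hlaplace : ∀ z : ℂ, 0 < z.re →
      ∫ t in Ioi (0 : ℝ), ((expMeanSum a t - A : ℝ) : ℂ) * cexp (-z * t) =
        (H (1 + z) - A) / (1 + z) := by
    intro z hz
    have hz₀ : z ≠ 0 := by
      rintro rfl
      simp at hz
    have hexp : IntegrableOn (fun t : ℝ => cexp (-z * t)) (Ioi 0) :=
      integrableOn_exp_mul_complex_Ioi (by simpa using hz) 0
    have hmean : IntegrableOn (fun t : ℝ => (expMeanSum a t : ℂ) * cexp (-z * t)) (Ioi 0) := by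
      refine Integrable.bdd_mul (c := B) hexp
        (measurable_of_monotone_mul_exp hmono).complex_ofReal.aestronglyMeasurable
        (.of_forall fun t => ?_)
      rw [norm_real, Real.norm_of_nonneg (expMeanSum_nonneg ha t)]
      exact expMeanSum_le hB ha t
    have hL' := hL (1 + z) (by simpa using hz)
    rw [LSeries_one_add_eq_mul_laplace ha hB hz, add_sub_cancel_left] at hL'
    simp only [ofReal_sub, sub_mul]
    rw [integral_sub hmean (hexp.const_mul _), integral_const_mul,
      integral_exp_mul_complex_Ioi (by simpa using hz), ofReal_zero, mul_zero, Complex.exp_zero,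
      eq_div_iff (hne hz.le)]
    field_simp at hL' ⊢
    linear_combination hL'
  have h := tendsto_of_monotone_mul_exp_of_laplace (expMeanSum_nonneg ha) (expMeanSum_le hB ha)
    hmono hgc hlaplace
  refine (h.comp (Real.tendsto_log_atTop.comp tendsto_natCast_atTop_atTop)).congr' ?_
  filter_upwards [eventually_gt_atTop 0] with n hn
  exact expMeanSum_log hn

end WienerIkehara

/-! ### Dirichlet series over lattices -/

section HolomorphicIntegral

open Filter MeasureTheory Metric Set Topology

variable {α : Type*} [MeasurableSpace α] {μ : Measure α}

theorem aestronglyMeasurable_deriv_of_forall {F : ℂ → α → ℂ} {s₀ : ℂ}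
    (hF : ∀ s, AEStronglyMeasurable (F s) μ)
    (hd : ∀ x, DifferentiableAt ℂ (fun s => F s x) s₀) :
    AEStronglyMeasurable (fun x => deriv (fun s => F s x) s₀) μ := by
  have hstep : Tendsto (fun n : ℕ => 1 / ((n : ℂ) + 1)) atTop (𝓝[≠] 0) :=
    tendsto_nhdsWithin_iff.2 ⟨tendsto_one_div_add_atTop_nhds_zero_nat,
      .of_forall fun n => one_div_ne_zero (Nat.cast_add_one_ne_zero n)⟩
  refine aestronglyMeasurable_of_tendsto_ae atTop
    (f := fun (n : ℕ) x => (1 / ((n : ℂ) + 1))⁻¹ • (F (s₀ + 1 / (n + 1)) x - F s₀ x))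
    (fun n => ((hF (s₀ + 1 / (n + 1))).sub (hF s₀)).const_smul (1 / ((n : ℂ) + 1))⁻¹)
    (.of_forall fun x => ?_)
  exact (hd x).hasDerivAt.tendsto_slope_zero.comp hstep

/-- Cauchy's estimate converts the bound on the integrand into one on its derivative. -/
theorem differentiableOn_integral_of_forall_norm_le {U : Set ℂ} (hU : IsOpen U)
    {F : ℂ → α → ℂ} (hF : ∀ s, AEStronglyMeasurable (F s) μ)
    (hd : ∀ x, DifferentiableOn ℂ (fun s => F s x) U)
    (hb : ∀ s₀ ∈ U, ∃ r > 0, ∃ bound : α → ℝ, Integrable bound μ ∧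
      ∀ s ∈ ball s₀ r, ∀ x, ‖F s x‖ ≤ bound x) :
    DifferentiableOn ℂ (fun s => ∫ x, F s x ∂μ) U := by
  intro s₀ hs₀
  obtain ⟨r, hr, bound, hbound, hle⟩ := hb s₀ hs₀
  obtain ⟨r', hr', hrU⟩ := isOpen_iff.1 hU s₀ hs₀
  set ρ := min r r' / 2 with hρ
  have hρ₀ : 0 < ρ := by positivity
  have hdiff : ∀ x, ∀ s ∈ ball s₀ (2 * ρ), DifferentiableAt ℂ (fun s => F s x) s := by
    intro x s hs
    have hsU : s ∈ U := hrU (ball_subset_ball (by linarith [min_le_right r r']) hs)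
    exact (hd x s hsU).differentiableAt (hU.mem_nhds hsU)
  have hsub : ∀ s ∈ ball s₀ (ρ / 2), closedBall s ρ ⊆ ball s₀ (2 * ρ) := by
    intro s hs
    rw [mem_ball] at hs
    exact (closedBall_subset_ball' (ε₂ := 2 * ρ) (by linarith))
  have hderiv : ∀ x, ∀ s ∈ ball s₀ (ρ / 2), ‖deriv (fun s => F s x) s‖ ≤ bound x / ρ := by
    intro x s hs
    refine Complex.norm_deriv_le_of_forall_mem_sphere_norm_le hρ₀
      (DifferentiableOn.diffContOnCl fun z hz => ?_) fun z hz => hle z ?_ x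
    · rw [closure_ball _ hρ₀.ne'] at hz
      exact (hdiff x z (hsub s hs hz)).differentiableWithinAt
    · exact ball_subset_ball (by linarith [min_le_left r r'])
        (hsub s hs (sphere_subset_closedBall hz))
  have hdiff₀ : ∀ x, ∀ s ∈ ball s₀ (ρ / 2), DifferentiableAt ℂ (fun s => F s x) s :=
    fun x s hs => hdiff x s (hsub s hs (mem_closedBall_self hρ₀.le))
  have hs₀' : s₀ ∈ ball s₀ (ρ / 2) := mem_ball_self (by positivity)
  exact (hasDerivAt_integral_of_dominated_loc_of_deriv_le (ball_mem_nhds s₀ (half_pos hρ₀))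
    (.of_forall hF) (hbound.mono' (hF s₀) (.of_forall (hle s₀ (mem_ball_self hr))))
    (aestronglyMeasurable_deriv_of_forall hF fun x => hdiff₀ x s₀ hs₀')
    (.of_forall hderiv) (hbound.div_const ρ)
    (.of_forall fun x s hs => (hdiff₀ x s hs).hasDerivAt)).2.differentiableAt.differentiableWithinAt

end HolomorphicIntegral

section ConicWeight

open Filter MeasureTheory Set Topology Complex Module

section Estimates

theorem abs_log_max_one_sub_le {a b : ℝ} (ha : 0 < a) (hb : 0 < b) :
    |Real.log (max a 1) - Real.log (max b 1)| ≤ |Real.log a - Real.log b| := by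
  have hlog {c : ℝ} (hc : 0 < c) : Real.log (max c 1) = max (Real.log c) 0 := by
    rcases le_total c 1 with h | h
    · rw [max_eq_right h, Real.log_one, max_eq_right (Real.log_nonpos hc.le h)]
    · rw [max_eq_left h, max_eq_left (Real.log_nonneg h)]
  rw [hlog ha, hlog hb]
  exact abs_max_sub_max_le_abs _ _ _

theorem norm_cpow_neg_sub_cpow_neg_le {a b : ℝ} (ha : 0 < a) (hb : 0 < b) (s : ℂ) :
    ‖(a : ℂ) ^ (-s) - (b : ℂ) ^ (-s)‖ ≤
      a ^ (-s.re) * (‖s‖ * |Real.log a - Real.log b| *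
        Real.exp (‖s‖ * |Real.log a - Real.log b|)) := by
  set w : ℂ := s * (Real.log a - Real.log b : ℝ) with hw
  have hfactor : (a : ℂ) ^ (-s) - (b : ℂ) ^ (-s) = -((a : ℂ) ^ (-s) * (cexp w - 1)) := by
    rw [cpow_def_of_ne_zero (mod_cast ha.ne'), cpow_def_of_ne_zero (mod_cast hb.ne'),
      ← ofReal_log ha.le, ← ofReal_log hb.le, mul_sub_one, ← Complex.exp_add, neg_sub, hw]
    push_cast
    ring_nf
  have hnorm : ‖w‖ = ‖s‖ * |Real.log a - Real.log b| := by
    rw [hw, norm_mul, norm_real, Real.norm_eq_abs]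
  rw [hfactor, norm_neg, norm_mul, norm_cpow_eq_rpow_re_of_pos ha, neg_re, ← hnorm]
  gcongr
  simpa using norm_exp_sub_sum_le_norm_mul_exp w 1

end Estimates

variable {E : Type*}

/-- The general term `w x * max (ν x) 1 ^ (-s)` of a Dirichlet series over a lattice, where `w` is
a weight and `ν` plays the role of the norm. The truncation at `1` only affects points of small
norm and makes the term bounded. -/
noncomputable def weightedCpow (ν w : E → ℝ) (s : ℂ) (x : E) : ℂ :=
  w x * ((max (ν x) 1 : ℝ) : ℂ) ^ (-s)

/-- A weight `w` with values in `[0, 1]` which is invariant under dilations, adapted to a function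
`ν` that is homogeneous of degree the dimension: on the support of `w`, the function `ν` is
comparable with the largest possible growth, and both `w` and `log ν` vary by `O(1 / ‖x‖)` under
bounded translations. -/
structure IsConicWeight [NormedAddCommGroup E] [NormedSpace ℝ E] [MeasurableSpace E]
    (ν w : E → ℝ) : Prop where
  measurable_form : Measurable ν
  measurable : Measurable w
  nonneg : ∀ x, 0 ≤ w x
  le_one : ∀ x, w x ≤ 1
  form_smul : ∀ r : ℝ, 0 < r → ∀ x, ν (r • x) = r ^ finrank ℝ E * ν x
  smul : ∀ r : ℝ, 0 < r → ∀ x, w (r • x) = w x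
  coercive : ∃ κ > 0, ∀ x, w x ≠ 0 → κ * ‖x‖ ^ finrank ℝ E ≤ ν x
  slowlyVarying : ∀ D : ℝ, ∃ C R : ℝ, ∀ x y : E, R ≤ ‖x‖ → ‖x - y‖ ≤ D → w x ≠ 0 →
    0 < ν y ∧ |Real.log (ν x) - Real.log (ν y)| ≤ C / ‖x‖ ∧ |w x - w y| ≤ C / ‖x‖

theorem norm_weightedCpow_sub_le {ν w : E → ℝ} {x y : E} (hνx : 0 < ν x) (hνy : 0 < ν y)
    (hw : |w y| ≤ 1) {δ : ℝ} (hlog : |Real.log (ν x) - Real.log (ν y)| ≤ δ)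
    (hsub : |w x - w y| ≤ δ) (s : ℂ) :
    ‖weightedCpow ν w s x - weightedCpow ν w s y‖ ≤
      (max (ν x) 1) ^ (-s.re) * (δ * (1 + ‖s‖ * Real.exp (‖s‖ * δ))) := by
  set a := max (ν x) 1
  set b := max (ν y) 1
  have ha : 0 < a := lt_max_of_lt_left hνx
  have hb : 0 < b := lt_max_of_lt_left hνy
  have hab : |Real.log a - Real.log b| ≤ δ := (abs_log_max_one_sub_le hνx hνy).trans hlog
  have hsplit : weightedCpow ν w s x - weightedCpow ν w s y =
      ((w x - w y : ℝ) : ℂ) * (a : ℂ) ^ (-s) + w y * ((a : ℂ) ^ (-s) - (b : ℂ) ^ (-s)) := by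
    rw [weightedCpow, weightedCpow]
    push_cast
    ring
  have hδ : 0 ≤ δ := (abs_nonneg _).trans hsub
  rw [hsplit]
  refine (norm_add_le _ _).trans ?_
  rw [norm_mul, norm_mul, norm_real, norm_real, norm_cpow_eq_rpow_re_of_pos ha, neg_re]
  calc |w x - w y| * a ^ (-s.re) + |w y| * ‖(a : ℂ) ^ (-s) - (b : ℂ) ^ (-s)‖
      ≤ δ * a ^ (-s.re) + 1 * (a ^ (-s.re) * (‖s‖ * δ * Real.exp (‖s‖ * δ))) := by
        gcongr
        exact (norm_cpow_neg_sub_cpow_neg_le ha hb s).trans (by gcongr)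
    _ = a ^ (-s.re) * (δ * (1 + ‖s‖ * Real.exp (‖s‖ * δ))) := by ring

namespace IsConicWeight

variable [NormedAddCommGroup E] [NormedSpace ℝ E] [MeasurableSpace E] {ν w : E → ℝ}

theorem norm_weightedCpow_le_one (h : IsConicWeight ν w) {s : ℂ} (hs : 0 ≤ s.re) (x : E) :
    ‖weightedCpow ν w s x‖ ≤ 1 := by
  have hmax : 1 ≤ max (ν x) 1 := le_max_right _ _
  rw [weightedCpow, norm_mul, norm_real, Real.norm_of_nonneg (h.nonneg x),
    norm_cpow_eq_rpow_re_of_pos (one_pos.trans_le hmax)]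
  exact mul_le_one₀ (h.le_one x) (by positivity)
    (Real.rpow_le_one_of_one_le_of_nonpos hmax (by simpa))

theorem measurable_weightedCpow (h : IsConicWeight ν w) (s : ℂ) :
    Measurable (weightedCpow ν w s) := by
  have := h.measurable
  have := h.measurable_form
  unfold weightedCpow
  fun_prop

theorem exists_norm_sub_le_of_weight_ne_zero (h : IsConicWeight ν w) (D S : ℝ) {σ : ℝ}
    (hσ : 0 ≤ σ) :
    ∃ C R, 0 ≤ C ∧ 1 ≤ R ∧ ∀ s : ℂ, ‖s‖ ≤ S → σ ≤ s.re → ∀ x y : E, R ≤ ‖x‖ → ‖x - y‖ ≤ D →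
      w x ≠ 0 → ‖weightedCpow ν w s x - weightedCpow ν w s y‖ ≤
        C * ‖x‖ ^ (-(finrank ℝ E * σ + 1)) := by
  obtain ⟨κ, hκ, hcoer⟩ := h.coercive
  obtain ⟨C, R, hCR⟩ := h.slowlyVarying D
  set C' := max C 0
  set S' := max S 0
  refine ⟨κ ^ (-σ) * (C' * (1 + S' * Real.exp (S' * C'))), max R 1, by positivity,
    le_max_right _ _, fun s hsS hsσ x y hx hxy hwx => ?_⟩
  have hx₁ : 1 ≤ ‖x‖ := (le_max_right R 1).trans hx
  have hx₀ : 0 < ‖x‖ := one_pos.trans_le hx₁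
  have hsS' : ‖s‖ ≤ S' := hsS.trans (le_max_left _ _)
  obtain ⟨hνy, hlog, hsub⟩ := hCR x y ((le_max_left R 1).trans hx) hxy hwx
  have hlow : 0 < κ * ‖x‖ ^ finrank ℝ E := by positivity
  have hCC' : C / ‖x‖ ≤ C' / ‖x‖ := by
    gcongr
    exact le_max_left _ _
  have hpow : max (ν x) 1 ^ (-s.re) ≤ κ ^ (-σ) * ‖x‖ ^ (-(finrank ℝ E * σ)) := by
    calc max (ν x) 1 ^ (-s.re)
        ≤ max (ν x) 1 ^ (-σ) :=
          Real.rpow_le_rpow_of_exponent_le (le_max_right _ _) (neg_le_neg hsσ)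
      _ ≤ (κ * ‖x‖ ^ finrank ℝ E) ^ (-σ) :=
          Real.rpow_le_rpow_of_nonpos hlow ((hcoer x hwx).trans (le_max_left _ _)) (by simpa)
      _ = κ ^ (-σ) * ‖x‖ ^ (-(finrank ℝ E * σ)) := by
          rw [Real.mul_rpow hκ.le (by positivity), ← Real.rpow_natCast_mul hx₀.le, mul_neg]
  have hwy : |w y| ≤ 1 := by
    rw [abs_of_nonneg (h.nonneg y)]
    exact h.le_one y
  calc _ ≤ _ := norm_weightedCpow_sub_le (hlow.trans_le (hcoer x hwx)) hνy hwy
          (hlog.trans hCC') (hsub.trans hCC') s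
    _ ≤ (κ ^ (-σ) * ‖x‖ ^ (-(finrank ℝ E * σ))) *
          (C' / ‖x‖ * (1 + S' * Real.exp (S' * C'))) := by
        have : C' / ‖x‖ ≤ C' := div_le_self (le_max_right _ _) hx₁
        gcongr
    _ = _ := by
        rw [neg_add, Real.rpow_add hx₀, Real.rpow_neg_one]
        ring

theorem exists_norm_sub_le (h : IsConicWeight ν w) {D : ℝ} (hD : 0 ≤ D) (S : ℝ) {σ : ℝ}
    (hσ : 0 ≤ σ) :
    ∃ C, ∀ s : ℂ, ‖s‖ ≤ S → σ ≤ s.re → ∀ x y : E, ‖x - y‖ ≤ D →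
      ‖weightedCpow ν w s x - weightedCpow ν w s y‖ ≤
        C * (1 + ‖x‖) ^ (-(finrank ℝ E * σ + 1)) := by
  obtain ⟨C, R, hC, hR, hfar⟩ := h.exists_norm_sub_le_of_weight_ne_zero D S hσ
  set r : ℝ := finrank ℝ E * σ + 1
  have hr : 0 ≤ r := by positivity
  have hscale {x z : E} (hz : (1 + ‖x‖) / 4 ≤ ‖z‖) :
      C * ‖z‖ ^ (-r) ≤ C * 4 ^ r * (1 + ‖x‖) ^ (-r) := by
    rw [mul_assoc]
    gcongr
    calc ‖z‖ ^ (-r) ≤ ((1 + ‖x‖) / 4) ^ (-r) :=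
          Real.rpow_le_rpow_of_nonpos (by positivity) hz (by linarith)
      _ = 4 ^ r * (1 + ‖x‖) ^ (-r) := by
          rw [Real.div_rpow (by positivity) (by norm_num),
            Real.rpow_neg (by norm_num : (0 : ℝ) ≤ 4), div_inv_eq_mul, mul_comm]
  set R' := 2 * R + 2 * D + 1
  have : 0 ≤ R' := by positivity
  refine ⟨C * 4 ^ r + 2 * (1 + R') ^ r, fun s hsS hsσ x y hxy => ?_⟩
  have hnear : 0 ≤ 2 * (1 + R') ^ r * (1 + ‖x‖) ^ (-r) := by positivity
  have hpos : 0 ≤ C * 4 ^ r * (1 + ‖x‖) ^ (-r) := by positivity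
  rw [add_mul]
  rcases lt_or_ge ‖x‖ R' with hlt | hge
  · have hle : 1 ≤ (1 + R') ^ r * (1 + ‖x‖) ^ (-r) := by
      rw [Real.rpow_neg (by positivity), ← div_eq_mul_inv, one_le_div (by positivity)]
      gcongr
    have hx := h.norm_weightedCpow_le_one (hσ.trans hsσ) x
    have hy := h.norm_weightedCpow_le_one (hσ.trans hsσ) y
    linarith [norm_sub_le (weightedCpow ν w s x) (weightedCpow ν w s y)]
  by_cases hwx : w x = 0
  · by_cases hwy : w y = 0
    · simp only [weightedCpow, hwx, hwy, ofReal_zero, zero_mul, sub_self, norm_zero]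
      positivity
    · have hyx : ‖x‖ - D ≤ ‖y‖ := by linarith [norm_sub_norm_le x y]
      have hle := hfar s hsS hsσ y x (by linarith) (by rwa [norm_sub_rev]) hwy
      rw [norm_sub_rev] at hle
      linarith [hscale (x := x) (z := y) (by linarith)]
  · have hle := hfar s hsS hsσ x y (by linarith) hxy hwx
    linarith [hscale (x := x) (z := x) (by linarith)]

end IsConicWeight

end ConicWeight

section LatticeSum

open Filter MeasureTheory Set Topology Complex Module
open scoped Pointwise

theorem integrableOn_and_integral_cpow_max_one {s : ℂ} (hs : 1 < s.re) :
    IntegrableOn (fun t : ℝ => ((max t 1 : ℝ) : ℂ) ^ (-s)) (Ioi 0) ∧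
      ∫ t in Ioi (0 : ℝ), ((max t 1 : ℝ) : ℂ) ^ (-s) = s / (s - 1) := by
  have hIoc : EqOn (fun t : ℝ => ((max t 1 : ℝ) : ℂ) ^ (-s)) (fun _ => 1) (Ioc 0 1) := by
    intro t ht
    simp [max_eq_right ht.2]
  have hIoi : EqOn (fun t : ℝ => ((max t 1 : ℝ) : ℂ) ^ (-s)) (fun t => (t : ℂ) ^ (-s)) (Ioi 1) :=
    fun t ht => by simp only [max_eq_left (mem_Ioi.1 ht).le]
  have hre : (-s).re < -1 := by simpa using hs
  have hint₁ : IntegrableOn (fun t : ℝ => ((max t 1 : ℝ) : ℂ) ^ (-s)) (Ioc 0 1) :=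
    (integrableOn_const (by simp)).congr_fun hIoc.symm measurableSet_Ioc
  have hint₂ : IntegrableOn (fun t : ℝ => ((max t 1 : ℝ) : ℂ) ^ (-s)) (Ioi 1) :=
    (integrableOn_Ioi_cpow_of_lt hre one_pos).congr_fun hIoi.symm measurableSet_Ioi
  rw [← Ioc_union_Ioi_eq_Ioi zero_le_one]
  refine ⟨hint₁.union hint₂, ?_⟩
  have hs₁ : s - 1 ≠ 0 := sub_ne_zero.2 fun h => by simp [h] at hs
  have hs₂ : -s + 1 ≠ 0 := fun h => hs₁ (by linear_combination -h)
  rw [setIntegral_union (Ioc_disjoint_Ioi le_rfl) measurableSet_Ioi hint₁ hint₂,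
    setIntegral_congr_fun measurableSet_Ioc hIoc, setIntegral_congr_fun measurableSet_Ioi hIoi,
    integral_Ioi_cpow_of_lt hre one_pos, ofReal_one, one_cpow]
  simp only [integral_const, measureReal_restrict_apply_univ, Real.volume_real_Ioc, sub_zero,
    zero_le_one, sup_of_le_left, one_smul]
  field_simp
  ring

section Tiling

variable {E : Type*} [NormedAddCommGroup E] [NormedSpace ℝ E] {ι : Type*} [Fintype ι]
  (b : Basis ι ℝ E)

theorem floor_preimage_singleton (a : Submodule.span ℤ (range b)) :
    ZSpan.floor b ⁻¹' {a} = (fun x => x - (a : E)) ⁻¹' ZSpan.fundamentalDomain b := by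
  ext x
  have hmem := ZSpan.vadd_mem_fundamentalDomain b (-a) x
  rw [neg_inj, Submodule.vadd_def, vadd_eq_add, Submodule.coe_neg, neg_add_eq_sub] at hmem
  rw [mem_preimage, mem_singleton_iff, mem_preimage, hmem, eq_comm]

variable [MeasurableSpace E] [BorelSpace E]

theorem measurableSet_floor_preimage (a : Submodule.span ℤ (range b)) :
    MeasurableSet (ZSpan.floor b ⁻¹' {a}) := by
  rw [floor_preimage_singleton]
  exact (ZSpan.fundamentalDomain_measurableSet b).preimage (by fun_prop)

theorem measurable_coe_floor : Measurable fun x => (ZSpan.floor b x : E) :=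
  measurable_subtype_coe.comp (measurable_to_countable' (measurableSet_floor_preimage b))

theorem hasSum_lattice_of_integrable_comp_floor (μ : Measure E) [μ.IsAddHaarMeasure] {f : E → ℂ}
    (hf : Integrable (fun x => f (ZSpan.floor b x)) μ) :
    HasSum (fun a : Submodule.span ℤ (range b) => f a)
      ((∫ x, f (ZSpan.floor b x) ∂μ) / μ.real (ZSpan.fundamentalDomain b)) := by
  have := Module.Finite.of_basis b
  have := FiniteDimensional.proper ℝ E
  have hcovolume : (μ.real (ZSpan.fundamentalDomain b) : ℂ) ≠ 0 :=
    mod_cast ENNReal.toReal_ne_zero.2 ⟨ZSpan.measure_fundamentalDomain_ne_zero b,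
      (ZSpan.fundamentalDomain_isBounded b).measure_lt_top.ne⟩
  have huniv : ⋃ a, ZSpan.floor b ⁻¹' {a} = univ :=
    iUnion_eq_univ_iff.2 fun x => ⟨ZSpan.floor b x, rfl⟩
  have hsum := hasSum_integral_iUnion (measurableSet_floor_preimage b)
    (pairwise_disjoint_fiber (ZSpan.floor b)) (by rw [huniv]; exact hf.integrableOn)
  have hcell (a : Submodule.span ℤ (range b)) :
      ∫ x in ZSpan.floor b ⁻¹' {a}, f (ZSpan.floor b x) ∂μ =
        f a * μ.real (ZSpan.fundamentalDomain b) := by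
    rw [setIntegral_congr_fun (g := fun _ => f a) (measurableSet_floor_preimage b a)
      fun x hx => by rw [mem_preimage, mem_singleton_iff] at hx; rw [hx],
      setIntegral_const, floor_preimage_singleton, real_smul, mul_comm]
    simp only [Measure.real, sub_eq_add_neg, measure_preimage_add_right]
  simp only [hcell, huniv, setIntegral_univ] at hsum
  simpa [hcovolume] using hsum.div_const (μ.real (ZSpan.fundamentalDomain b) : ℂ)

end Tiling

variable {E : Type*} [NormedAddCommGroup E] [NormedSpace ℝ E] [MeasurableSpace E]
  [FiniteDimensional ℝ E] {ν w : E → ℝ}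

namespace IsConicWeight

section Integral

variable [Nontrivial E] (μ : Measure E) [μ.IsAddHaarMeasure]

theorem integrableOn_sublevel (h : IsConicWeight ν w) (t : ℝ) :
    IntegrableOn w {x | ν x < t} μ := by
  obtain ⟨κ, hκ, hcoer⟩ := h.coercive
  have hsupp : ∀ x, ν x < t → x ∉ Metric.closedBall (0 : E) (max 1 (t / κ)) → w x = 0 := by
    intro x hx hxR
    rw [Metric.mem_closedBall, dist_zero_right, not_le, max_lt_iff] at hxR
    by_contra hwx
    have hpow : ‖x‖ ≤ ‖x‖ ^ finrank ℝ E := le_self_pow₀ hxR.1.le finrank_pos.ne'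
    have hcoer_x := hcoer x hwx
    rw [div_lt_iff₀' hκ] at hxR
    nlinarith
  have hball : IntegrableOn w (Metric.closedBall 0 (max 1 (t / κ))) μ :=
    Measure.integrableOn_of_bounded (M := 1) (isCompact_closedBall _ _).measure_lt_top.ne
      h.measurable.aestronglyMeasurable
      (.of_forall fun x => by simpa [abs_of_nonneg (h.nonneg x)] using h.le_one x)
  exact hball.of_forall_sdiff_eq_zero (measurableSet_lt h.measurable_form measurable_const)
    fun x hx => hsupp x hx.1 hx.2

variable [BorelSpace E]

theorem setIntegral_sublevel (h : IsConicWeight ν w) {t : ℝ} (ht : 0 < t) :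
    ∫ x in {x | ν x < t}, w x ∂μ = t * ∫ x in {x | ν x < 1}, w x ∂μ := by
  set r : ℝ := t ^ (finrank ℝ E : ℝ)⁻¹
  have hr : 0 < r := by positivity
  have hrt : r ^ finrank ℝ E = t := Real.rpow_inv_natCast_pow ht.le finrank_pos.ne'
  have hset : r • {x | ν x < 1} = {x | ν x < t} := by
    ext x
    rw [mem_smul_set_iff_inv_smul_mem₀ hr.ne', mem_ofPred_eq, mem_ofPred_eq,
      h.form_smul _ (inv_pos.2 hr), inv_pow, hrt, inv_mul_lt_one₀ ht]
  have hscale := Measure.setIntegral_comp_smul_of_pos μ w {x | ν x < 1} hr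
  simp only [h.smul r hr, hset, hrt, smul_eq_mul] at hscale
  rw [hscale, mul_inv_cancel_left₀ ht.ne']

theorem map_withDensity (h : IsConicWeight ν w) :
    (μ.withDensity fun x => ENNReal.ofReal (w x)).map ν =
      ENNReal.ofReal (∫ x in {x | ν x < 1}, w x ∂μ) • volume.restrict (Ioi 0) := by
  obtain ⟨κ, hκ, hcoer⟩ := h.coercive
  have hIio (t : ℝ) : (μ.withDensity fun x => ENNReal.ofReal (w x)).map ν (Iio t) =
      ENNReal.ofReal (∫ x in {x | ν x < t}, w x ∂μ) := by
    rw [Measure.map_apply h.measurable_form measurableSet_Iio,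
      withDensity_apply _ (h.measurable_form measurableSet_Iio),
      ofReal_integral_eq_lintegral_ofReal (h.integrableOn_sublevel μ t) (.of_forall h.nonneg)]
    rfl
  refine Measure.ext_of_generateFrom_of_iUnion (range Iio) (fun n : ℕ => Iio (n : ℝ))
    ((BorelSpace.measurable_eq (α := ℝ)).trans (borel_eq_generateFrom_Iio ℝ)) isPiSystem_Iio
    (iUnion_eq_univ_iff.2 exists_nat_gt) (fun n => mem_range_self _)
    (fun n => by simp [hIio]) ?_
  rintro _ ⟨t, rfl⟩
  rw [hIio, Measure.smul_apply, smul_eq_mul, Measure.restrict_apply measurableSet_Iio,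
    inter_comm, Ioi_inter_Iio, Real.volume_Ioo, sub_zero]
  rcases le_or_gt t 0 with ht | ht
  · have hzero : ∀ x ∈ {x | ν x < t}, w x = 0 := by
      intro x hx
      by_contra hwx
      have : 0 ≤ κ * ‖x‖ ^ finrank ℝ E := by positivity
      linarith [hcoer x hwx, mem_ofPred_eq ▸ hx]
    rw [setIntegral_eq_zero_of_forall_eq_zero hzero, ENNReal.ofReal_of_nonpos ht,
      ENNReal.ofReal_zero, mul_zero]
  · rw [h.setIntegral_sublevel μ ht, mul_comm, ENNReal.ofReal_mul (integral_nonneg h.nonneg)]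

theorem integrable_and_integral_weightedCpow (h : IsConicWeight ν w) {s : ℂ} (hs : 1 < s.re) :
    Integrable (weightedCpow ν w s) μ ∧
      ∫ x, weightedCpow ν w s x ∂μ = s / (s - 1) * (∫ x in {x | ν x < 1}, w x ∂μ : ℝ) := by
  have hdensity : Measurable fun x => (w x).toNNReal := h.measurable.real_toNNReal
  have hsmul (x : E) : ((w x).toNNReal : NNReal) • ((max (ν x) 1 : ℝ) : ℂ) ^ (-s) =
      weightedCpow ν w s x := by
    rw [NNReal.smul_def, Real.coe_toNNReal _ (h.nonneg x), real_smul, weightedCpow]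
  have hmeas : Measurable fun t : ℝ => ((max t 1 : ℝ) : ℂ) ^ (-s) := by fun_prop
  have hmap : (μ.withDensity fun x => ((w x).toNNReal : ENNReal)).map ν =
      ENNReal.ofReal (∫ x in {x | ν x < 1}, w x ∂μ) • volume.restrict (Ioi 0) :=
    h.map_withDensity μ
  obtain ⟨hint, hval⟩ := integrableOn_and_integral_cpow_max_one hs
  have hint' := hint.integrable.smul_measure
    (ENNReal.ofReal_ne_top (r := ∫ x in {x | ν x < 1}, w x ∂μ))
  rw [← hmap, integrable_map_measure hmeas.aestronglyMeasurable h.measurable_form.aemeasurable,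
    integrable_withDensity_iff_integrable_smul hdensity] at hint'
  refine ⟨hint'.congr (.of_forall hsmul), ?_⟩
  have := integral_map h.measurable_form.aemeasurable
    (μ := μ.withDensity fun x => ((w x).toNNReal : ENNReal)) hmeas.aestronglyMeasurable
  rw [hmap, integral_smul_measure, hval, ENNReal.toReal_ofReal (integral_nonneg h.nonneg),
    integral_withDensity_eq_integral_smul hdensity] at this
  simp only [hsmul] at this
  rw [← this, real_smul, mul_comm]

end Integral

variable [BorelSpace E] {ι : Type*}

theorem exists_bound_sub_floor [Nontrivial E] (h : IsConicWeight ν w) [Fintype ι]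
    (b : Basis ι ℝ E) (μ : Measure E) [μ.IsAddHaarMeasure] {s₀ : ℂ}
    (hs₀ : 1 - 1 / (finrank ℝ E : ℝ) < s₀.re) :
    ∃ r > 0, ∃ bound : E → ℝ, Integrable bound μ ∧ ∀ s ∈ Metric.ball s₀ r, ∀ x,
      ‖weightedCpow ν w s x - weightedCpow ν w s (ZSpan.floor b x)‖ ≤ bound x := by
  have hn : 1 ≤ (finrank ℝ E : ℝ) := by exact_mod_cast finrank_pos (R := ℝ) (M := E)
  have hinv : 1 / (finrank ℝ E : ℝ) ≤ 1 := (div_le_one (by linarith)).2 hn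
  set δ := (s₀.re - (1 - 1 / (finrank ℝ E : ℝ))) / 2 with hδ
  have hδ₀ : 0 < δ := by linarith
  obtain ⟨C, hC⟩ := h.exists_norm_sub_le (D := ∑ i, ‖b i‖) (by positivity) (‖s₀‖ + δ)
    (σ := s₀.re - δ) (by linarith)
  refine ⟨δ, hδ₀, fun x => C * (1 + ‖x‖) ^ (-(finrank ℝ E * (s₀.re - δ) + 1)),
    (integrable_one_add_norm ?_).const_mul C,
    fun s hs x => hC s ?_ ?_ x _ (ZSpan.norm_fract_le b x)⟩
  · have hlt : finrank ℝ E * (1 - 1 / (finrank ℝ E : ℝ)) < finrank ℝ E * (s₀.re - δ) :=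
      mul_lt_mul_of_pos_left (by linarith) (by linarith)
    rw [mul_sub, mul_one_div_cancel (by linarith)] at hlt
    linarith
  · linarith [norm_sub_norm_le s s₀, mem_ball_iff_norm.1 hs]
  · have hre := (abs_le.1 (abs_re_le_norm (s - s₀))).1
    rw [sub_re] at hre
    linarith [mem_ball_iff_norm.1 hs]

/-- The sum differs from the integral divided by the covolume, which has only the pole `1`, by an
integral that converges absolutely for `1 - 1 / n < re s`. -/
theorem exists_differentiableOn_mul_tsum [Nontrivial E] (h : IsConicWeight ν w) [Finite ι]
    (b : Basis ι ℝ E) :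
    ∃ Φ : ℂ → ℂ, DifferentiableOn ℂ Φ {s | 1 - 1 / (finrank ℝ E : ℝ) < s.re} ∧
      ∀ s : ℂ, 1 < s.re →
        Summable (fun a : Submodule.span ℤ (range b) => weightedCpow ν w s a) ∧
        (s - 1) * ∑' a : Submodule.span ℤ (range b), weightedCpow ν w s a = Φ s := by
  have := Fintype.ofFinite ι
  let μ : Measure E := Measure.addHaar
  set V := ∫ x in {x | ν x < 1}, w x ∂μ
  set c := μ.real (ZSpan.fundamentalDomain b)
  have hmeas (s : ℂ) : AEStronglyMeasurable
      (fun x => weightedCpow ν w s x - weightedCpow ν w s (ZSpan.floor b x)) μ :=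
    ((h.measurable_weightedCpow s).sub
      ((h.measurable_weightedCpow s).comp (measurable_coe_floor b))).aestronglyMeasurable
  have hdiff : DifferentiableOn ℂ
      (fun s => ∫ x, (weightedCpow ν w s x - weightedCpow ν w s (ZSpan.floor b x)) ∂μ)
      {s | 1 - 1 / (finrank ℝ E : ℝ) < s.re} := by
    refine differentiableOn_integral_of_forall_norm_le
      (isOpen_lt continuous_const continuous_re) hmeas
      (fun x => Differentiable.differentiableOn ?_) fun s hs => h.exists_bound_sub_floor b μ hs
    have hcpow (y : E) : Differentiable ℂ fun s => weightedCpow ν w s y := by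
      have : ((max (ν y) 1 : ℝ) : ℂ) ≠ 0 := mod_cast (lt_max_of_lt_right one_pos).ne'
      exact (differentiable_neg.const_cpow (.inl this)).const_mul _
    exact (hcpow x).sub (hcpow _)
  refine ⟨fun s => (s * V - (s - 1) *
    ∫ x, (weightedCpow ν w s x - weightedCpow ν w s (ZSpan.floor b x)) ∂μ) / c,
    .div_const (.sub (by fun_prop) (.mul (by fun_prop) hdiff)) _, fun s hs => ?_⟩
  have hs₁ : s - 1 ≠ 0 := sub_ne_zero.2 fun h => by simp [h] at hs
  obtain ⟨hint, hval⟩ := h.integrable_and_integral_weightedCpow μ hs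
  have hint_sub : Integrable
      (fun x => weightedCpow ν w s x - weightedCpow ν w s (ZSpan.floor b x)) μ := by
    have hinv : 0 < 1 / (finrank ℝ E : ℝ) := one_div_pos.2 (mod_cast finrank_pos)
    obtain ⟨r, hr, bound, hbound, hle⟩ := h.exists_bound_sub_floor b μ (s₀ := s) (by linarith)
    exact hbound.mono' (hmeas s) (.of_forall (hle s (Metric.mem_ball_self hr)))
  have hint_floor : Integrable (fun x => weightedCpow ν w s (ZSpan.floor b x)) μ := by
    refine (hint.sub hint_sub).congr (.of_forall fun x => ?_)
    simp
  have hsum := hasSum_lattice_of_integrable_comp_floor b μ hint_floor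
  refine ⟨hsum.summable, ?_⟩
  beta_reduce
  rw [hsum.tsum_eq, integral_sub hint hint_floor, hval]
  field_simp
  ring

end IsConicWeight

end LatticeSum

/-! ### Dedekind zeta functions -/

section LogarithmicWeight

open Finset Module NumberField NumberField.InfinitePlace NumberField.mixedEmbedding
open NumberField.Units.dirichletUnitTheorem

variable {K : Type*} [Field K] [NumberField K]

open scoped Classical in
theorem normAtPlace_le_norm (w : InfinitePlace K) (x : mixedSpace K) : normAtPlace w x ≤ ‖x‖ := by
  rw [norm_eq_sup'_normAtPlace]
  exact le_sup' (fun w => normAtPlace w x) (mem_univ w)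

open scoped Classical in
theorem abs_normAtPlace_sub_le (w : InfinitePlace K) (x y : mixedSpace K) :
    |normAtPlace w x - normAtPlace w y| ≤ ‖x - y‖ := by
  have hxy := normAtPlace_add_le w (x - y) y
  have hyx := normAtPlace_add_le w (y - x) x
  have hneg : normAtPlace w (y - x) = normAtPlace w (x - y) := by rw [← normAtPlace_neg, neg_sub]
  have hle := normAtPlace_le_norm w (x - y)
  rw [sub_add_cancel] at hxy hyx
  rw [abs_le]
  constructor <;> linarith

theorem log_norm_eq_sum_mult_mul_log_normAtPlace {x : mixedSpace K}
    (hx : mixedEmbedding.norm x ≠ 0) :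
    Real.log (mixedEmbedding.norm x) = ∑ w, (mult w : ℝ) * Real.log (normAtPlace w x) := by
  rw [mixedEmbedding.norm_apply,
    Real.log_prod fun w _ => pow_ne_zero _ (mixedEmbedding.norm_ne_zero_iff.1 hx w)]
  simp only [Real.log_pow]

/-- The logarithm of `x` at the place `w`, recentred so that it is invariant under positive
dilations. Up to the factor `mult w`, these are the coordinates of `logMap x`, together with the
one at the distinguished place `w₀` that `logMap` omits. -/
noncomputable def centeredLog (w : InfinitePlace K) (x : mixedSpace K) : ℝ :=
  Real.log (normAtPlace w x) - Real.log (mixedEmbedding.norm x) * (finrank ℚ K : ℝ)⁻¹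

theorem sum_mult_mul_centeredLog {x : mixedSpace K} (hx : mixedEmbedding.norm x ≠ 0) :
    ∑ w, (mult w : ℝ) * centeredLog w x = 0 := by
  have hfinrank : (finrank ℚ K : ℝ) ≠ 0 := mod_cast finrank_pos.ne'
  have hsum : ∑ w : InfinitePlace K, (mult w : ℝ) = finrank ℚ K := mod_cast sum_mult_eq (K := K)
  simp only [centeredLog, mul_sub, sum_sub_distrib]
  rw [← log_norm_eq_sum_mult_mul_log_normAtPlace hx, ← sum_mul, hsum]
  field_simp
  ring

open scoped Classical in
theorem abs_centeredLog_le {x : mixedSpace K} (hx : mixedEmbedding.norm x ≠ 0)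
    (w : InfinitePlace K) :
    |centeredLog w x| ≤ Fintype.card (InfinitePlace K) * ‖logMap x‖ := by
  have hcoord {v : InfinitePlace K} (hv : v ≠ w₀) : |mult v * centeredLog v x| ≤ ‖logMap x‖ :=
    norm_le_pi_norm (logMap x) ⟨v, hv⟩
  have hmult : |centeredLog w x| ≤ |mult w * centeredLog w x| := by
    rw [abs_mul, Nat.abs_cast]
    exact le_mul_of_one_le_left (abs_nonneg _) (mod_cast mult_pos)
  refine hmult.trans ?_
  rcases eq_or_ne w w₀ with rfl | hw
  · have hsum := sum_mult_mul_centeredLog hx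
    rw [← add_sum_erase _ _ (mem_univ w₀)] at hsum
    rw [eq_neg_of_add_eq_zero_left hsum, abs_neg]
    calc |∑ v ∈ univ.erase w₀, mult v * centeredLog v x|
        ≤ ∑ v ∈ univ.erase w₀, |mult v * centeredLog v x| := abs_sum_le_sum_abs _ _
      _ ≤ #(univ.erase (w₀ : InfinitePlace K)) * ‖logMap x‖ := by
        rw [← nsmul_eq_mul]
        exact sum_le_card_nsmul _ _ _ fun v hv => hcoord (ne_of_mem_erase hv)
      _ ≤ Fintype.card (InfinitePlace K) * ‖logMap x‖ := by
        gcongr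
        exact card_le_univ _
  · exact (hcoord hw).trans
      (le_mul_of_one_le_left (norm_nonneg _) (mod_cast Fintype.card_pos))

open scoped Classical in
theorem exists_mul_norm_le_normAtPlace (R : ℝ) :
    ∃ k > 0, ∀ x : mixedSpace K, mixedEmbedding.norm x ≠ 0 → ‖logMap x‖ ≤ R →
      ∀ w, k * ‖x‖ ≤ normAtPlace w x := by
  set M := Fintype.card (InfinitePlace K) * R
  refine ⟨Real.exp (-(2 * M)), Real.exp_pos _, fun x hx hR w => ?_⟩
  set L := Real.log (mixedEmbedding.norm x) * (finrank ℚ K : ℝ)⁻¹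
  have hpos (v) : 0 < normAtPlace v x :=
    (normAtPlace_nonneg _ _).lt_of_ne' (mixedEmbedding.norm_ne_zero_iff.1 hx v)
  have hcentered (v) : |Real.log (normAtPlace v x) - L| ≤ M :=
    (abs_centeredLog_le hx v).trans (mul_le_mul_of_nonneg_left hR (Nat.cast_nonneg _))
  have hnorm : ‖x‖ ≤ Real.exp (L + M) := by
    rw [norm_eq_sup'_normAtPlace]
    refine sup'_le _ _ fun v _ => ?_
    rw [← Real.log_le_iff_le_exp (hpos v)]
    linarith [(abs_le.1 (hcentered v)).2]
  calc Real.exp (-(2 * M)) * ‖x‖ ≤ Real.exp (-(2 * M)) * Real.exp (L + M) := by gcongr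
    _ = Real.exp (L - M) := by rw [← Real.exp_add]; ring_nf
    _ ≤ normAtPlace w x := by
      rw [← Real.le_log_iff_exp_le (hpos w)]
      linarith [(abs_le.1 (hcentered w)).1]

theorem abs_log_sub_log_le_div {a b c : ℝ} (hc : 0 < c) (ha : c ≤ a) (hb : c ≤ b) :
    |Real.log a - Real.log b| ≤ |a - b| / c := by
  wlog hab : b ≤ a generalizing a b
  · rw [abs_sub_comm, abs_sub_comm a]
    exact this hb ha (le_of_not_ge hab)
  have hb' := hc.trans_le hb
  have ha' := hc.trans_le ha
  rw [abs_of_nonneg (sub_nonneg.2 (Real.log_le_log hb' hab)), abs_of_nonneg (sub_nonneg.2 hab),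
    ← Real.log_div ha'.ne' hb'.ne']
  calc Real.log (a / b) ≤ a / b - 1 := Real.log_le_sub_one_of_pos (by positivity)
    _ = (a - b) / b := by field_simp
    _ ≤ (a - b) / c := by gcongr

section Perturbation

variable {x y : mixedSpace K} {δ : ℝ}

theorem abs_log_norm_sub_le (hx : mixedEmbedding.norm x ≠ 0) (hy : mixedEmbedding.norm y ≠ 0)
    (h : ∀ w, |Real.log (normAtPlace w x) - Real.log (normAtPlace w y)| ≤ δ) :
    |Real.log (mixedEmbedding.norm x) - Real.log (mixedEmbedding.norm y)| ≤ finrank ℚ K * δ := by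
  rw [log_norm_eq_sum_mult_mul_log_normAtPlace hx, log_norm_eq_sum_mult_mul_log_normAtPlace hy,
    ← sum_sub_distrib, ← sum_mult_eq, Nat.cast_sum, sum_mul]
  refine (abs_sum_le_sum_abs _ _).trans (sum_le_sum fun w _ => ?_)
  rw [← mul_sub, abs_mul, Nat.abs_cast]
  gcongr
  exact h w

open scoped Classical in
theorem norm_logMap_sub_le (hx : mixedEmbedding.norm x ≠ 0) (hy : mixedEmbedding.norm y ≠ 0)
    (hδ : 0 ≤ δ) (h : ∀ w, |Real.log (normAtPlace w x) - Real.log (normAtPlace w y)| ≤ δ) :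
    ‖logMap x - logMap y‖ ≤ 4 * δ := by
  rw [pi_norm_le_iff_of_nonneg (by positivity)]
  intro w
  have hfinrank : 0 < (finrank ℚ K : ℝ) := mod_cast finrank_pos
  have hmult : (mult w.1 : ℝ) ≤ 2 := by
    unfold mult
    split_ifs <;> norm_num
  have hmean : |Real.log (mixedEmbedding.norm x) * (finrank ℚ K : ℝ)⁻¹ -
      Real.log (mixedEmbedding.norm y) * (finrank ℚ K : ℝ)⁻¹| ≤ δ := by
    rw [← sub_mul, abs_mul, abs_of_pos (inv_pos.2 hfinrank), ← div_eq_mul_inv,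
      div_le_iff₀' hfinrank]
    exact abs_log_norm_sub_le hx hy h
  rw [Pi.sub_apply, logMap_apply, logMap_apply, Real.norm_eq_abs, ← mul_sub, abs_mul,
    Nat.abs_cast, sub_sub_sub_comm]
  calc (mult w.1 : ℝ) * _ ≤ 2 * (δ + δ) :=
        mul_le_mul hmult ((abs_sub _ _).trans (add_le_add (h w) hmean)) (abs_nonneg _) zero_le_two
    _ = 4 * δ := by ring

open scoped Classical in
theorem norm_ne_zero_and_abs_log_normAtPlace_sub_le {k D : ℝ} (hk : 0 < k)
    (hx : ∀ w, k * ‖x‖ ≤ normAtPlace w x) (hxD : 2 * D / k < ‖x‖) (hxy : ‖x - y‖ ≤ D)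
    (hx0 : 0 < ‖x‖) :
    mixedEmbedding.norm y ≠ 0 ∧
      ∀ w, |Real.log (normAtPlace w x) - Real.log (normAtPlace w y)| ≤ 2 * D / k / ‖x‖ := by
  have hD : D ≤ k * ‖x‖ / 2 := by
    rw [div_lt_iff₀ hk] at hxD
    linarith
  have hpos : 0 < k * ‖x‖ / 2 := by positivity
  have hsub (w) : |normAtPlace w x - normAtPlace w y| ≤ D :=
    (abs_normAtPlace_sub_le w x y).trans hxy
  have hy (w) : k * ‖x‖ / 2 ≤ normAtPlace w y := by linarith [hx w, (abs_le.1 (hsub w)).2]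
  refine ⟨mixedEmbedding.norm_ne_zero_iff.2 fun w => (hpos.trans_le (hy w)).ne', fun w => ?_⟩
  calc |Real.log (normAtPlace w x) - Real.log (normAtPlace w y)|
      ≤ |normAtPlace w x - normAtPlace w y| / (k * ‖x‖ / 2) :=
        abs_log_sub_log_le_div hpos (by linarith [hx w]) (hy w)
    _ ≤ D / (k * ‖x‖ / 2) := by gcongr; exact hsub w
    _ = 2 * D / k / ‖x‖ := by field_simp

end Perturbation

variable (T : logSpace K → ℝ)

open scoped Classical in
/-- The weight on the mixed space obtained by pulling `T` back along the logarithmic embedding.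
It is set to zero on the elements of norm zero, where `logMap` takes junk values. -/
noncomputable def logWeight (x : mixedSpace K) : ℝ :=
  if mixedEmbedding.norm x = 0 then 0 else T (logMap x)

variable {T}

theorem logWeight_of_norm_ne_zero {x : mixedSpace K} (hx : mixedEmbedding.norm x ≠ 0) :
    logWeight T x = T (logMap x) := if_neg hx

theorem norm_ne_zero_of_logWeight_ne_zero {x : mixedSpace K} (hx : logWeight T x ≠ 0) :
    mixedEmbedding.norm x ≠ 0 := fun h => hx (if_pos h)

theorem logWeight_smul {r : ℝ} (hr : r ≠ 0) (x : mixedSpace K) :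
    logWeight T (r • x) = logWeight T x := by
  have hnorm : mixedEmbedding.norm (r • x) = 0 ↔ mixedEmbedding.norm x = 0 := by
    simp [mixedEmbedding.norm_smul, hr]
  unfold logWeight
  simp only [hnorm]
  split_ifs with hx
  · rfl
  · rw [logMap_real_smul hx hr]

theorem measurable_logWeight (hT : Measurable T) : Measurable (logWeight T) := by
  have hnorm := (mixedEmbedding.continuous_norm K).measurable
  have hlogMap : Measurable (logMap : mixedSpace K → logSpace K) := by
    refine measurable_pi_iff.2 fun w => measurable_const.mul ?_
    exact (continuous_normAtPlace _).measurable.log.sub (hnorm.log.mul_const _)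
  exact Measurable.ite (measurableSet_eq_fun hnorm measurable_const) measurable_const
    (hT.comp hlogMap)

variable {R : ℝ}

open scoped Classical in
theorem exists_mul_norm_le_normAtPlace_of_logWeight_ne_zero (hT : ∀ v, T v ≠ 0 → ‖v‖ ≤ R) :
    ∃ k > 0, ∀ x : mixedSpace K, logWeight T x ≠ 0 → ∀ w, k * ‖x‖ ≤ normAtPlace w x := by
  obtain ⟨k, hk, hkx⟩ := exists_mul_norm_le_normAtPlace (K := K) R
  refine ⟨k, hk, fun x hx => ?_⟩
  have hnorm := norm_ne_zero_of_logWeight_ne_zero hx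
  rw [logWeight_of_norm_ne_zero hnorm] at hx
  exact hkx x hnorm (hT _ hx)

open scoped Classical in
theorem exists_mul_norm_pow_le_norm_of_logWeight_ne_zero (hT : ∀ v, T v ≠ 0 → ‖v‖ ≤ R) :
    ∃ κ > 0, ∀ x : mixedSpace K, logWeight T x ≠ 0 →
      κ * ‖x‖ ^ finrank ℚ K ≤ mixedEmbedding.norm x := by
  obtain ⟨k, hk, hkx⟩ := exists_mul_norm_le_normAtPlace_of_logWeight_ne_zero hT
  refine ⟨k ^ finrank ℚ K, by positivity, fun x hx => ?_⟩
  rw [← mul_pow, mixedEmbedding.norm_apply, ← sum_mult_eq, ← prod_pow_eq_pow_sum]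
  exact prod_le_prod (fun w _ => by positivity) fun w _ => by gcongr; exact hkx x hx w

open scoped Classical in
theorem exists_abs_logWeight_sub_le {A : NNReal} (hT : ∀ v, T v ≠ 0 → ‖v‖ ≤ R)
    (hLip : LipschitzWith A T) (D : ℝ) :
    ∃ C R : ℝ, ∀ x y : mixedSpace K, R ≤ ‖x‖ → ‖x - y‖ ≤ D → logWeight T x ≠ 0 →
      0 < mixedEmbedding.norm y ∧
      |Real.log (mixedEmbedding.norm x) - Real.log (mixedEmbedding.norm y)| ≤ C / ‖x‖ ∧
      |logWeight T x - logWeight T y| ≤ C / ‖x‖ := by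
  obtain ⟨k, hk, hkx⟩ := exists_mul_norm_le_normAtPlace_of_logWeight_ne_zero hT
  refine ⟨(finrank ℚ K + A * 4) * (2 * D / k), 2 * D / k + 1, fun x y hx hxy hTx => ?_⟩
  have hD : 0 ≤ D := (norm_nonneg _).trans hxy
  have hx0 : 0 < ‖x‖ := by linarith [show 0 ≤ 2 * D / k by positivity]
  obtain ⟨hy, hlog⟩ :=
    norm_ne_zero_and_abs_log_normAtPlace_sub_le hk (hkx x hTx) (by linarith) hxy hx0
  have hnorm := norm_ne_zero_of_logWeight_ne_zero hTx
  set δ := 2 * D / k / ‖x‖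
  have hδ : 0 ≤ δ := by positivity
  have hsplit : (finrank ℚ K + A * 4) * (2 * D / k) / ‖x‖ = finrank ℚ K * δ + A * (4 * δ) := by
    simp only [δ]
    ring
  rw [hsplit, logWeight_of_norm_ne_zero hnorm, logWeight_of_norm_ne_zero hy]
  refine ⟨(mixedEmbedding.norm_nonneg _).lt_of_ne' hy, ?_, ?_⟩
  · exact (abs_log_norm_sub_le hnorm hy hlog).trans (le_add_of_nonneg_right (by positivity))
  · calc |T (logMap x) - T (logMap y)| ≤ A * ‖logMap x - logMap y‖ := hLip.norm_sub_le _ _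
      _ ≤ A * (4 * δ) := by gcongr; exact norm_logMap_sub_le hnorm hy hδ hlog
      _ ≤ _ := le_add_of_nonneg_left (by positivity)

open scoped Classical in
theorem isConicWeight_logWeight {A : NNReal} (h0 : ∀ v, 0 ≤ T v) (h1 : ∀ v, T v ≤ 1)
    (hT : ∀ v, T v ≠ 0 → ‖v‖ ≤ R) (hLip : LipschitzWith A T) :
    IsConicWeight mixedEmbedding.norm (logWeight T) where
  measurable_form := (mixedEmbedding.continuous_norm K).measurable
  measurable := measurable_logWeight hLip.continuous.measurable
  nonneg x := by
    unfold logWeight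
    split_ifs
    exacts [le_rfl, h0 _]
  le_one x := by
    unfold logWeight
    split_ifs
    exacts [zero_le_one, h1 _]
  form_smul r hr x := by
    rw [mixedEmbedding.norm_smul, abs_of_pos hr, mixedEmbedding.finrank]
  smul r hr := logWeight_smul hr.ne'
  coercive := by
    rw [mixedEmbedding.finrank]
    exact exists_mul_norm_pow_le_norm_of_logWeight_ne_zero hT
  slowlyVarying := exists_abs_logWeight_sub_le hT hLip

end LogarithmicWeight

section TentPartition

open Module

theorem tent_le_one (x : ℝ) : tent x ≤ 1 := max_le zero_le_one (by linarith [abs_nonneg x])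

theorem abs_tent_le_one (x : ℝ) : |tent x| ≤ 1 := by
  rw [abs_of_nonneg (tent_nonneg x)]
  exact tent_le_one x

theorem abs_tent_sub_le (x y : ℝ) : |tent x - tent y| ≤ |x - y| := by
  rw [tent, tent, max_comm 0, max_comm 0]
  refine (abs_max_sub_max_le_abs _ _ _).trans ?_
  rw [sub_sub_sub_cancel_left, abs_sub_comm]
  exact abs_abs_sub_abs_le_abs_sub x y

theorem sum_tent_intCast_add (c : ℝ) :
    ∑ j ∈ ({⌊-c⌋, ⌊-c⌋ + 1} : Finset ℤ), tent (j + c) = 1 := by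
  have hle := Int.floor_le (-c)
  have hlt := Int.lt_floor_add_one (-c)
  rw [Finset.sum_pair (by simp), ← tent_neg, tent_eq_one_sub (by linarith) (by linarith),
    tent_eq_one_sub (by push_cast; linarith) (by push_cast; linarith)]
  push_cast
  ring

theorem tent_intCast_add_eq_zero {c : ℝ} {j : ℤ} (hj : j ∉ ({⌊-c⌋, ⌊-c⌋ + 1} : Finset ℤ)) :
    tent (j + c) = 0 := by
  refine tent_eq_zero ?_
  have hle := Int.floor_le (-c)
  have hlt := Int.lt_floor_add_one (-c)
  have hcases : j ≤ ⌊-c⌋ - 1 ∨ ⌊-c⌋ + 2 ≤ j := by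
    simp only [Finset.mem_insert, Finset.mem_singleton] at hj
    omega
  rcases hcases with hj | hj
  · have : (j : ℝ) ≤ ⌊-c⌋ - 1 := mod_cast hj
    exact le_abs.2 (.inr (by linarith))
  · have : (⌊-c⌋ : ℝ) + 2 ≤ j := mod_cast hj
    exact le_abs.2 (.inl (by linarith))

theorem abs_prod_sub_prod_le_sum {ι : Type*} (s : Finset ι) {a b : ι → ℝ} (ha : ∀ i, |a i| ≤ 1)
    (hb : ∀ i, |b i| ≤ 1) : |∏ i ∈ s, a i - ∏ i ∈ s, b i| ≤ ∑ i ∈ s, |a i - b i| := by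
  classical
  induction s using Finset.induction_on with
  | empty => simp
  | insert i s hi ih =>
    rw [Finset.prod_insert hi, Finset.prod_insert hi, Finset.sum_insert hi]
    have hprod : |∏ i ∈ s, a i| ≤ 1 := by
      rw [Finset.abs_prod]
      exact Finset.prod_le_one (fun _ _ => abs_nonneg _) fun i _ => ha i
    calc |a i * ∏ i ∈ s, a i - b i * ∏ i ∈ s, b i|
        = |(a i - b i) * ∏ i ∈ s, a i + b i * (∏ i ∈ s, a i - ∏ i ∈ s, b i)| := by ring_nf
      _ ≤ |a i - b i| * |∏ i ∈ s, a i| + |b i| * |∏ i ∈ s, a i - ∏ i ∈ s, b i| := by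
        rw [← abs_mul, ← abs_mul]
        exact abs_add_le _ _
      _ ≤ |a i - b i| * 1 + 1 * ∑ i ∈ s, |a i - b i| := by
        gcongr
        exact hb i
      _ = |a i - b i| + ∑ i ∈ s, |a i - b i| := by ring

variable {ι V : Type*} [Fintype ι] [NormedAddCommGroup V] [NormedSpace ℝ V] (b : Basis ι ℝ V)

/-- The product of the tent functions of the coordinates in a basis. Its translates by the lattice
spanned by the basis form a Lipschitz partition of unity. -/
noncomputable def prodTent (v : V) : ℝ := ∏ i, tent (b.repr v i)

theorem prodTent_nonneg (v : V) : 0 ≤ prodTent b v := Finset.prod_nonneg fun _ _ => tent_nonneg _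

theorem prodTent_le_one (v : V) : prodTent b v ≤ 1 :=
  Finset.prod_le_one (fun _ _ => tent_nonneg _) fun _ _ => tent_le_one _

theorem norm_le_of_prodTent_ne_zero {v : V} (hv : prodTent b v ≠ 0) : ‖v‖ ≤ ∑ i, ‖b i‖ := by
  conv_lhs => rw [← b.sum_repr v]
  refine (norm_sum_le _ _).trans (Finset.sum_le_sum fun i hi => ?_)
  have hcoord : |b.repr v i| < 1 :=
    not_le.1 fun h => Finset.prod_ne_zero_iff.1 hv i hi (tent_eq_zero h)
  rw [norm_smul, Real.norm_eq_abs]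
  exact mul_le_of_le_one_left (norm_nonneg _) hcoord.le

theorem exists_lipschitzWith_prodTent : ∃ A, LipschitzWith A (prodTent b) := by
  have := Module.Finite.of_basis b
  let coord (i : ι) : V →L[ℝ] ℝ := (b.coord i).toContinuousLinearMap
  refine ⟨∑ i, ‖coord i‖₊, LipschitzWith.of_dist_le_mul fun v v' => ?_⟩
  rw [Real.dist_eq, dist_eq_norm, NNReal.coe_sum, Finset.sum_mul]
  refine (abs_prod_sub_prod_le_sum _ (fun _ => abs_tent_le_one _) fun _ => abs_tent_le_one _).trans
    (Finset.sum_le_sum fun i _ => (abs_tent_sub_le _ _).trans ?_)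
  simpa [coord] using (coord i).le_opNorm (v - v')

theorem hasSum_prodTent_sum_smul_add (v : V) :
    HasSum (fun n : ι → ℤ => prodTent b (∑ i, (n i : ℝ) • b i + v)) 1 := by
  classical
  let s (i : ι) : Finset ℤ := {⌊-b.repr v i⌋, ⌊-b.repr v i⌋ + 1}
  have heq (n : ι → ℤ) :
      prodTent b (∑ i, (n i : ℝ) • b i + v) = ∏ i, tent (n i + b.repr v i) := by
    simp only [prodTent, map_add, Finsupp.add_apply, b.repr_sum_self]
  have hsum : ∑ n ∈ Fintype.piFinset s, ∏ i, tent (n i + b.repr v i) = 1 := by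
    rw [← Finset.prod_univ_sum s fun i j => tent (j + b.repr v i)]
    simp only [s, sum_tent_intCast_add, Finset.prod_const_one]
  simp only [heq]
  rw [← hsum]
  refine hasSum_sum_of_ne_finset_zero fun n hn => ?_
  obtain ⟨i, hi⟩ : ∃ i, n i ∉ s i := by simpa only [Fintype.mem_piFinset, not_forall] using hn
  exact Finset.prod_eq_zero (Finset.mem_univ i) (tent_intCast_add_eq_zero hi)

end TentPartition

section UnitWeight

theorem hasSum_comp_snd {α β : Type*} [Finite α] {f : β → ℝ} {S : ℝ} (hf : HasSum f S) :
    HasSum (fun p : α × β => f p.2) (Nat.card α * S) := by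
  have := Fintype.ofFinite α
  have hcard : HasSum (fun _ : α => (1 : ℝ)) (Nat.card α) := by
    convert hasSum_fintype (fun _ : α => (1 : ℝ))
    rw [Finset.sum_const, nsmul_one, Finset.card_univ, Nat.card_eq_fintype_card]
  simpa only [one_mul] using hcard.mul hf
    (summable_mul_of_summable_norm hcard.summable.norm hf.summable.norm)

open Module NumberField NumberField.mixedEmbedding NumberField.Units
open NumberField.Units.dirichletUnitTheorem

variable (K : Type*) [Field K] [NumberField K]

open scoped Classical in
/-- The real basis of the logarithmic space given by the logarithms of a fundamental system of
units. -/
noncomputable def logUnitBasis : Basis (Fin (rank K)) ℝ (logSpace K) :=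
  (basisUnitLattice K).ofZLatticeBasis ℝ _

open scoped Classical in
/-- The conic weight on the mixed space whose translates under the units modulo torsion form a
partition of unity. It is a Lipschitz substitute for the indicator function of a fundamental
domain. -/
noncomputable def unitWeight : mixedSpace K → ℝ := logWeight (prodTent (logUnitBasis K))

open scoped Classical in
theorem isConicWeight_unitWeight : IsConicWeight mixedEmbedding.norm (unitWeight K) :=
  isConicWeight_logWeight (prodTent_nonneg _) (prodTent_le_one _)
    (fun _ => norm_le_of_prodTent_ne_zero _) (exists_lipschitzWith_prodTent _).choose_spec

/-- Dirichlet's unit theorem, as a bijection. -/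
noncomputable def torsionProdIntEquivUnits : torsion K × (Fin (rank K) → ℤ) ≃ (𝓞 K)ˣ :=
  Equiv.ofBijective (fun p => p.1 * ∏ i, fundSystem K i ^ p.2 i) <|
    (Function.bijective_iff_existsUnique _).2 fun u => by
      simpa only [eq_comm] using exist_unique_eq_mul_prod K u

open scoped Classical in
theorem logEmbedding_torsionProdIntEquivUnits (p : torsion K × (Fin (rank K) → ℤ)) :
    logEmbedding K (Additive.ofMul (torsionProdIntEquivUnits K p)) =
      ∑ i, (p.2 i : ℝ) • logUnitBasis K i := by
  simp only [torsionProdIntEquivUnits, Equiv.ofBijective_apply, ofMul_mul, map_add, ofMul_prod,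
    map_sum, ofMul_zpow, map_zsmul]
  rw [logEmbedding_eq_zero_iff.2 p.1.2, zero_add]
  refine Finset.sum_congr rfl fun i _ => ?_
  rw [logEmbedding_fundSystem, logUnitBasis, Basis.ofZLatticeBasis_apply, Int.cast_smul_eq_zsmul]

variable {K}

open scoped Classical in
theorem hasSum_unitWeight_smul {x : mixedSpace K} (hx : mixedEmbedding.norm x ≠ 0) :
    HasSum (fun u : (𝓞 K)ˣ => unitWeight K (u • x)) (torsionOrder K) := by
  have hweight (p) : unitWeight K (torsionProdIntEquivUnits K p • x) =
      prodTent (logUnitBasis K) (∑ i, (p.2 i : ℝ) • logUnitBasis K i + logMap x) := by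
    rw [unitWeight, logWeight_of_norm_ne_zero (by rwa [norm_unit_smul]), logMap_unit_smul _ hx,
      logEmbedding_torsionProdIntEquivUnits]
  rw [← (torsionProdIntEquivUnits K).hasSum_iff]
  simp only [Function.comp_def, hweight]
  have hsum := hasSum_comp_snd (α := torsion K)
    (hasSum_prodTent_sum_smul_add (logUnitBasis K) (logMap x))
  rw [mul_one] at hsum
  exact hsum

theorem hasSum_weightedCpow_unitWeight_smul {x : mixedSpace K} (hx : 1 ≤ mixedEmbedding.norm x)
    (s : ℂ) :
    HasSum (fun u : (𝓞 K)ˣ => weightedCpow mixedEmbedding.norm (unitWeight K) s (u • x))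
      (torsionOrder K * (mixedEmbedding.norm x : ℂ) ^ (-s)) := by
  simp only [weightedCpow, norm_unit_smul, max_eq_left hx]
  exact mod_cast (Complex.hasSum_ofReal.2
    (hasSum_unitWeight_smul (one_pos.trans_le hx).ne')).mul_right _

end UnitWeight

section IdealGenerators

open Ideal Set
open scoped nonZeroDivisors

variable {R : Type*} [CommRing R] [IsDedekindDomain R]

theorem mk0_eq_inv_mk0_iff_exists_span_singleton {I J : (Ideal R)⁰} :
    ClassGroup.mk0 I = (ClassGroup.mk0 J)⁻¹ ↔ ∃ g, span {g} = (J * I : Ideal R) := by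
  rw [eq_comm, inv_eq_iff_mul_eq_one, ← map_mul, ClassGroup.mk0_eq_one_iff (J * I).2]
  exact ⟨fun ⟨g, hg⟩ => ⟨g, hg.symm⟩, fun ⟨g, hg⟩ => ⟨g, hg.symm⟩⟩

/-- The ideals `I` in the class inverse to that of `J` correspond to the elements `a ≠ 0` of `J` up
to units, through `(a) = J * I`. -/
theorem exists_gen_bijOn_units_mul (J : (Ideal R)⁰) :
    ∃ gen : {I : (Ideal R)⁰ // ClassGroup.mk0 I = (ClassGroup.mk0 J)⁻¹} → R,
      (∀ I, span {gen I} = (J * I : Ideal R)) ∧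
      BijOn (fun p : _ × Rˣ => p.2 * gen p.1) univ {a | a ∈ (J : Ideal R) ∧ a ≠ 0} := by
  choose gen hgen using fun I : {I : (Ideal R)⁰ // ClassGroup.mk0 I = (ClassGroup.mk0 J)⁻¹} =>
    mk0_eq_inv_mk0_iff_exists_span_singleton.1 I.2
  have hgen_ne_zero (I) : gen I ≠ 0 := fun h =>
    nonZeroDivisors.ne_zero (J * I.1).2 ((hgen I).symm.trans (span_singleton_eq_bot.2 h))
  refine ⟨gen, hgen, fun p _ => ⟨?_, ?_⟩, ?_, ?_⟩
  · exact mul_mem_left _ _ (dvd_span_singleton.1 ((hgen p.1).symm ▸ dvd_mul_right _ _))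
  · exact mul_ne_zero p.2.ne_zero (hgen_ne_zero _)
  · rintro ⟨I, u⟩ - ⟨I', u'⟩ - (h : u * gen I = u' * gen I')
    have hspan : span {gen I} = span {gen I'} := by
      rw [← span_singleton_mul_left_unit u.isUnit, h, span_singleton_mul_left_unit u'.isUnit]
    rw [hgen, hgen] at hspan
    obtain rfl : I = I' :=
      Subtype.ext (Subtype.ext (mul_left_cancel₀ (nonZeroDivisors.ne_zero J.2) hspan))
    exact Prod.ext rfl (Units.ext (mul_right_cancel₀ (hgen_ne_zero I) h))
  · rintro a ⟨haJ, ha⟩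
    obtain ⟨I, hI⟩ : (J : Ideal R) ∣ span {a} := dvd_span_singleton.2 haJ
    have hI_ne_zero : I ∈ (Ideal R)⁰ := by
      refine mem_nonZeroDivisors_of_ne_zero fun h => ha ?_
      rwa [h, mul_zero, zero_eq_bot, span_singleton_eq_bot] at hI
    let I' : {I : (Ideal R)⁰ // ClassGroup.mk0 I = (ClassGroup.mk0 J)⁻¹} :=
      ⟨⟨I, hI_ne_zero⟩, mk0_eq_inv_mk0_iff_exists_span_singleton.2 ⟨a, hI⟩⟩
    obtain ⟨u, hu⟩ := span_singleton_eq_span_singleton.1 ((hgen I').trans hI.symm)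
    exact ⟨(I', u), mem_univ _, (mul_comm _ _).trans hu⟩

end IdealGenerators

section ZetaContinuation

open Ideal Module NumberField NumberField.mixedEmbedding NumberField.Units Set
open scoped nonZeroDivisors

variable (K : Type*) [Field K] [NumberField K]

theorem mixedEmbedding_norm_eq_absNorm_span (a : 𝓞 K) :
    mixedEmbedding.norm (mixedEmbedding K a) = absNorm (span {a}) := by
  rw [mixedEmbedding.norm_eq_norm, absNorm_span_singleton, ← Algebra.coe_norm_int]
  simp [Nat.cast_natAbs]

variable {K}

theorem mem_span_fractionalIdealLatticeBasis_mk0 {J : (Ideal (𝓞 K))⁰} {x : mixedSpace K} :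
    x ∈ Submodule.span ℤ (range (fractionalIdealLatticeBasis K (FractionalIdeal.mk0 K J))) ↔
      ∃ a ∈ (J : Ideal (𝓞 K)), mixedEmbedding K a = x := by
  rw [mem_span_fractionalIdealLatticeBasis, FractionalIdeal.coe_mk0]
  simp only [mem_image, SetLike.mem_coe, FractionalIdeal.mem_coeIdeal]
  constructor
  · rintro ⟨_, ⟨a, ha, rfl⟩, rfl⟩
    exact ⟨a, ha, rfl⟩
  · rintro ⟨a, ha, rfl⟩
    exact ⟨a, ⟨a, ha, rfl⟩, rfl⟩

theorem hasSum_of_hasSum_idealLattice {J : (Ideal (𝓞 K))⁰} {ι : Type*} {g : ι → 𝓞 K}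
    (hg : BijOn g univ {a | a ∈ (J : Ideal (𝓞 K)) ∧ a ≠ 0}) {f : mixedSpace K → ℂ} (hf : f 0 = 0)
    {S : ℂ} (hS : HasSum (fun x : Submodule.span ℤ
      (range (fractionalIdealLatticeBasis K (FractionalIdeal.mk0 K J))) => f x) S) :
    HasSum (fun i => f (mixedEmbedding K (g i))) S := by
  let φ (i : ι) : Submodule.span ℤ
      (range (fractionalIdealLatticeBasis K (FractionalIdeal.mk0 K J))) :=
    ⟨mixedEmbedding K (g i),
      mem_span_fractionalIdealLatticeBasis_mk0.2 ⟨g i, (hg.mapsTo (mem_univ i)).1, rfl⟩⟩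
  have hφ : Function.Injective φ := fun i i' h =>
    injOn_univ.1 hg.injOn
      (RingOfIntegers.coe_injective (mixedEmbedding_injective K (congrArg Subtype.val h)))
  refine (hφ.hasSum_iff fun x hx => ?_).2 hS
  obtain ⟨a, haJ, ha⟩ := mem_span_fractionalIdealLatticeBasis_mk0.1 x.2
  obtain rfl : a = 0 := by
    by_contra ha_ne_zero
    obtain ⟨i, -, rfl⟩ := hg.surjOn ⟨haJ, ha_ne_zero⟩
    exact hx ⟨i, Subtype.ext ha⟩
  rw [← ha, RingOfIntegers.coe_eq_algebraMap, map_zero, map_zero, hf]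

theorem hasSum_absNorm_cpow_of_mk0_eq (J : (Ideal (𝓞 K))⁰) {s S : ℂ}
    (hS : HasSum (fun x : Submodule.span ℤ
      (range (fractionalIdealLatticeBasis K (FractionalIdeal.mk0 K J))) =>
        weightedCpow mixedEmbedding.norm (unitWeight K) s x) S) :
    HasSum (fun I : {I : (Ideal (𝓞 K))⁰ // ClassGroup.mk0 I = (ClassGroup.mk0 J)⁻¹} =>
        (absNorm (I : Ideal (𝓞 K)) : ℂ) ^ (-s))
      ((absNorm (J : Ideal (𝓞 K)) : ℂ) ^ s / torsionOrder K * S) := by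
  obtain ⟨gen, hgen, hbij⟩ := exists_gen_bijOn_units_mul J
  have hsum := hasSum_of_hasSum_idealLattice hbij
    (by simp [weightedCpow, unitWeight, logWeight]) hS
  have hJ : (absNorm (J : Ideal (𝓞 K)) : ℂ) ≠ 0 :=
    Nat.cast_ne_zero.2 (absNorm_ne_zero_of_nonZeroDivisors J)
  have htorsion : (torsionOrder K : ℂ) ≠ 0 := Nat.cast_ne_zero.2 (torsionOrder_ne_zero K)
  have hfiber (I) : HasSum (fun u : (𝓞 K)ˣ =>
      weightedCpow mixedEmbedding.norm (unitWeight K) s (mixedEmbedding K (u * gen I : 𝓞 K)))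
      (torsionOrder K * (absNorm (J : Ideal (𝓞 K)) : ℂ) ^ (-s) *
        (absNorm (I : Ideal (𝓞 K)) : ℂ) ^ (-s)) := by
    have hnorm : mixedEmbedding.norm (mixedEmbedding K (gen I)) =
        (absNorm (J : Ideal (𝓞 K)) * absNorm (I : Ideal (𝓞 K)) : ℕ) := by
      rw [mixedEmbedding_norm_eq_absNorm_span, hgen, map_mul]
    have hone : 1 ≤ mixedEmbedding.norm (mixedEmbedding K (gen I)) := by
      rw [hnorm]
      exact mod_cast Nat.mul_pos (absNorm_pos_of_nonZeroDivisors J)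
        (absNorm_pos_of_nonZeroDivisors I.1)
    have h := hasSum_weightedCpow_unitWeight_smul hone s
    rw [hnorm, Complex.ofReal_natCast, Nat.cast_mul, Complex.natCast_mul_natCast_cpow,
      ← mul_assoc] at h
    simpa only [unitSMul_smul, RingOfIntegers.coe_eq_algebraMap, map_mul] using h
  have hcancel (z : ℂ) : (absNorm (J : Ideal (𝓞 K)) : ℂ) ^ s / torsionOrder K *
      (torsionOrder K * (absNorm (J : Ideal (𝓞 K)) : ℂ) ^ (-s) * z) = z := by
    have hcpow : (absNorm (J : Ideal (𝓞 K)) : ℂ) ^ s ≠ 0 := Complex.cpow_ne_zero_iff.2 (.inl hJ)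
    rw [Complex.cpow_neg]
    field_simp
  simpa only [hcancel] using (hsum.prod_fiberwise hfiber).mul_left
    ((absNorm (J : Ideal (𝓞 K)) : ℂ) ^ s / torsionOrder K)

variable (K)

theorem exists_differentiableOn_mul_tsum_absNorm_cpow :
    ∃ Φ : ℂ → ℂ, DifferentiableOn ℂ Φ {s | 1 - 1 / (finrank ℚ K : ℝ) < s.re} ∧
      ∀ s : ℂ, 1 < s.re →
        Summable (fun I : (Ideal (𝓞 K))⁰ => (absNorm (I : Ideal (𝓞 K)) : ℂ) ^ (-s)) ∧
        (s - 1) * ∑' I : (Ideal (𝓞 K))⁰, (absNorm (I : Ideal (𝓞 K)) : ℂ) ^ (-s) = Φ s := by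
  classical
  choose J hJ using fun C : ClassGroup (𝓞 K) => ClassGroup.mk0_surjective C⁻¹
  have hlattice (C : ClassGroup (𝓞 K)) :=
    (isConicWeight_unitWeight K).exists_differentiableOn_mul_tsum
      (fractionalIdealLatticeBasis K (FractionalIdeal.mk0 K (J C)))
  rw [mixedEmbedding.finrank] at hlattice
  choose Φ hΦ hsum using hlattice
  refine ⟨fun s => ∑ C, (absNorm (J C : Ideal (𝓞 K)) : ℂ) ^ s / torsionOrder K * Φ C s, ?_,
    fun s hs => ?_⟩
  · refine DifferentiableOn.fun_sum fun C _ => (DifferentiableOn.div_const ?_ _).mul (hΦ C)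
    exact (differentiable_id.const_cpow (.inl (Nat.cast_ne_zero.2
      (absNorm_ne_zero_of_nonZeroDivisors (J C))))).differentiableOn
  · have hclass (C : ClassGroup (𝓞 K)) :=
      hasSum_absNorm_cpow_of_mk0_eq (J C) (hsum C s hs).1.hasSum
    have htotal := hasSum_sum (s := Finset.univ)
      fun C _ => hasSum_subtype_iff_indicator
        (s := {I | ClassGroup.mk0 I = (ClassGroup.mk0 (J C))⁻¹})
        (f := fun I : (Ideal (𝓞 K))⁰ => (absNorm (I : Ideal (𝓞 K)) : ℂ) ^ (-s)) |>.1 (hclass C)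
    simp only [indicator_apply, mem_ofPred_eq, hJ, inv_inv, Finset.sum_ite_eq, Finset.mem_univ,
      if_true] at htotal
    refine ⟨htotal.summable, ?_⟩
    rw [htotal.tsum_eq, Finset.mul_sum]
    refine Finset.sum_congr rfl fun C _ => ?_
    rw [← (hsum C s hs).2]
    ring

end ZetaContinuation

section NormFiber

open Set

theorem LSeriesHasSum_tsum_fiber {ι : Type*} {N : ι → ℕ} (hN : ∀ i, N i ≠ 0) {f : ι → ℂ} {s A : ℂ}
    (h : HasSum (fun i => f i * (N i : ℂ) ^ (-s)) A) :
    LSeriesHasSum (fun n => ∑' i : N ⁻¹' {n}, f i) s A := by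
  refine (h.tsum_fiberwise N).congr_fun fun n => ?_
  rcases eq_or_ne n 0 with rfl | hn
  · have : IsEmpty (N ⁻¹' {0}) := ⟨fun i => hN i i.2⟩
    rw [LSeries.term_zero, tsum_empty]
  · rw [LSeries.term_of_ne_zero hn, div_eq_mul_inv, ← Complex.cpow_neg, ← tsum_mul_right]
    refine tsum_congr fun ⟨i, hi⟩ => ?_
    rw [hi]

theorem hasSum_mul_of_forall_hasSum_dvd {M ι : Type*} [Monoid M] [IsLeftCancelMul M] {g : ι → M}
    {u : ι → ℂ} {v w : M → ℂ} (hv : ∀ a, HasSum (fun i : {i // g i ∣ a} => u i) (v a))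
    (hw : ∀ a b, w (a * b) = w a * w b) {A B : ℂ} (hA : HasSum (fun i => u i * w (g i)) A)
    (hB : HasSum w B) : HasSum (fun a => v a * w a) (A * B) := by
  have hsummable := summable_mul_of_summable_norm hA.summable.norm hB.summable.norm
  refine ((hA.mul hB hsummable).tsum_fiberwise fun y => g y.1 * y.2).congr_fun fun a => ?_
  let e : (fun y : ι × M => g y.1 * y.2) ⁻¹' {a} → {i // g i ∣ a} :=
    fun y => ⟨y.1.1, y.1.2, y.2.symm⟩
  have he : e.Bijective := by
    refine ⟨?_, fun ⟨i, c, hc⟩ => ⟨⟨(i, c), hc.symm⟩, rfl⟩⟩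
    rintro ⟨⟨i, c⟩, h⟩ ⟨⟨j, d⟩, h'⟩ hij
    obtain rfl : i = j := congrArg Subtype.val hij
    exact Subtype.ext (Prod.ext rfl (mul_left_cancel (Eq.trans h (Eq.symm h'))))
  rw [← (((Equiv.ofBijective e he).hasSum_iff.2 (hv a)).mul_right (w a)).tsum_eq]
  refine tsum_congr fun ⟨⟨i, c⟩, (h : g i * c = a)⟩ => ?_
  change u i * w a = u i * w (g i) * w c
  rw [← h, hw, mul_assoc]

end NormFiber

section PrimeIdealPower

open Ideal NumberField UniqueFactorizationMonoid
open scoped nonZeroDivisors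

variable (K : Type*) [Field K]

/-- The powers of the nonzero prime ideals of `𝓞 K`: the pair `⟨P, k⟩` stands for `P ^ (k + 1)`. -/
abbrev PrimeIdealPower : Type _ := {x : (_ : Ideal (𝓞 K)) × ℕ // Prime x.1}

variable {K}

namespace PrimeIdealPower

/-- The ideal `P ^ (k + 1)` that the pair `⟨P, k⟩` stands for. -/
def toIdeal (x : PrimeIdealPower K) : (Ideal (𝓞 K))⁰ :=
  ⟨x.1.1 ^ (x.1.2 + 1), mem_nonZeroDivisors_of_ne_zero (pow_ne_zero _ x.2.ne_zero)⟩

theorem toIdeal_dvd_iff {x : PrimeIdealPower K} {a : (Ideal (𝓞 K))⁰} :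
    x.toIdeal ∣ a ↔ x.1.1 ^ (x.1.2 + 1) ∣ (a : Ideal (𝓞 K)) := by
  refine ⟨fun ⟨c, hc⟩ => ⟨c, congrArg Subtype.val hc⟩, fun ⟨c, hc⟩ => ?_⟩
  have hc_ne_zero : c ≠ 0 := right_ne_zero_of_mul (hc ▸ nonZeroDivisors.coe_ne_zero a)
  exact ⟨⟨c, mem_nonZeroDivisors_of_ne_zero hc_ne_zero⟩, Subtype.ext hc⟩

variable [NumberField K]

theorem toIdeal_injective : Function.Injective (toIdeal : PrimeIdealPower K → _) := by
  rintro ⟨⟨P, k⟩, hP : Prime P⟩ ⟨⟨Q, l⟩, hQ : Prime Q⟩ h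
  replace h : P ^ (k + 1) = Q ^ (l + 1) := congrArg Subtype.val h
  obtain rfl : P = Q := associated_iff_eq.1 <| hP.associated_of_dvd hQ <|
    hP.dvd_of_dvd_pow (h ▸ dvd_pow_self P k.succ_ne_zero)
  obtain rfl : k = l := Nat.succ_injective (pow_injective_of_not_isUnit hP.not_isUnit hP.ne_zero h)
  rfl

theorem absNorm_toIdeal (x : PrimeIdealPower K) :
    absNorm (x.toIdeal : Ideal (𝓞 K)) = absNorm x.1.1 ^ (x.1.2 + 1) :=
  map_pow _ _ _

theorem absNorm_ideal_ne_zero (x : PrimeIdealPower K) : absNorm x.1.1 ≠ 0 :=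
  absNorm_eq_zero_iff.not.2 x.2.ne_zero

end PrimeIdealPower

variable [NumberField K]

theorem sum_count_normalizedFactors_mul_log_absNorm [DecidableEq (Ideal (𝓞 K))] {a : Ideal (𝓞 K)}
    (ha : a ≠ 0) :
    ∑ P ∈ (normalizedFactors a).toFinset, (normalizedFactors a).count P * Real.log (absNorm P) =
      Real.log (absNorm a) := by
  have hne_zero : ∀ x ∈ ((normalizedFactors a).map absNorm).map ((↑) : ℕ → ℝ), x ≠ 0 := by
    simp only [Multiset.map_map, Multiset.mem_map]
    rintro _ ⟨P, hP, rfl⟩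
    exact Nat.cast_ne_zero.2 (absNorm_eq_zero_iff.not.2 (prime_of_normalized_factor P hP).ne_zero)
  conv_rhs => rw [← Ideal.prod_normalizedFactors_eq_self ha, map_multiset_prod,
    Nat.cast_multiset_prod, Real.log_multiset_prod hne_zero]
  simp only [Multiset.map_map, Finset.sum_multiset_map_count, nsmul_eq_mul, Function.comp_apply]

theorem lt_count_normalizedFactors_iff [DecidableEq (Ideal (𝓞 K))] {P a : Ideal (𝓞 K)}
    (hP : Prime P) (ha : a ≠ 0) {k : ℕ} : k < (normalizedFactors a).count P ↔ P ^ (k + 1) ∣ a := by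
  rw [pow_dvd_iff_le_emultiplicity, emultiplicity_eq_count_normalizedFactors hP.irreducible ha,
    normalize_eq, Nat.cast_le, Nat.succ_le_iff]

theorem hasSum_log_absNorm_dvd (a : (Ideal (𝓞 K))⁰) :
    HasSum (fun x : {x : PrimeIdealPower K // x.toIdeal ∣ a} => Real.log (absNorm x.1.1.1))
      (Real.log (absNorm (a : Ideal (𝓞 K)))) := by
  classical
  have ha := nonZeroDivisors.coe_ne_zero a
  let T := (normalizedFactors (a : Ideal (𝓞 K))).toFinset.sigma
    fun P => Finset.range ((normalizedFactors (a : Ideal (𝓞 K))).count P)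
  have hmem {P : Ideal (𝓞 K)} {k : ℕ} : ⟨P, k⟩ ∈ T ↔ Prime P ∧ P ^ (k + 1) ∣ a := by
    simp only [T, Finset.mem_sigma, Multiset.mem_toFinset, Finset.mem_range]
    constructor
    · rintro ⟨hP, hk⟩
      have hP_prime := prime_of_normalized_factor P hP
      exact ⟨hP_prime, (lt_count_normalizedFactors_iff hP_prime ha).1 hk⟩
    · rintro ⟨hP, hdvd⟩
      have hk := (lt_count_normalizedFactors_iff hP ha).2 hdvd
      exact ⟨Multiset.count_pos.1 (Nat.zero_lt_of_lt hk), hk⟩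
  let e : {x : PrimeIdealPower K // x.toIdeal ∣ a} → T :=
    fun x => ⟨x.1.1, hmem.2 ⟨x.1.2, PrimeIdealPower.toIdeal_dvd_iff.1 x.2⟩⟩
  have he : e.Bijective := by
    refine ⟨fun x y h => Subtype.ext (Subtype.ext (congrArg (fun z : T => z.1) h)), fun y => ?_⟩
    obtain ⟨hP, hdvd⟩ := hmem.1 y.2
    exact ⟨⟨⟨y.1, hP⟩, PrimeIdealPower.toIdeal_dvd_iff.2 hdvd⟩, rfl⟩
  have hsum := (Equiv.ofBijective e he).hasSum_iff.2
    (T.hasSum fun x => Real.log (absNorm x.1))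
  simp only [T, Finset.sum_sigma, Finset.sum_const, Finset.card_range, nsmul_eq_mul,
    sum_count_normalizedFactors_mul_log_absNorm ha] at hsum
  exact hsum

end PrimeIdealPower

section DedekindCoefficients

open Filter Ideal NumberField Topology
open scoped nonZeroDivisors

variable (K : Type*) [Field K] [NumberField K]

/-- The coefficients of the Dedekind zeta function of `K`: the number of ideals of norm `n`. -/
noncomputable def dedekindCoeff (n : ℕ) : ℂ :=
  Nat.card {I : Ideal (𝓞 K) // absNorm I = n}

/-- The coefficients of `-ζ_K' / ζ_K`: the sum of `log (absNorm P)` over the powers of norm `n` of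
prime ideals `P`. -/
noncomputable def mangoldtCoeff (n : ℕ) : ℝ :=
  ∑' x : (fun x : PrimeIdealPower K => absNorm (x.toIdeal : Ideal (𝓞 K))) ⁻¹' {n},
    Real.log (absNorm x.1.1.1)

theorem mangoldtCoeff_nonneg (n : ℕ) : 0 ≤ mangoldtCoeff K n :=
  tsum_nonneg fun _ => Real.log_natCast_nonneg _

variable {K}

theorem LSeriesHasSum_mul_dedekindCoeff {c : ℕ → ℂ} {s S : ℂ}
    (h : HasSum (fun I : (Ideal (𝓞 K))⁰ =>
      c (absNorm (I : Ideal (𝓞 K))) * (absNorm (I : Ideal (𝓞 K)) : ℂ) ^ (-s)) S) :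
    LSeriesHasSum (fun n => c n * dedekindCoeff K n) s S := by
  refine (LSeriesHasSum_congr s _ fun {n} hn => ?_).1
    (LSeriesHasSum_tsum_fiber (N := fun I : (Ideal (𝓞 K))⁰ => absNorm (I : Ideal (𝓞 K)))
      (f := fun I => c (absNorm (I : Ideal (𝓞 K))))
      absNorm_ne_zero_of_nonZeroDivisors h)
  let e : (fun I : (Ideal (𝓞 K))⁰ => absNorm (I : Ideal (𝓞 K))) ⁻¹' {n} ≃
      {I : Ideal (𝓞 K) // absNorm I = n} :=
    { toFun := fun I => ⟨I.1, I.2⟩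
      invFun := fun I => ⟨⟨I, mem_nonZeroDivisors_of_ne_zero
        (absNorm_eq_zero_iff.not.1 (I.2.trans_ne hn))⟩, I.2⟩
      left_inv := fun _ => rfl
      right_inv := fun _ => rfl }
  rw [dedekindCoeff, tsum_congr fun I => congrArg c I.2, tsum_const, Nat.card_congr e,
    nsmul_eq_mul, mul_comm]

theorem LSeriesHasSum_mangoldtCoeff {s A : ℂ}
    (h : HasSum (fun x : PrimeIdealPower K => (Real.log (absNorm x.1.1) : ℂ) *
      (absNorm (x.toIdeal : Ideal (𝓞 K)) : ℂ) ^ (-s)) A) :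
    LSeriesHasSum (fun n => (mangoldtCoeff K n : ℂ)) s A := by
  simpa only [mangoldtCoeff, Complex.ofReal_tsum] using
    LSeriesHasSum_tsum_fiber
      (N := fun x : PrimeIdealPower K => absNorm (x.toIdeal : Ideal (𝓞 K)))
      (f := fun x => (Real.log (absNorm x.1.1) : ℂ))
      (fun x => absNorm_ne_zero_of_nonZeroDivisors x.toIdeal) h

theorem summable_log_absNorm_mul_rpow {σ : ℝ} (hσ : 1 < σ) :
    Summable (fun I : (Ideal (𝓞 K))⁰ =>
      Real.log (absNorm (I : Ideal (𝓞 K))) * (absNorm (I : Ideal (𝓞 K)) : ℝ) ^ (-σ)) := by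
  obtain ⟨ε, hε, hεσ⟩ : ∃ ε > 0, 1 < σ - ε := ⟨(σ - 1) / 2, by linarith, by linarith⟩
  obtain ⟨_, -, hsum⟩ := exists_differentiableOn_mul_tsum_absNorm_cpow K
  refine Summable.of_nonneg_of_le (fun I => ?_) (fun I => ?_)
    ((hsum (σ - ε : ℝ) hεσ).1.norm.div_const ε)
  · exact mul_nonneg (Real.log_natCast_nonneg _) (by positivity)
  · have hpos := absNorm_pos_of_nonZeroDivisors I
    calc Real.log (absNorm (I : Ideal (𝓞 K))) * (absNorm (I : Ideal (𝓞 K)) : ℝ) ^ (-σ)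
        ≤ (absNorm (I : Ideal (𝓞 K)) : ℝ) ^ ε / ε * (absNorm (I : Ideal (𝓞 K)) : ℝ) ^ (-σ) := by
          gcongr
          exact Real.log_le_rpow_div (by positivity) hε
      _ = ‖(absNorm (I : Ideal (𝓞 K)) : ℂ) ^ (-((σ - ε : ℝ) : ℂ))‖ / ε := by
          rw [Complex.norm_natCast_cpow_of_pos hpos, Complex.neg_re, Complex.ofReal_re,
            div_mul_eq_mul_div, ← Real.rpow_add (by positivity)]
          ring_nf

theorem summable_log_absNorm_mul_cpow_toIdeal {s : ℂ} (hs : 1 < s.re) :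
    Summable (fun x : PrimeIdealPower K => (Real.log (absNorm x.1.1) : ℂ) *
      (absNorm (x.toIdeal : Ideal (𝓞 K)) : ℂ) ^ (-s)) := by
  refine ((summable_log_absNorm_mul_rpow hs).comp_injective
    PrimeIdealPower.toIdeal_injective).of_norm_bounded fun x => ?_
  rw [Function.comp_apply, norm_mul, Complex.norm_natCast_cpow_of_pos
    (absNorm_pos_of_nonZeroDivisors _), Complex.norm_real, Complex.neg_re,
    Real.norm_of_nonneg (Real.log_natCast_nonneg _)]
  have hpos : 0 < absNorm x.1.1 := Nat.pos_of_ne_zero x.absNorm_ideal_ne_zero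
  have hle : absNorm x.1.1 ≤ absNorm (x.toIdeal : Ideal (𝓞 K)) :=
    x.absNorm_toIdeal ▸ Nat.le_self_pow x.1.2.succ_ne_zero _
  gcongr

theorem LSeriesHasSum_dedekindCoeff {s : ℂ} (hs : 1 < s.re) :
    LSeriesHasSum (dedekindCoeff K) s
      (∑' I : (Ideal (𝓞 K))⁰, (absNorm (I : Ideal (𝓞 K)) : ℂ) ^ (-s)) := by
  obtain ⟨_, -, hsum⟩ := exists_differentiableOn_mul_tsum_absNorm_cpow K
  have h := LSeriesHasSum_mul_dedekindCoeff (K := K) (c := fun _ => 1) (s := s)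
    ((hsum s hs).1.hasSum.congr_fun fun _ => one_mul _)
  simpa only [one_mul] using h

theorem LSeriesSummable_mangoldtCoeff {s : ℂ} (hs : 1 < s.re) :
    LSeriesSummable (fun n => (mangoldtCoeff K n : ℂ)) s :=
  (LSeriesHasSum_mangoldtCoeff (summable_log_absNorm_mul_cpow_toIdeal hs).hasSum).LSeriesSummable

theorem LSeries_mangoldtCoeff_mul_dedekindCoeff {s : ℂ} (hs : 1 < s.re) :
    LSeries (fun n => (mangoldtCoeff K n : ℂ)) s * LSeries (dedekindCoeff K) s =
      LSeries (LSeries.logMul (dedekindCoeff K)) s := by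
  obtain ⟨_, -, hsum⟩ := exists_differentiableOn_mul_tsum_absNorm_cpow K
  have hmangoldt := (summable_log_absNorm_mul_cpow_toIdeal (K := K) hs).hasSum
  have hcpow_mul (I J : (Ideal (𝓞 K))⁰) : (absNorm (↑(I * J) : Ideal (𝓞 K)) : ℂ) ^ (-s) =
      (absNorm (I : Ideal (𝓞 K)) : ℂ) ^ (-s) * (absNorm (J : Ideal (𝓞 K)) : ℂ) ^ (-s) := by
    rw [Submonoid.coe_mul, map_mul, Nat.cast_mul, Complex.natCast_mul_natCast_cpow]
  have hlog := hasSum_mul_of_forall_hasSum_dvd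
    (u := fun x : PrimeIdealPower K => (Real.log (absNorm x.1.1) : ℂ))
    (w := fun I : (Ideal (𝓞 K))⁰ => (absNorm (I : Ideal (𝓞 K)) : ℂ) ^ (-s))
    (fun a => Complex.hasSum_ofReal.2 (hasSum_log_absNorm_dvd a)) hcpow_mul
    hmangoldt (hsum s hs).1.hasSum
  have h := LSeriesHasSum_mul_dedekindCoeff (c := fun n => Complex.log n)
    (hlog.congr_fun fun I => by rw [Complex.natCast_log])
  rw [(LSeriesHasSum_mangoldtCoeff hmangoldt).LSeries_eq,
    (LSeriesHasSum_dedekindCoeff hs).LSeries_eq]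
  exact h.LSeries_eq.symm

variable (K)

theorem exists_differentiableOn_mul_LSeries_dedekindCoeff :
    ∃ Z : ℂ → ℂ, DifferentiableOn ℂ Z {s | 1 - 1 / (Module.finrank ℚ K : ℝ) < s.re} ∧ Z 1 ≠ 0 ∧
      ∀ s : ℂ, 1 < s.re → (s - 1) * LSeries (dedekindCoeff K) s = Z s := by
  obtain ⟨Z, hZ, hsum⟩ := exists_differentiableOn_mul_tsum_absNorm_cpow K
  have hmul (s : ℂ) (hs : 1 < s.re) : (s - 1) * LSeries (dedekindCoeff K) s = Z s := by
    rw [(LSeriesHasSum_dedekindCoeff hs).LSeries_eq, (hsum s hs).2]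
  refine ⟨Z, hZ, ?_, hmul⟩
  have hmem : {s : ℂ | 1 - 1 / (Module.finrank ℚ K : ℝ) < s.re} ∈ 𝓝 1 := by
    refine (isOpen_lt continuous_const Complex.continuous_re).mem_nhds ?_
    simp [Module.finrank_pos]
  have hlim : Tendsto (fun s : ℝ => Z s) (𝓝[>] 1) (𝓝 (Z 1)) :=
    ((hZ.differentiableAt hmem).continuousAt.tendsto.comp
      (Complex.continuous_ofReal.tendsto' 1 1 Complex.ofReal_one)).mono_left nhdsWithin_le_nhds
  have hresidue := (tendsto_sub_one_mul_dedekindZeta_nhdsGT K).congr'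
    (eventually_nhdsWithin_of_forall fun (s : ℝ) hs => hmul s hs)
  rw [tendsto_nhds_unique hlim hresidue]
  exact Complex.ofReal_ne_zero.2 (dedekindZeta_residue_ne_zero K)

end DedekindCoefficients

/-! ### The prime ideal theorem -/

section LogDerivResidue

open Filter Set Topology

theorem tendsto_sub_mul_logDeriv_of_analyticAt {Z : ℂ → ℂ} {s₀ : ℂ} (hZ : AnalyticAt ℂ Z s₀)
    (hfinite : analyticOrderAt Z s₀ ≠ ⊤) :
    Tendsto (fun z => (z - s₀) * logDeriv Z z) (𝓝[≠] s₀) (𝓝 (analyticOrderNatAt Z s₀)) := by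
  obtain ⟨g, hg, hg₀, hfactor⟩ := hZ.analyticOrderAt_ne_top.1 hfinite
  simp only [smul_eq_mul] at hfactor
  have hlim : Tendsto (fun z => (analyticOrderNatAt Z s₀ : ℂ) + (z - s₀) * (deriv g z / g z))
      (𝓝[≠] s₀) (𝓝 (analyticOrderNatAt Z s₀)) := by
    have hcont : ContinuousAt
        (fun z => (analyticOrderNatAt Z s₀ : ℂ) + (z - s₀) * (deriv g z / g z)) s₀ := by
      have hderiv := hg.deriv.continuousAt
      have := hg.continuousAt
      fun_prop (disch := assumption)
    simpa using hcont.tendsto.mono_left nhdsWithin_le_nhds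
  refine hlim.congr' ?_
  filter_upwards [hfactor.eventually_nhds.filter_mono nhdsWithin_le_nhds,
    (hg.continuousAt.eventually_ne hg₀).filter_mono nhdsWithin_le_nhds,
    hg.eventually_analyticAt.filter_mono nhdsWithin_le_nhds, self_mem_nhdsWithin]
    with z hfactor_z hgz hanalytic hz
  have hsub : z - s₀ ≠ 0 := sub_ne_zero.2 hz
  rw [(logDeriv_congr_nhds hfactor_z).self_of_nhds,
    logDeriv_mul (f := fun w => (w - s₀) ^ analyticOrderNatAt Z s₀) z (pow_ne_zero _ hsub) hgz
      (by fun_prop) hanalytic.differentiableAt,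
    logDeriv_fun_pow (by fun_prop), logDeriv_apply, logDeriv_apply, deriv_sub_const_fun, deriv_id'']
  field_simp

theorem tendsto_add_ofReal_nhdsGT (s₀ : ℂ) :
    Tendsto (fun ε : ℝ => s₀ + ε) (𝓝[>] 0) (𝓝[≠] s₀) := by
  refine tendsto_nhdsWithin_iff.2 ⟨?_, eventually_nhdsWithin_of_forall fun ε hε => ?_⟩
  · exact ((by fun_prop : Continuous fun ε : ℝ => s₀ + ε).tendsto' 0 s₀ (by simp)).mono_left
      nhdsWithin_le_nhds
  · simpa using (mem_Ioi.1 hε).ne'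

theorem tendsto_div_add_sub_one (s₀ : ℂ) :
    Tendsto (fun ε : ℝ => (ε : ℂ) / (s₀ + ε - 1)) (𝓝[>] 0) (𝓝 (if s₀ = 1 then 1 else 0)) := by
  split_ifs with h
  · subst h
    refine tendsto_const_nhds.congr' (eventually_nhdsWithin_of_forall fun ε hε => ?_)
    simp only [add_sub_cancel_left, div_self (Complex.ofReal_ne_zero.2 (mem_Ioi.1 hε).ne')]
  · have hne : s₀ + ((0 : ℝ) : ℂ) - 1 ≠ 0 := by simpa [sub_eq_zero] using h
    have hcont : ContinuousAt (fun ε : ℝ => (ε : ℂ) / (s₀ + ε - 1)) 0 := by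
      fun_prop (disch := assumption)
    simpa using hcont.tendsto.mono_left nhdsWithin_le_nhds

theorem sub_one_ne_zero_of_one_lt_re {s : ℂ} (hs : 1 < s.re) : s - 1 ≠ 0 := by
  rintro h
  simp [sub_eq_zero.1 h] at hs

theorem tendsto_mul_of_sub_one_mul_mul_eq {Z F : ℂ → ℂ} {s₀ : ℂ} (hs₀ : 1 ≤ s₀.re)
    (hZ : AnalyticAt ℂ Z s₀) (hfinite : analyticOrderAt Z s₀ ≠ ⊤)
    (hF : ∀ s : ℂ, 1 < s.re → (s - 1) * F s * Z s = Z s - (s - 1) * deriv Z s) :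
    Tendsto (fun ε : ℝ => ε * F (s₀ + ε)) (𝓝[>] 0)
      (𝓝 ((if s₀ = 1 then 1 else 0) - analyticOrderNatAt Z s₀)) := by
  have hne : ∀ᶠ z in 𝓝[≠] s₀, Z z ≠ 0 :=
    hZ.eventually_eq_zero_or_eventually_ne_zero.resolve_left
      fun h => hfinite (analyticOrderAt_eq_top.2 h)
  refine ((tendsto_div_add_sub_one s₀).sub
    ((tendsto_sub_mul_logDeriv_of_analyticAt hZ hfinite).comp
      (tendsto_add_ofReal_nhdsGT s₀))).congr' ?_
  filter_upwards [self_mem_nhdsWithin, (tendsto_add_ofReal_nhdsGT s₀).eventually hne]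
    with ε hε hz
  have hre : 1 < (s₀ + ε).re := by
    rw [Complex.add_re, Complex.ofReal_re]
    linarith [mem_Ioi.1 hε]
  have hsub := sub_one_ne_zero_of_one_lt_re hre
  rw [Function.comp_apply, logDeriv_apply, add_sub_cancel_left]
  field_simp
  linear_combination -(ε : ℂ) * hF _ hre

end LogDerivResidue

section NonVanishing

open Filter Set Topology

theorem LSeries_term_ofReal_re (v : ℕ → ℝ) (σ t : ℝ) {n : ℕ} (hn : n ≠ 0) :
    (LSeries.term (fun n => (v n : ℂ)) (σ + t * Complex.I) n).re =
      v n * (n : ℝ) ^ (-σ) * Real.cos (t * Real.log n) := by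
  have hn' : (n : ℂ) ≠ 0 := Nat.cast_ne_zero.2 hn
  have hterm : LSeries.term (fun n => (v n : ℂ)) (σ + t * Complex.I) n =
      ((v n * (n : ℝ) ^ (-σ) : ℝ) : ℂ) * Complex.exp ((-(t * Real.log n) : ℝ) * Complex.I) := by
    rw [LSeries.term_of_ne_zero hn, div_eq_mul_inv, ← Complex.cpow_neg, neg_add,
      Complex.cpow_add _ _ hn', Complex.ofReal_mul, Complex.ofReal_cpow n.cast_nonneg, mul_assoc,
      Complex.cpow_def_of_ne_zero hn' (-(t * Complex.I)), ← Complex.natCast_log]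
    push_cast
    ring_nf
  rw [hterm, Complex.re_ofReal_mul, Complex.exp_ofReal_mul_I_re, Real.cos_neg]

-- Termwise this is `3 + 4 cos θ + cos 2θ = 2 (1 + cos θ) ^ 2 ≥ 0` with `θ = t log n`.
theorem three_four_one_LSeries_nonneg {v : ℕ → ℝ} (hv : ∀ n, 0 ≤ v n) {σ : ℝ} (t : ℝ)
    (hsum : ∀ s : ℂ, s.re = σ → LSeriesSummable (fun n => (v n : ℂ)) s) :
    0 ≤ (3 * LSeries (fun n => (v n : ℂ)) σ + 4 * LSeries (fun n => (v n : ℂ)) (σ + t * Complex.I)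
      + LSeries (fun n => (v n : ℂ)) (σ + (2 * t : ℝ) * Complex.I)).re := by
  have hre (u : ℝ) := Complex.hasSum_re
    (hsum (σ + u * Complex.I) (by simp)).LSeriesHasSum
  have h₀ := hre 0
  rw [Complex.ofReal_zero, zero_mul, add_zero] at h₀
  have htotal := ((h₀.mul_left 3).add ((hre t).mul_left 4)).add (hre (2 * t))
  convert! htotal.nonneg fun n => ?_ using 1
  · simp
  rcases eq_or_ne n 0 with rfl | hn
  · simp
  have hterm₀ := LSeries_term_ofReal_re v σ 0 hn
  rw [Complex.ofReal_zero, zero_mul, add_zero] at hterm₀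
  rw [hterm₀, LSeries_term_ofReal_re v σ t hn, LSeries_term_ofReal_re v σ (2 * t) hn, zero_mul,
    Real.cos_zero, mul_assoc 2 t, Real.cos_two_mul]
  have hweight : 0 ≤ v n * (n : ℝ) ^ (-σ) := mul_nonneg (hv n) (by positivity)
  nlinarith [mul_nonneg hweight (sq_nonneg (Real.cos (t * Real.log n) + 1))]

theorem abscissaOfAbsConv_lt_of_one_lt_re {f : ℕ → ℂ}
    (hf : ∀ s : ℂ, 1 < s.re → LSeriesSummable f s) {s : ℂ} (hs : 1 < s.re) :
    LSeries.abscissaOfAbsConv f < s.re :=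
  (LSeries.abscissaOfAbsConv_le_of_forall_lt_LSeriesSummable (x := 1)
    fun y hy => hf y (by simpa using hy)).trans_lt (by exact_mod_cast hs)

variable {v : ℕ → ℝ} {Z : ℂ → ℂ}

theorem analyticOrderAt_ne_top_of_one_le_re (hZ : AnalyticOnNhd ℂ Z {s | 1 ≤ s.re})
    (hZ₁ : Z 1 ≠ 0) {s : ℂ} (hs : 1 ≤ s.re) : analyticOrderAt Z s ≠ ⊤ := by
  refine hZ.analyticOrderAt_ne_top_of_isPreconnected (convex_halfSpace_re_ge 1).isPreconnected
    (x := 1) (by simp) hs ?_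
  rw [(hZ 1 (by simp)).analyticOrderAt_eq_zero.2 hZ₁]
  exact ENat.zero_ne_top

theorem analyticOrderNatAt_eq_zero_iff (hZ : AnalyticOnNhd ℂ Z {s | 1 ≤ s.re})
    (hZ₁ : Z 1 ≠ 0) {s : ℂ} (hs : 1 ≤ s.re) : analyticOrderNatAt Z s = 0 ↔ Z s ≠ 0 := by
  rw [← (hZ s hs).analyticOrderAt_eq_zero,
    ← Nat.cast_analyticOrderNatAt (analyticOrderAt_ne_top_of_one_le_re hZ hZ₁ hs), Nat.cast_eq_zero]

theorem ne_zero_of_LSeries_logDeriv_of_one_lt_re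
    (hZ : AnalyticOnNhd ℂ Z {s | 1 ≤ s.re}) (hZ₁ : Z 1 ≠ 0)
    (hsum : ∀ s : ℂ, 1 < s.re → LSeriesSummable (fun n => (v n : ℂ)) s)
    (hlog : ∀ s : ℂ, 1 < s.re →
      (s - 1) * LSeries (fun n => (v n : ℂ)) s * Z s = Z s - (s - 1) * deriv Z s)
    {s : ℂ} (hs : 1 < s.re) : Z s ≠ 0 := by
  have hpole := tendsto_mul_of_sub_one_mul_mul_eq hs.le (hZ s hs.le)
    (analyticOrderAt_ne_top_of_one_le_re hZ hZ₁ hs.le) hlog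
  have hregular : Tendsto (fun ε : ℝ => (ε : ℂ) * LSeries (fun n => (v n : ℂ)) (s + ε)) (𝓝[>] 0)
      (𝓝 0) := by
    have hcont := (LSeries_hasDerivAt
      (abscissaOfAbsConv_lt_of_one_lt_re hsum hs)).continuousAt
    simpa using ((Complex.continuous_ofReal.tendsto' 0 0 Complex.ofReal_zero).mono_left
      nhdsWithin_le_nhds).mul
      (hcont.tendsto.comp ((tendsto_add_ofReal_nhdsGT s).mono_right nhdsWithin_le_nhds))
  have horder := tendsto_nhds_unique hpole hregular
  rw [if_neg (sub_ne_zero.1 (sub_one_ne_zero_of_one_lt_re hs)), zero_sub, neg_eq_zero,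
    Nat.cast_eq_zero] at horder
  exact (analyticOrderNatAt_eq_zero_iff hZ hZ₁ hs.le).1 horder

theorem ne_zero_of_LSeries_logDeriv_of_re_eq_one (hv : ∀ n, 0 ≤ v n)
    (hZ : AnalyticOnNhd ℂ Z {s | 1 ≤ s.re})
    (hZ₁ : Z 1 ≠ 0) (hsum : ∀ s : ℂ, 1 < s.re → LSeriesSummable (fun n => (v n : ℂ)) s)
    (hlog : ∀ s : ℂ, 1 < s.re →
      (s - 1) * LSeries (fun n => (v n : ℂ)) s * Z s = Z s - (s - 1) * deriv Z s)
    {t : ℝ} (ht : t ≠ 0) : Z (1 + t * Complex.I) ≠ 0 := by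
  have hlim (u : ℝ) := tendsto_mul_of_sub_one_mul_mul_eq (s₀ := 1 + u * Complex.I) (by simp)
    (hZ _ (by simp)) (analyticOrderAt_ne_top_of_one_le_re hZ hZ₁ (by simp)) hlog
  have horder₁ : analyticOrderNatAt Z 1 = 0 :=
    (analyticOrderNatAt_eq_zero_iff hZ hZ₁ (by simp)).2 hZ₁
  have hlim₀ := hlim 0
  simp only [Complex.ofReal_zero, zero_mul, add_zero, ite_true, horder₁, Nat.cast_zero,
    sub_zero] at hlim₀
  have hne (u : ℝ) (hu : u ≠ 0) : 1 + u * Complex.I ≠ 1 := by simpa using hu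
  have hcomb := (Complex.continuous_re.tendsto _).comp
    (((hlim₀.const_mul 3).add ((hlim t).const_mul 4)).add (hlim (2 * t)))
  rw [if_neg (hne t ht), if_neg (hne (2 * t) (mul_ne_zero two_ne_zero ht))] at hcomb
  have hnonneg := ge_of_tendsto hcomb (b := 0) <| by
    filter_upwards [self_mem_nhdsWithin] with ε hε
    have h341 := three_four_one_LSeries_nonneg hv (σ := 1 + ε) t
      fun s hs => hsum s (by linarith [mem_Ioi.1 hε])
    convert! mul_nonneg (mem_Ioi.1 hε).le h341 using 1
    rw [Function.comp_apply, ← Complex.re_ofReal_mul]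
    push_cast
    ring_nf
  refine (analyticOrderNatAt_eq_zero_iff hZ hZ₁ (by simp)).1 ?_
  by_contra hpos
  have hone_le : (1 : ℝ) ≤ analyticOrderNatAt Z (1 + t * Complex.I) := by
    exact_mod_cast Nat.one_le_iff_ne_zero.2 hpos
  simp only [Complex.add_re, Complex.mul_re, Complex.sub_re, Complex.natCast_re,
    Complex.one_re, Complex.re_ofNat, Complex.im_ofNat, Complex.zero_re,
    zero_mul, sub_zero] at hnonneg
  linarith [(analyticOrderNatAt Z (1 + (2 * t : ℝ) * Complex.I)).cast_nonneg (α := ℝ)]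

theorem ne_zero_of_LSeries_logDeriv_of_one_le_re (hv : ∀ n, 0 ≤ v n)
    (hZ : AnalyticOnNhd ℂ Z {s | 1 ≤ s.re})
    (hZ₁ : Z 1 ≠ 0) (hsum : ∀ s : ℂ, 1 < s.re → LSeriesSummable (fun n => (v n : ℂ)) s)
    (hlog : ∀ s : ℂ, 1 < s.re →
      (s - 1) * LSeries (fun n => (v n : ℂ)) s * Z s = Z s - (s - 1) * deriv Z s)
    {s : ℂ} (hs : 1 ≤ s.re) : Z s ≠ 0 := by
  rcases hs.lt_or_eq with hlt | heq
  · exact ne_zero_of_LSeries_logDeriv_of_one_lt_re hZ hZ₁ hsum hlog hlt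
  have hs_eq : s = 1 + s.im * Complex.I := by
    rw [← Complex.re_add_im s, ← heq]
    simp
  rcases eq_or_ne s.im 0 with him | him
  · rw [hs_eq, him]
    simpa using hZ₁
  · exact hs_eq ▸ ne_zero_of_LSeries_logDeriv_of_re_eq_one hv hZ hZ₁ hsum hlog him

theorem tendsto_sum_div_of_LSeries_logDeriv (hv : ∀ n, 0 ≤ v n) {B : ℝ}
    (hB : ∀ n : ℕ, ∑ k ∈ Finset.Icc 1 n, v k ≤ B * n)
    (hZ : AnalyticOnNhd ℂ Z {s | 1 ≤ s.re}) (hZ₁ : Z 1 ≠ 0)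
    (hsum : ∀ s : ℂ, 1 < s.re → LSeriesSummable (fun n => (v n : ℂ)) s)
    (hlog : ∀ s : ℂ, 1 < s.re →
      (s - 1) * LSeries (fun n => (v n : ℂ)) s * Z s = Z s - (s - 1) * deriv Z s) :
    Tendsto (fun n : ℕ => (∑ k ∈ Finset.Icc 1 n, v k) / n) atTop (𝓝 1) := by
  have hne {s : ℂ} (hs : 1 ≤ s.re) : Z s ≠ 0 :=
    ne_zero_of_LSeries_logDeriv_of_one_le_re hv hZ hZ₁ hsum hlog hs
  refine tendsto_sum_div_of_LSeries_eq hv hB (H := fun s => -logDeriv Z s) ?_ fun s hs => ?_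
  · exact (hZ.deriv.continuousOn.div hZ.continuousOn fun s hs => hne hs).neg
  · have hsub := sub_one_ne_zero_of_one_lt_re hs
    have hs_ne := hne hs.le
    rw [logDeriv_apply, Complex.ofReal_one]
    field_simp
    linear_combination hlog s hs

end NonVanishing

section PrimeIdealTheorem

open Filter Ideal NumberField Topology
open scoped ArithmeticFunction.vonMangoldt nonZeroDivisors

variable {K : Type*} [Field K] [NumberField K]

theorem absNorm_span_natCast_ringOfIntegers (n : ℕ) :
    absNorm (span {(n : 𝓞 K)}) = n ^ Module.finrank ℚ K := by
  rw [absNorm_span_natCast, RingOfIntegers.rank]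

theorem exists_absNorm_eq_prime_pow {P : Ideal (𝓞 K)} (hP : Prime P) :
    ∃ p f : ℕ, p.Prime ∧ f ≠ 0 ∧ absNorm P = p ^ f := by
  have hP_prime := isPrime_of_prime hP
  have : NeZero P := ⟨hP.ne_zero⟩
  have hp := Nat.absNorm_under_prime P
  have hmem : ((absNorm (under ℤ P) : ℕ) : 𝓞 K) ∈ P := by
    simpa using mem_comap.1 (absNorm_mem (under ℤ P))
  have hdvd := map_dvd (absNorm (S := 𝓞 K)) (dvd_span_singleton.2 hmem)
  rw [absNorm_span_natCast_ringOfIntegers, Nat.dvd_prime_pow hp] at hdvd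
  obtain ⟨f, -, hf⟩ := hdvd
  refine ⟨_, f, hp, ?_, hf⟩
  rintro rfl
  exact hP_prime.ne_top (absNorm_eq_one_iff.1 hf)

theorem sum_log_absNorm_le {s : Finset (Ideal (𝓞 K))} (hs : ∀ P ∈ s, Prime P) {n : ℕ} (hn : n ≠ 0)
    (hmem : ∀ P ∈ s, (n : 𝓞 K) ∈ P) :
    ∑ P ∈ s, Real.log (absNorm P) ≤ Module.finrank ℚ K * Real.log n := by
  have hpos (P) (hP : P ∈ s) : 0 < (absNorm P : ℝ) :=
    Nat.cast_pos.2 (Nat.pos_of_ne_zero (absNorm_eq_zero_iff.not.2 (hs P hP).ne_zero))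
  have hdvd := map_dvd (absNorm (S := 𝓞 K)) <|
    Finset.prod_primes_dvd _ hs fun P hP => dvd_span_singleton.2 (hmem P hP)
  rw [absNorm_span_natCast_ringOfIntegers, map_prod] at hdvd
  rw [← Real.log_prod fun P hP => (hpos P hP).ne', ← Real.log_pow]
  exact Real.log_le_log (Finset.prod_pos hpos)
    (by exact_mod_cast Nat.le_of_dvd (Nat.pow_pos (Nat.pos_of_ne_zero hn)) hdvd)

namespace PrimeIdealPower

theorem one_lt_absNorm (x : PrimeIdealPower K) : 1 < absNorm x.1.1 := by
  obtain ⟨p, f, hp, hf, hnorm⟩ := exists_absNorm_eq_prime_pow x.2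
  exact hnorm ▸ Nat.one_lt_pow hf hp.one_lt

theorem eq_of_ideal_eq {x y : PrimeIdealPower K}
    (hnorm : absNorm (x.toIdeal : Ideal (𝓞 K)) = absNorm (y.toIdeal : Ideal (𝓞 K)))
    (hideal : x.1.1 = y.1.1) : x = y := by
  rw [absNorm_toIdeal, absNorm_toIdeal, hideal] at hnorm
  have hexp := Nat.succ_injective (Nat.pow_right_injective y.one_lt_absNorm hnorm)
  exact Subtype.ext (Sigma.ext hideal (heq_of_eq hexp))

theorem natCast_mem_ideal_of_absNorm_toIdeal_eq_pow {x : PrimeIdealPower K} {p k : ℕ}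
    (hx : absNorm (x.toIdeal : Ideal (𝓞 K)) = p ^ k) : (p : 𝓞 K) ∈ x.1.1 := by
  have hmem : ((p ^ k : ℕ) : 𝓞 K) ∈ x.1.1 := by
    rw [← hx, absNorm_toIdeal, Nat.cast_pow]
    exact pow_mem_of_mem _ (absNorm_mem _) _ (Nat.succ_pos _)
  rw [Nat.cast_pow] at hmem
  exact (isPrime_of_prime x.2).mem_of_pow_mem _ hmem

end PrimeIdealPower

variable (K)

theorem mangoldtCoeff_le (n : ℕ) : mangoldtCoeff K n ≤ Module.finrank ℚ K * Λ n := by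
  classical
  rcases isEmpty_or_nonempty
    ((fun x : PrimeIdealPower K => absNorm (x.toIdeal : Ideal (𝓞 K))) ⁻¹' {n}) with _ | ⟨y, hy⟩
  · rw [mangoldtCoeff, tsum_empty]
    exact mul_nonneg (Nat.cast_nonneg _) ArithmeticFunction.vonMangoldt_nonneg
  replace hy : absNorm (y.toIdeal : Ideal (𝓞 K)) = n := hy
  obtain ⟨p, f, hp, hf, hnorm⟩ := exists_absNorm_eq_prime_pow y.2
  obtain ⟨k, hk, rfl⟩ : ∃ k ≠ 0, n = p ^ k :=
    ⟨f * (y.1.2 + 1), mul_ne_zero hf y.1.2.succ_ne_zero, by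
      rw [← hy, y.absNorm_toIdeal, hnorm, pow_mul]⟩
  rw [ArithmeticFunction.vonMangoldt_apply_pow hk, ArithmeticFunction.vonMangoldt_apply_prime hp]
  refine Real.tsum_le_of_sum_le (fun _ => Real.log_natCast_nonneg _) fun s => ?_
  rw [← Finset.sum_image (f := fun P : Ideal (𝓞 K) => Real.log (absNorm P))
    fun x _ z _ h => Subtype.ext (PrimeIdealPower.eq_of_ideal_eq (x.2.trans z.2.symm) h)]
  refine sum_log_absNorm_le ?_ hp.ne_zero ?_ <;> simp only [Finset.forall_mem_image]
  · exact fun x _ => x.1.2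
  · exact fun x _ => PrimeIdealPower.natCast_mem_ideal_of_absNorm_toIdeal_eq_pow x.2

theorem mangoldtCoeff_prime {p : ℕ} (hp : p.Prime) :
    mangoldtCoeff K p = Nat.card {P : Ideal (𝓞 K) // absNorm P = p} * Real.log p := by
  have hfiber (x : (fun x : PrimeIdealPower K => absNorm (x.toIdeal : Ideal (𝓞 K))) ⁻¹' {p}) :
      x.1.1.2 = 0 ∧ absNorm x.1.1.1 = p := by
    have hpow : absNorm x.1.1.1 ^ (x.1.1.2 + 1) = p := x.1.absNorm_toIdeal.symm.trans x.2
    have hexp : x.1.1.2 = 0 := by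
      by_contra hne
      exact Nat.Prime.not_prime_pow (by omega) (hpow ▸ hp)
    exact ⟨hexp, by simpa [hexp] using hpow⟩
  have hprime (P : {P : Ideal (𝓞 K) // absNorm P = p}) : Prime P.1 :=
    (prime_iff_isPrime fun h => hp.ne_zero (P.2.symm.trans (absNorm_eq_zero_iff.2 h))).2
      (isPrime_of_irreducible_absNorm (P.2.symm ▸ hp))
  let e : (fun x : PrimeIdealPower K => absNorm (x.toIdeal : Ideal (𝓞 K))) ⁻¹' {p} ≃
      {P : Ideal (𝓞 K) // absNorm P = p} :=
    { toFun := fun x => ⟨x.1.1.1, (hfiber x).2⟩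
      invFun := fun P => ⟨⟨⟨P, 0⟩, hprime P⟩, by
        simp only [Set.mem_preimage, PrimeIdealPower.absNorm_toIdeal, zero_add, pow_one, P.2,
          Set.mem_singleton_iff]⟩
      left_inv := fun x =>
        Subtype.ext <| Subtype.ext <| Sigma.ext rfl <| heq_of_eq (hfiber x).1.symm
      right_inv := fun _ => rfl }
  rw [mangoldtCoeff, tsum_congr fun x => by rw [(hfiber x).2], tsum_const, Nat.card_congr e,
    nsmul_eq_mul]

theorem sub_one_mul_LSeries_mangoldtCoeff_mul {Z : ℂ → ℂ}
    (hZ : ∀ s : ℂ, 1 < s.re → (s - 1) * LSeries (dedekindCoeff K) s = Z s) {s : ℂ}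
    (hs : 1 < s.re) :
    (s - 1) * LSeries (fun n => (mangoldtCoeff K n : ℂ)) s * Z s = Z s - (s - 1) * deriv Z s := by
  have hderiv : HasDerivAt Z _ s :=
    (((hasDerivAt_id s).sub_const 1).mul (LSeries_hasDerivAt <| abscissaOfAbsConv_lt_of_one_lt_re
      (fun s hs => (LSeriesHasSum_dedekindCoeff hs).LSeriesSummable)
      hs)).congr_of_eventuallyEq <| by
      filter_upwards [(isOpen_lt continuous_const Complex.continuous_re).mem_nhds hs]
        with w hw using (hZ w hw).symm
  rw [hderiv.deriv, ← LSeries_mangoldtCoeff_mul_dedekindCoeff hs, ← hZ s hs]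
  simp only [id]
  ring

theorem sum_mangoldtCoeff_le (s : Finset ℕ) :
    ∑ k ∈ s, mangoldtCoeff K k ≤ Module.finrank ℚ K * ∑ k ∈ s, Λ k := by
  rw [Finset.mul_sum]
  exact Finset.sum_le_sum fun k _ => mangoldtCoeff_le K k

theorem tendsto_sum_mangoldtCoeff_div :
    Tendsto (fun n : ℕ => (∑ k ∈ Finset.Icc 1 n, mangoldtCoeff K k) / n) atTop (𝓝 1) := by
  obtain ⟨Z, hZ, hZ₁, hmul⟩ := exists_differentiableOn_mul_LSeries_dedekindCoeff K
  have hlt : 1 - 1 / (Module.finrank ℚ K : ℝ) < 1 := by simp [Module.finrank_pos]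
  refine tendsto_sum_div_of_LSeries_logDeriv (mangoldtCoeff_nonneg K)
    (B := Module.finrank ℚ K * (Real.log 4 + 4)) (fun n => ?_)
    ((hZ.analyticOnNhd (isOpen_lt continuous_const Complex.continuous_re)).mono
      fun s hs => hlt.trans_le hs) hZ₁ (fun s => LSeriesSummable_mangoldtCoeff)
    fun s => sub_one_mul_LSeries_mangoldtCoeff_mul K hmul
  have hpsi := Chebyshev.psi_le_const_mul_self (x := n) n.cast_nonneg
  rw [Chebyshev.psi, Nat.floor_natCast] at hpsi
  rw [mul_assoc]
  exact (sum_mangoldtCoeff_le K _).trans (by gcongr; exact hpsi)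

theorem tendsto_sum_mangoldtCoeff_not_prime_div :
    Tendsto (fun n : ℕ => (∑ k ∈ Finset.Icc 1 n with ¬ k.Prime, mangoldtCoeff K k) / n) atTop
      (𝓝 0) := by
  obtain ⟨C, hC⟩ := Chebyshev.psi_sub_theta_le_mul_sqrt
  have hlim : Tendsto (fun n : ℕ => Module.finrank ℚ K * C * (√(n : ℝ))⁻¹) atTop (𝓝 0) := by
    simpa using (tendsto_inv_atTop_zero.comp
      (Real.tendsto_sqrt_atTop.comp tendsto_natCast_atTop_atTop)).const_mul
        (Module.finrank ℚ K * C)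
  refine squeeze_zero (fun n => div_nonneg (Finset.sum_nonneg fun k _ => mangoldtCoeff_nonneg K k)
    n.cast_nonneg) (fun n => ?_) hlim
  have hsum := hC n
  rw [Chebyshev.psi_sub_theta_eq_sum_not_prime, Nat.floor_natCast] at hsum
  calc (∑ k ∈ Finset.Icc 1 n with ¬ k.Prime, mangoldtCoeff K k) / n
      ≤ Module.finrank ℚ K * (C * √(n : ℝ)) / n := by
        gcongr
        exact (sum_mangoldtCoeff_le K _).trans (by gcongr; exact hsum)
    _ = Module.finrank ℚ K * C * (√(n : ℝ))⁻¹ := by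
        rw [← Real.sqrt_div_self, mul_div_assoc, mul_div_assoc, mul_assoc]

theorem tendsto_sum_card_absNorm_eq_mul_log_div :
    Tendsto (fun n : ℕ => (∑ p ∈ Finset.Icc 1 n with p.Prime,
      (Nat.card {P : Ideal (𝓞 K) // absNorm P = p} : ℝ) * Real.log p) / n) atTop (𝓝 1) := by
  have hlim := (tendsto_sum_mangoldtCoeff_div K).sub (tendsto_sum_mangoldtCoeff_not_prime_div K)
  rw [sub_zero] at hlim
  refine hlim.congr fun n => ?_
  rw [← sub_div, ← Finset.sum_filter_add_sum_filter_not (Finset.Icc 1 n) Nat.Prime,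
    add_sub_cancel_right]
  exact congrArg (· / (n : ℝ)) <| Finset.sum_congr rfl fun p hp =>
    mangoldtCoeff_prime K (Finset.mem_filter.1 hp).2

end PrimeIdealTheorem

/-! ### Splitting in cyclotomic radical extensions -/

section CompleteSplitting

open Ideal NumberField Polynomial UniqueFactorizationMonoid
open scoped nonZeroDivisors

theorem card_le_of_forall_pow_eq_self {R : Type*} [CommRing R] [IsDomain R] {p : ℕ} (hp : 1 < p)
    (h : ∀ y : R, y ^ p = y) : Nat.card R ≤ p := by
  classical
  have hne : (X ^ p - X : R[X]) ≠ 0 := (monic_X_pow_sub (by simpa using hp)).ne_zero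
  have hdegree : (X ^ p - X : R[X]).natDegree = p :=
    natDegree_sub_eq_left_of_natDegree_lt (by simpa using hp) |>.trans (natDegree_X_pow p)
  have hroots : (Set.univ : Set R) ⊆ (X ^ p - X : R[X]).roots.toFinset := fun y _ => by
    simp [mem_roots hne, h y]
  calc Nat.card R = (Set.univ : Set R).ncard := (Set.ncard_univ R).symm
    _ ≤ (X ^ p - X : R[X]).roots.toFinset.card := by
      rw [← Set.ncard_coe_finset]
      exact Set.ncard_le_ncard hroots (Finset.finite_toSet _)
    _ ≤ (X ^ p - X : R[X]).natDegree := (Multiset.toFinset_card_le _).trans (card_roots' _)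
    _ = p := hdegree

theorem pow_sub_self_mem_of_mul_mem_adjoin {R : Type*} [CommRing R] {I : Ideal R} {p f : ℕ}
    (hp : p.Prime) (hpI : (p : R) ∈ I) (hpf : ¬p ∣ f) {S : Set R} (hS : ∀ x ∈ S, x ^ p - x ∈ I)
    {x : R} (hx : (f : R) * x ∈ Algebra.adjoin ℤ S) : x ^ p - x ∈ I := by
  rcases eq_or_ne I ⊤ with rfl | hI
  · trivial
  have : Nontrivial (R ⧸ I) := Quotient.nontrivial_iff.2 hI
  have : CharP (R ⧸ I) p := (CharP.charP_iff_prime_eq_zero hp).2 <| by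
    rwa [← map_natCast (Ideal.Quotient.mk I), Quotient.eq_zero_iff_mem]
  have : ExpChar (R ⧸ I) p := ExpChar.prime hp
  have hadjoin : Algebra.adjoin ℤ S ≤ AlgHom.equalizer
      (((frobenius (R ⧸ I) p).comp (Ideal.Quotient.mk I)).toIntAlgHom)
      ((Ideal.Quotient.mk I).toIntAlgHom) :=
    Algebra.adjoin_le fun y hy => (Ideal.Quotient.eq.2 (hS y hy) :)
  have hfrob : frobenius (R ⧸ I) p (Ideal.Quotient.mk I (f * x)) = Ideal.Quotient.mk I (f * x) :=
    hadjoin hx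
  rw [map_mul, map_mul, map_natCast, map_natCast] at hfrob
  exact Ideal.Quotient.eq.1 <| ((CharP.isUnit_natCast_iff hp).2 hpf).mul_left_cancel hfrob

theorem squarefree_of_pow_sub_self_mem {R : Type*} [CommRing R] [IsDedekindDomain R]
    {I : Ideal R} (hI : I ≠ ⊥) {k : ℕ} (hk : 1 < k) (h : ∀ x : R, x ^ k - x ∈ I) :
    Squarefree I := by
  refine IsRadical.squarefree hI ((_root_.isRadical_iff_pow_one_lt k hk).2 fun J hJ => ?_)
  refine dvd_iff_le.2 fun x hx => ?_
  have hxk : x ^ k ∈ I := dvd_iff_le.1 hJ (pow_mem_pow hx k)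
  simpa using I.sub_mem hxk (h x)

variable {L : Type*} [Field L] [NumberField L]

theorem exists_natCast_mul_mem_adjoin {S : Set (𝓞 L)}
    (hS : Algebra.adjoin ℚ (algebraMap (𝓞 L) L '' S) = ⊤) :
    ∃ f : ℕ, f ≠ 0 ∧ ∀ x : 𝓞 L, (f : 𝓞 L) * x ∈ Algebra.adjoin ℤ S := by
  have htorsion : Module.IsTorsion ℤ (𝓞 L ⧸ (Algebra.adjoin ℤ S).toSubmodule) := by
    intro y
    obtain ⟨x, rfl⟩ := Submodule.Quotient.mk_surjective _ y
    obtain ⟨t, ht⟩ := multiple_mem_adjoin_of_mem_localization_adjoin ℤ⁰ ℚ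
      (algebraMap (𝓞 L) L '' S) (algebraMap (𝓞 L) L x) (hS ▸ Algebra.mem_top)
    rw [← IsScalarTower.coe_toAlgHom' ℤ, Algebra.adjoin_image] at ht
    obtain ⟨y, hy, hyx⟩ := ht
    have hty : y = (t : ℤ) • x := FaithfulSMul.algebraMap_injective (𝓞 L) L <|
      hyx.trans (map_zsmul (algebraMap (𝓞 L) L) _ _).symm
    rw [hty] at hy
    exact ⟨t, (Submodule.Quotient.mk_eq_zero _).2 hy⟩
  have := Module.finite_of_fg_torsion _ htorsion
  refine ⟨Nat.card (𝓞 L ⧸ (Algebra.adjoin ℤ S).toSubmodule), Nat.card_pos.ne', fun x => ?_⟩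
  have := card_nsmul_eq_zero' (x := (Algebra.adjoin ℤ S).toSubmodule.mkQ x)
  rw [← map_nsmul, Submodule.mkQ_apply, Submodule.Quotient.mk_eq_zero, nsmul_eq_mul] at this
  exact this

theorem absNorm_eq_of_pow_sub_self_mem {p : ℕ} (hp : p.Prime) {P : Ideal (𝓞 L)} (hP : P.IsPrime)
    (hpP : (p : 𝓞 L) ∈ P) (h : ∀ x : 𝓞 L, x ^ p - x ∈ P) : absNorm P = p := by
  have hle : absNorm P ≤ p := by
    rw [absNorm_apply, Submodule.cardQuot_apply]
    refine card_le_of_forall_pow_eq_self hp.one_lt fun y => ?_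
    obtain ⟨x, rfl⟩ := Quotient.mk_surjective y
    exact Ideal.Quotient.eq.2 (h x)
  have hdvd := map_dvd (absNorm (S := 𝓞 L)) (dvd_span_singleton.2 hpP)
  rw [absNorm_span_natCast_ringOfIntegers, Nat.dvd_prime_pow hp] at hdvd
  obtain ⟨f, -, hf⟩ := hdvd
  have hf0 : f ≠ 0 := by
    rintro rfl
    exact hP.ne_top (absNorm_eq_one_iff.1 hf)
  exact hle.antisymm (hf ▸ Nat.le_self_pow hf0 p)

theorem card_absNorm_eq_finrank {p : ℕ} (hp : p.Prime)
    (h : ∀ x : 𝓞 L, x ^ p - x ∈ span {(p : 𝓞 L)}) :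
    Nat.card {P : Ideal (𝓞 L) // absNorm P = p} = Module.finrank ℚ L := by
  classical
  set I : Ideal (𝓞 L) := span {(p : 𝓞 L)}
  have hI : I ≠ ⊥ := by simpa [I, span_singleton_eq_bot] using hp.ne_zero
  have hmem (P : Ideal (𝓞 L)) : P ∈ normalizedFactors I ↔ absNorm P = p := by
    rw [Ideal.mem_normalizedFactors_iff hI, span_singleton_le_iff_mem]
    refine ⟨fun ⟨hP, hpP⟩ => absNorm_eq_of_pow_sub_self_mem hp hP hpP fun x =>
      (span_singleton_le_iff_mem P).2 hpP (h x), fun hP => ⟨?_, hP ▸ absNorm_mem P⟩⟩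
    exact isPrime_of_irreducible_absNorm (hP ▸ hp)
  have hpow : absNorm I = p ^ (normalizedFactors I).card := by
    conv_lhs => rw [← Ideal.prod_normalizedFactors_eq_self hI]
    rw [map_multiset_prod, Multiset.map_congr rfl fun P hP => (hmem P).1 hP, Multiset.map_const',
      Multiset.prod_replicate]
  have hnodup := (squarefree_iff_nodup_normalizedFactors hI).1
    (squarefree_of_pow_sub_self_mem hI hp.one_lt h)
  rw [absNorm_span_natCast_ringOfIntegers] at hpow
  rw [Nat.pow_right_injective hp.two_le hpow, ← Multiset.toFinset_card_of_nodup hnodup,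
    ← Nat.card_eq_finsetCard]
  exact Nat.card_congr <| Equiv.subtypeEquivRight fun P => by rw [Multiset.mem_toFinset, hmem]

theorem pow_sub_self_mem_span_of_pow_eq {R : Type*} [CommRing R] {p d : ℕ} [Fact p.Prime]
    (hd : d ∣ p - 1) {q : ℤ} (hq : (q : ZMod p) ≠ 0) {x₀ : ZMod p} (hx₀ : x₀ ^ d = q) {α : R}
    (hα : α ^ d = q) : α ^ p - α ∈ span {(p : R)} := by
  obtain ⟨k, hk⟩ := hd
  have hp : p = d * k + 1 := by have := (Fact.out : p.Prime).pos; omega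
  have hd0 : d ≠ 0 := by
    rintro rfl
    have := (Fact.out : p.Prime).one_lt
    omega
  have hqk : (q : ZMod p) ^ k = 1 := by
    have hx₀_ne : x₀ ≠ 0 := fun h => hq (by rw [← hx₀, h, zero_pow hd0])
    rw [← hx₀, ← pow_mul, ← hk, ZMod.pow_card_sub_one_eq_one hx₀_ne]
  have hdvd : (p : ℤ) ∣ q ^ k - 1 := by
    rw [← ZMod.intCast_zmod_eq_zero_iff_dvd]
    push_cast
    rw [hqk, sub_self]
  have hdvd' : (p : R) ∣ (q : R) ^ k - 1 := by simpa using map_dvd (Int.castRingHom R) hdvd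
  rw [mem_span_singleton]
  have hfactor : α ^ p - α = (q ^ k - 1) * α := by
    nth_rw 1 [hp]
    rw [pow_succ, pow_mul, hα, sub_one_mul]
  exact hfactor ▸ hdvd'.mul_right α

theorem exists_ringHom_zmod_of_absNorm_eq {p : ℕ} (hp : p.Prime) {P : Ideal (𝓞 L)}
    (hP : absNorm P = p) : Nonempty (𝓞 L →+* ZMod p) := by
  have hcard : Nat.card (𝓞 L ⧸ P) = p := by
    rw [← hP, absNorm_apply, Submodule.cardQuot_apply]
  have : Finite (𝓞 L ⧸ P) := Nat.finite_of_card_ne_zero (hcard ▸ hp.ne_zero)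
  have := Fintype.ofFinite (𝓞 L ⧸ P)
  let e := ZMod.ringEquivOfPrime (𝓞 L ⧸ P) hp (Nat.card_eq_fintype_card.symm.trans hcard)
  exact ⟨e.symm.toRingHom.comp (Ideal.Quotient.mk P)⟩

theorem dvd_sub_one_of_isPrimitiveRoot {R : Type*} [CommRing R] [IsDomain R] {p n : ℕ}
    [Fact p.Prime] (hn : ¬p ∣ n) {ζ : R} (hζ : IsPrimitiveRoot ζ n) (ψ : R →+* ZMod p) :
    n ∣ p - 1 := by
  have hn0 : 0 < n := Nat.pos_of_ne_zero <| by rintro rfl; exact hn (dvd_zero p)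
  have : NeZero (n : ZMod p) := ⟨by rwa [Ne, ZMod.natCast_eq_zero_iff]⟩
  have hroot : (cyclotomic n (ZMod p)).IsRoot (ψ ζ) := by
    rw [← map_cyclotomic n ψ]
    exact (hζ.isRoot_cyclotomic hn0).map
  have hprimitive := isRoot_cyclotomic_iff.1 hroot
  exact hprimitive.dvd_of_pow_eq_one _ <|
    ZMod.pow_card_sub_one_eq_one (hprimitive.ne_zero hn0.ne')

open Classical in
theorem eventually_card_absNorm_eq_ite {n d : ℕ} (hn : 0 < n) (hd : d ∣ n) {q : ℤ}
    {ζ α : 𝓞 L} (hζ : IsPrimitiveRoot ζ n) (hα : α ^ d = q)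
    (hadjoin : Algebra.adjoin ℚ (algebraMap (𝓞 L) L '' {ζ, α}) = ⊤) :
    ∀ᶠ p : ℕ in Filter.atTop, p.Prime → Nat.card {P : Ideal (𝓞 L) // absNorm P = p} =
      if n ∣ p - 1 ∧ ∃ x : ZMod p, x ^ d = q then Module.finrank ℚ L else 0 := by
  obtain ⟨f, hf0, hf⟩ := exists_natCast_mul_mem_adjoin hadjoin
  filter_upwards [Filter.eventually_gt_atTop f, Filter.eventually_gt_atTop n,
    Filter.eventually_gt_atTop q.natAbs] with p hfp hnp hqp hp
  have : Fact p.Prime := ⟨hp⟩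
  split_ifs with hsplit
  · obtain ⟨hdvd, x₀, hx₀⟩ := hsplit
    refine card_absNorm_eq_finrank hp fun x => pow_sub_self_mem_of_mul_mem_adjoin hp
      (mem_span_singleton_self _) (Nat.not_dvd_of_pos_of_lt (by omega) hfp) ?_ (hf x)
    rintro y (rfl | rfl)
    · have hy : y ^ (p - 1) = 1 := (hζ.pow_eq_one_iff_dvd _).2 hdvd
      rw [← Nat.sub_add_cancel hp.one_le, pow_succ, hy, one_mul, sub_self]
      exact zero_mem _
    · rcases eq_or_ne q 0 with rfl | hq
      · rw [Int.cast_zero] at hα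
        rw [eq_zero_of_pow_eq_zero hα, zero_pow hp.ne_zero, sub_zero]
        exact zero_mem _
      · refine pow_sub_self_mem_span_of_pow_eq (hd.trans hdvd) ?_ hx₀ hα
        rw [Ne, ZMod.intCast_zmod_eq_zero_iff_dvd]
        refine fun hdvd_q => hq (Int.eq_zero_of_abs_lt_dvd hdvd_q ?_)
        rwa [Int.abs_eq_natAbs, Nat.cast_lt]
  · refine Nat.card_eq_zero.2 <| .inl ⟨fun ⟨P, hP⟩ => hsplit ?_⟩
    obtain ⟨ψ⟩ := exists_ringHom_zmod_of_absNorm_eq hp hP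
    exact ⟨dvd_sub_one_of_isPrimitiveRoot (Nat.not_dvd_of_pos_of_lt hn hnp) hζ ψ,
      ψ α, by rw [← map_pow, hα, map_intCast]⟩

end CompleteSplitting

section CyclotomicPowers

open Ideal NumberField UniqueFactorizationMonoid

theorem exists_pow_eq_of_forall_dvd_factorization {l q : ℕ} (hl : l ≠ 0) (hq : q ≠ 0)
    (h : ∀ p : ℕ, p.Prime → l ∣ q.factorization p) : ∃ x : ℕ, x ^ l = q := by
  refine ⟨Nat.floorRoot l q, Nat.eq_of_factorization_eq
    (pow_ne_zero _ (Nat.floorRoot_ne_zero.2 ⟨hl, hq⟩)) hq fun p => ?_⟩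
  have hp : l ∣ q.factorization p := by
    by_cases hp : p.Prime
    · exact h p hp
    · simp [Nat.factorization_eq_zero_of_not_prime q hp]
  simp [Nat.mul_div_cancel' hp]

theorem dvd_factorization_of_pow_eq_span_natCast {K : Type*} [Field K] [NumberField K] {p : ℕ}
    [hp : Fact p.Prime] (P : Ideal (𝓞 K)) [P.LiesOver (span {(p : ℤ)})]
    (hP : ramificationIdx P ℤ = 1) {q l : ℕ} (hq : q ≠ 0) {J : Ideal (𝓞 K)}
    (hJ : J ^ l = span {(q : 𝓞 K)}) : l ∣ q.factorization p := by
  classical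
  let c := q / p ^ q.factorization p
  have hpc : ¬p ∣ c := Nat.not_dvd_ordCompl hp.out hq
  have hspan : span {(p : 𝓞 K)} ^ q.factorization p * span {(c : 𝓞 K)} = J ^ l := by
    rw [span_singleton_pow, span_singleton_mul_span_singleton, hJ, ← Nat.cast_pow, ← Nat.cast_mul,
      Nat.ordProj_mul_ordCompl_eq_self]
  have hp0 : span {(p : 𝓞 K)} ≠ ⊥ := by simpa [span_singleton_eq_bot] using hp.out.ne_zero
  have hc0 : span {(c : 𝓞 K)} ≠ ⊥ := by
    rw [Ne, span_singleton_eq_bot, Nat.cast_eq_zero]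
    exact (Nat.ordCompl_pos p hq).ne'
  have hmap : map (algebraMap ℤ (𝓞 K)) (span {(p : ℤ)}) = span {(p : 𝓞 K)} := by
    simp [map_span]
  have hcount_p : (normalizedFactors (span {(p : 𝓞 K)})).count P = 1 := by
    rw [← hP, IsDedekindDomain.ramificationIdx_eq_normalizedFactors_count (span {(p : ℤ)}) P
      (hmap ▸ hp0), hmap]
  have hcount_c : (normalizedFactors (span {(c : 𝓞 K)})).count P = 0 := by
    refine Multiset.count_eq_zero.2 fun hmem => hpc ?_
    have hcP : (c : ℤ) ∈ under ℤ P := by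
      simpa [span_singleton_le_iff_mem] using ((Ideal.mem_normalizedFactors_iff hc0).1 hmem).2
    rwa [← LiesOver.over (p := span {(p : ℤ)}) (P := P), mem_span_singleton,
      Int.natCast_dvd_natCast] at hcP
  have hcount := congrArg (fun I => (normalizedFactors I).count P) hspan
  simp only [normalizedFactors_mul (pow_ne_zero _ hp0) hc0, normalizedFactors_pow,
    Multiset.count_add, Multiset.count_nsmul, hcount_p, hcount_c] at hcount
  exact ⟨_, by simpa using hcount⟩

theorem sq_ne_neg_one_of_isCyclotomicExtension (K : Type*) [Field K] [NumberField K] {n : ℕ}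
    [NeZero n] [IsCyclotomicExtension {n} ℚ K] (hn : Squarefree n) (x : K) : x ^ 2 ≠ -1 := by
  intro hx
  have hx4 : IsPrimitiveRoot x 4 := by
    rw [IsPrimitiveRoot.iff_orderOf]
    refine orderOf_eq_prime_pow (p := 2) (n := 1) ?_ ?_
    · rw [pow_one, hx]
      norm_num
    · rw [show 2 ^ (1 + 1) = 2 * 2 from rfl, pow_mul, hx, neg_one_sq]
  have hdvd := Units.dvd_torsionOrder_of_isPrimitiveRoot hx4
  rw [IsCyclotomicExtension.Rat.torsionOrder_eq (n := n)] at hdvd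
  split_ifs at hdvd with heven
  · exact absurd (hn 2 hdvd) (by decide)
  · exact heven (even_iff_two_dvd.2 (by omega))

theorem pow_ne_intCast_of_isCyclotomicExtension (K : Type*) [Field K] [NumberField K] {n : ℕ}
    [NeZero n] [IsCyclotomicExtension {n} ℚ K] (hn : Squarefree n) {q : ℤ}
    (hq : IsCoprime q (n : ℤ)) {l : ℕ} (hl : l.Prime) (hpow : ¬∃ x : ℤ, x ^ l = q)
    (b : K) : b ^ l ≠ q := by
  intro hb
  have hq0 : q ≠ 0 := by
    rintro rfl
    exact hpow ⟨0, zero_pow hl.ne_zero⟩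
  have hb_integral : IsIntegral ℤ b := IsIntegral.of_pow hl.pos <| by
    rw [hb]
    exact isIntegral_algebraMap (R := ℤ) (x := q)
  obtain ⟨β, rfl⟩ : ∃ β : 𝓞 K, (β : K) = b := ⟨⟨b, hb_integral⟩, rfl⟩
  have hβ : β ^ l = (q : 𝓞 K) := RingOfIntegers.coe_injective (by simpa using hb)
  obtain ⟨x, hx⟩ : ∃ x : ℕ, x ^ l = q.natAbs := by
    refine exists_pow_eq_of_forall_dvd_factorization hl.ne_zero (Int.natAbs_ne_zero.2 hq0)
      fun p hp => ?_
    have : Fact p.Prime := ⟨hp⟩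
    by_cases hpn : p ∣ n
    · have hpq : ¬p ∣ q.natAbs := fun hpq => by
        have hunit := hq.isUnit_of_dvd' (Int.natCast_dvd.2 hpq) (Int.natCast_dvd_natCast.2 hpn)
        rw [Int.ofNat_isUnit] at hunit
        exact hp.not_isUnit hunit
      rw [Nat.factorization_eq_zero_of_not_dvd hpq]
      exact dvd_zero l
    · obtain ⟨⟨P, _, _⟩⟩ := (span {(p : ℤ)}).nonempty_primesOver (S := 𝓞 K)
      refine dvd_factorization_of_pow_eq_span_natCast P
        (IsCyclotomicExtension.Rat.ramificationIdx_eq_of_not_dvd p K P hpn)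
        (Int.natAbs_ne_zero.2 hq0) (J := span {β}) ?_
      rw [span_singleton_pow, hβ, span_singleton_eq_span_singleton]
      simpa using (Int.associated_natAbs q).map (Int.castRingHom (𝓞 K))
  obtain hx | hx : q = (x : ℤ) ^ l ∨ q = -(x : ℤ) ^ l := by
    rw [← Nat.cast_pow, hx]
    exact Int.natAbs_eq q
  · exact hpow ⟨x, hx.symm⟩
  rcases hl.eq_two_or_odd' with rfl | hodd
  · refine sq_ne_neg_one_of_isCyclotomicExtension K hn (β / x) ?_
    have hx0 : (x : K) ≠ 0 := by
      rintro h
      rw [Nat.cast_eq_zero] at h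
      exact hq0 (by simp [hx, h])
    rw [div_pow, hb, hx]
    push_cast
    field_simp
  · exact hpow ⟨-x, by rw [hodd.neg_pow, hx]⟩

end CyclotomicPowers

/-! ### Mean values over primes -/

section PrimeMean

open Filter Topology

/-- `HasPrimeMean f c` says that `(∑_{p ≤ y} f p * log p) / y` tends to `c`, the sum being over
primes. The logarithmic weights make the prime number theorem read `HasPrimeMean 1 1`. -/
def HasPrimeMean (f : ℕ → ℝ) (c : ℝ) : Prop :=
  Tendsto (fun y : ℕ => (∑ p ∈ Finset.range (y + 1) with p.Prime, f p * Real.log p) / y) atTop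
    (𝓝 c)

namespace HasPrimeMean

variable {f g : ℕ → ℝ} {c : ℝ}

theorem const_mul (hf : HasPrimeMean f c) (a : ℝ) : HasPrimeMean (fun p => a * f p) (a * c) :=
  (Tendsto.const_mul a hf).congr fun y => by simp only [mul_div_assoc', Finset.mul_sum, mul_assoc]

theorem sum {ι : Type*} {s : Finset ι} {f : ι → ℕ → ℝ} {c : ι → ℝ}
    (hf : ∀ i ∈ s, HasPrimeMean (f i) (c i)) :
    HasPrimeMean (fun p => ∑ i ∈ s, f i p) (∑ i ∈ s, c i) := by
  refine (tendsto_finsetSum s hf).congr fun y => ?_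
  rw [← Finset.sum_div, Finset.sum_comm]
  simp only [Finset.sum_mul]

theorem congr_of_eventually (hf : HasPrimeMean f c)
    (hfg : ∀ᶠ p in atTop, p.Prime → f p = g p) : HasPrimeMean g c := by
  obtain ⟨N, hN⟩ := eventually_atTop.1 hfg
  let u (p : ℕ) : ℝ := if p.Prime then (g p - f p) * Real.log p else 0
  have hu : ∀ p ≥ N, u p = 0 := fun p hp => by
    by_cases hprime : p.Prime
    · simp [u, hN p hp hprime]
    · simp [u, hprime]
  have hlim := Tendsto.add hf
    (tendsto_const_div_atTop_nhds_zero_nat (∑ p ∈ Finset.range N, u p))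
  rw [add_zero] at hlim
  refine hlim.congr' ?_
  filter_upwards [eventually_ge_atTop N] with y hy
  rw [← Finset.eventually_constant_sum hu (by omega : N ≤ y + 1), ← Finset.sum_filter, ← add_div,
    ← Finset.sum_add_distrib]
  simp only [← add_mul, add_sub_cancel]

theorem congr (hf : HasPrimeMean f c) (hfg : ∀ p, p.Prime → f p = g p) : HasPrimeMean g c :=
  hf.congr_of_eventually (Eventually.of_forall hfg)

end HasPrimeMean

theorem tendsto_sum_log_sub_log_div :
    Tendsto (fun y : ℕ => (∑ p ∈ Finset.range (y + 1) with p.Prime,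
      (Real.log y - Real.log p)) / y) atTop (𝓝 0) := by
  obtain ⟨C, hC⟩ := (Chebyshev.primeCounting_sub_theta_div_log_isBigO.comp_tendsto
    (tendsto_natCast_atTop_atTop (R := ℝ))).bound
  have hlog : Tendsto (fun y : ℕ => Real.log y) atTop atTop :=
    Real.tendsto_log_atTop.comp tendsto_natCast_atTop_atTop
  refine squeeze_zero_norm' ?_ (hlog.const_div_atTop C)
  filter_upwards [hC, eventually_gt_atTop 1] with y hy hy1
  have hy0 : (0 : ℝ) < y := by positivity
  have hlog_pos : 0 < Real.log y := Real.log_pos (by exact_mod_cast hy1)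
  have hsum : ∑ p ∈ Finset.range (y + 1) with p.Prime, (Real.log y - Real.log p) =
      (Nat.primeCounting y - Chebyshev.theta y / Real.log y) * Real.log y := by
    rw [Finset.sum_sub_distrib, Finset.sum_const, nsmul_eq_mul, Chebyshev.theta_eq_sum_Icc,
      Nat.floor_natCast, sub_mul, div_mul_cancel₀ _ hlog_pos.ne', Nat.primeCounting,
      Nat.primeCounting', Nat.count_eq_card_filter_range, Nat.range_succ_eq_Icc_zero]
  simp only [Function.comp_apply, Nat.floor_natCast] at hy
  rw [Real.norm_of_nonneg (by positivity : (0 : ℝ) ≤ y / Real.log y ^ 2)] at hy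
  rw [hsum, norm_div, norm_mul, Real.norm_of_nonneg hlog_pos.le, Real.norm_of_nonneg hy0.le]
  calc _ ≤ C * (y / Real.log y ^ 2) * Real.log y / y := by gcongr
    _ = C / Real.log y := by field_simp

open Classical in
theorem HasPrimeMean.tendsto_card_mul_log_div {S : ℕ → Prop} {δ : ℝ}
    (h : HasPrimeMean (fun p => if S p then 1 else 0) δ) :
    Tendsto (fun y : ℕ => (Finset.card {p ∈ Finset.range (y + 1) | p.Prime ∧ S p} : ℝ) *
      Real.log y / y) atTop (𝓝 δ) := by
  have hnonneg {y p : ℕ} (hp : p ∈ Finset.range (y + 1)) : 0 ≤ Real.log y - Real.log p := by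
    have hpy : (p : ℝ) ≤ y := by exact_mod_cast Nat.lt_succ_iff.1 (Finset.mem_range.1 hp)
    rcases p.eq_zero_or_pos with rfl | hp0
    · simpa using Real.log_natCast_nonneg y
    · exact sub_nonneg.2 (Real.log_le_log (by exact_mod_cast hp0) hpy)
  have hdiff : Tendsto (fun y : ℕ => (∑ p ∈ Finset.range (y + 1) with p.Prime,
      (if S p then 1 else 0) * (Real.log y - Real.log p)) / y) atTop (𝓝 0) := by
    refine squeeze_zero (fun y => ?_) (fun y => ?_) tendsto_sum_log_sub_log_div
    · exact div_nonneg (Finset.sum_nonneg fun p hp => mul_nonneg (by split_ifs <;> simp)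
        (hnonneg (Finset.mem_filter.1 hp).1)) y.cast_nonneg
    · gcongr with p hp
      exact mul_le_of_le_one_left (hnonneg (Finset.mem_filter.1 hp).1) (by split_ifs <;> simp)
  have hlim := Tendsto.add h hdiff
  rw [add_zero] at hlim
  refine hlim.congr fun y => ?_
  rw [← add_div, ← Finset.sum_add_distrib, ← Finset.filter_filter, Finset.card_filter,
    Nat.cast_sum, Finset.sum_mul]
  simp only [← mul_add, add_sub_cancel, Nat.cast_ite, Nat.cast_one, Nat.cast_zero]

open Classical in
theorem HasPrimeMean.tendsto_card_div_card {S : ℕ → Prop} {δ : ℝ}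
    (h : HasPrimeMean (fun p => if S p then 1 else 0) δ) (hone : HasPrimeMean (fun _ => 1) 1) :
    Tendsto (fun y : ℕ => (Finset.card {p ∈ Finset.range (y + 1) | p.Prime ∧ S p} : ℝ) /
      (Finset.card {p ∈ Finset.range (y + 1) | p.Prime} : ℝ)) atTop (𝓝 δ) := by
  have hprimes := tendsto_card_mul_log_div (S := fun _ => True) (hone.congr fun _ _ => by simp)
  have hratio := h.tendsto_card_mul_log_div.div hprimes one_ne_zero
  rw [div_one] at hratio
  refine hratio.congr' ?_
  filter_upwards [eventually_gt_atTop 1] with y hy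
  have hlog : Real.log y ≠ 0 := (Real.log_pos (by exact_mod_cast hy)).ne'
  simp only [Pi.div_apply, and_true]
  rw [div_div_div_cancel_right₀ (by positivity), mul_div_mul_right _ _ hlog]

open NumberField in
theorem hasPrimeMean_card_absNorm_eq (K : Type*) [Field K] [NumberField K] :
    HasPrimeMean (fun p => Nat.card {P : Ideal (𝓞 K) // Ideal.absNorm P = p}) 1 := by
  have hfilter (y : ℕ) : {p ∈ Finset.range (y + 1) | p.Prime} =
      {p ∈ Finset.Icc 1 y | p.Prime} := by
    ext p
    simp only [Finset.mem_filter, Finset.mem_Icc, Finset.mem_range]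
    exact ⟨fun h => ⟨⟨h.2.pos, by omega⟩, h.2⟩, fun h => ⟨by omega, h.2⟩⟩
  simp only [HasPrimeMean, hfilter]
  exact tendsto_sum_card_absNorm_eq_mul_log_div K

end PrimeMean

section RadicalExtensions

open NumberField Polynomial

theorem dvd_natDegree_minpoly_of_pow_mul_eq {K E : Type*} [Field K] [Field E] [Algebra K E]
    {l c : ℕ} (hl : l.Prime) {a : K} (ha : ∀ b : K, b ^ l ≠ a) {α : E} (hα : IsIntegral K α)
    (hpow : α ^ (l * c) = algebraMap K E a) : l ∣ (minpoly K α).natDegree := by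
  have hminpoly : X ^ l - C a = minpoly K (α ^ c) :=
    minpoly.eq_of_irreducible_of_monic (X_pow_sub_C_irreducible_of_prime hl ha)
      (by simp [← pow_mul, mul_comm c l, hpow]) (monic_X_pow_sub_C a hl.ne_zero)
  have hfinrank : Module.finrank K (IntermediateField.adjoin K {α ^ c}) = l := by
    rw [IntermediateField.adjoin.finrank (hα.pow c), ← hminpoly, natDegree_X_pow_sub_C]
  have := IntermediateField.adjoin.finiteDimensional hα
  rw [← hfinrank, ← IntermediateField.adjoin.finrank hα]
  exact IntermediateField.finrank_dvd_of_le_right <| IntermediateField.adjoin_simple_le_iff.2 <|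
    pow_mem (IntermediateField.mem_adjoin_simple_self K α) c

theorem irreducible_X_pow_sub_C_of_squarefree {K : Type*} [Field K] {d : ℕ} (hd : Squarefree d)
    {a : K} (ha : ∀ l : ℕ, l.Prime → l ∣ d → ∀ b : K, b ^ l ≠ a) :
    Irreducible (X ^ d - C a) := by
  obtain ⟨α, hα⟩ := IsAlgClosed.exists_pow_nat_eq (algebraMap K (AlgebraicClosure K) a)
    (Nat.pos_of_ne_zero hd.ne_zero)
  have hα_integral : IsIntegral K α := Algebra.IsIntegral.isIntegral α
  have hdvd : d ∣ (minpoly K α).natDegree := by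
    rw [← Nat.prod_primeFactors_of_squarefree hd]
    refine Finset.prod_primes_dvd _ (fun l hl => (Nat.prime_of_mem_primeFactors hl).prime)
      fun l hl => ?_
    have hl_prime := Nat.prime_of_mem_primeFactors hl
    obtain ⟨c, rfl⟩ := Nat.dvd_of_mem_primeFactors hl
    exact dvd_natDegree_minpoly_of_pow_mul_eq hl_prime (ha l hl_prime (dvd_mul_right l c))
      hα_integral hα
  have hminpoly : X ^ d - C a = minpoly K α := by
    refine eq_of_monic_of_dvd_of_natDegree_le (minpoly.monic hα_integral)
      (monic_X_pow_sub_C a hd.ne_zero) (minpoly.dvd K α (by simp [hα])) ?_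
    rw [natDegree_X_pow_sub_C]
    exact Nat.le_of_dvd (minpoly.natDegree_pos hα_integral) hdvd
  exact hminpoly ▸ minpoly.irreducible hα_integral

open Classical in
theorem hasPrimeMean_of_isCyclotomicExtension_of_adjoin_eq_top (K : Type*) {L : Type*} [Field K]
    [NumberField K] [Field L] [NumberField L] [Algebra K L] {n d : ℕ} [NeZero n]
    [IsCyclotomicExtension {n} ℚ K] (hd : d ∣ n) {q : ℤ} {α : L} (hα : α ^ d = q)
    (hadjoin : Algebra.adjoin K {α} = ⊤) :
    HasPrimeMean (fun p => if n ∣ p - 1 ∧ ∃ x : ZMod p, x ^ d = q then 1 else 0)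
      (Module.finrank ℚ L : ℝ)⁻¹ := by
  have hn : 0 < n := Nat.pos_of_neZero n
  have hα_integral : IsIntegral ℤ α := IsIntegral.of_pow (Nat.pos_of_dvd_of_pos hd hn) <| by
    rw [hα]
    exact isIntegral_algebraMap (R := ℤ) (x := q)
  obtain ⟨β, rfl⟩ : ∃ β : 𝓞 L, (β : L) = α := ⟨⟨α, hα_integral⟩, rfl⟩
  have hζ := IsCyclotomicExtension.zeta_spec n ℚ K
  have hζL := hζ.map_of_injective (algebraMap K L).injective
  have hgenerate : Algebra.adjoin ℚ (algebraMap (𝓞 L) L '' {hζL.toInteger, β}) = ⊤ := by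
    have htower := Algebra.adjoin_eq_adjoin_union ℚ {IsCyclotomicExtension.zeta n ℚ K} {(β : L)}
      (IsCyclotomicExtension.adjoin_primitive_root_eq_top hζ)
    rw [hadjoin, Subalgebra.restrictScalars_top, Set.image_singleton] at htower
    rw [Set.image_pair]
    exact htower.symm
  have hcard := eventually_card_absNorm_eq_ite hn hd hζL.toInteger_isPrimitiveRoot
    (RingOfIntegers.coe_injective (by simpa using hα)) hgenerate
  have hmean := (hasPrimeMean_card_absNorm_eq L).const_mul (Module.finrank ℚ L : ℝ)⁻¹
  rw [mul_one] at hmean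
  refine hmean.congr_of_eventually <| hcard.mono fun p hp hprime => ?_
  rw [hp hprime]
  split_ifs
  · exact inv_mul_cancel₀ (by exact_mod_cast Module.finrank_pos.ne')
  · simp

open Classical in
theorem hasPrimeMean_dvd_sub_one_and_exists_pow_eq {n d : ℕ} (hn : Squarefree n) (hd : d ∣ n)
    {q : ℤ} (hq : IsCoprime q (n : ℤ))
    (hpow : ∀ l : ℕ, l.Prime → l ∣ d → ¬∃ x : ℤ, x ^ l = q) :
    HasPrimeMean (fun p => if n ∣ p - 1 ∧ ∃ x : ZMod p, x ^ d = q then 1 else 0)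
      ((n.totient : ℝ)⁻¹ * (d : ℝ)⁻¹) := by
  have : NeZero n := ⟨hn.ne_zero⟩
  let K := CyclotomicField n ℚ
  have : IsCyclotomicExtension {n} ℚ K := by
    convert! CyclotomicField.isCyclotomicExtension n ℚ
  have hirr : Irreducible (X ^ d - C (q : K)) :=
    irreducible_X_pow_sub_C_of_squarefree (hn.squarefree_of_dvd hd) fun l hl hld =>
      pow_ne_intCast_of_isCyclotomicExtension K hn hq hl (hpow l hl hld)
  have : Fact (Irreducible (X ^ d - C (q : K))) := ⟨hirr⟩
  let L := AdjoinRoot (X ^ d - C (q : K))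
  let B := AdjoinRoot.powerBasis hirr.ne_zero
  have : FiniteDimensional K L := B.finite
  have : CharZero L := charZero_of_injective_algebraMap (algebraMap K L).injective
  have : FiniteDimensional ℚ L := FiniteDimensional.trans ℚ K L
  have : NumberField L := ⟨⟩
  have hfinrank : Module.finrank ℚ L = n.totient * d := by
    rw [← Module.finrank_mul_finrank ℚ K L, IsCyclotomicExtension.Rat.finrank n K, B.finrank,
      AdjoinRoot.powerBasis_dim, natDegree_X_pow_sub_C]
  have hroot : AdjoinRoot.root (X ^ d - C (q : K)) ^ d = (q : L) := by
    have heval := AdjoinRoot.eval₂_root (X ^ d - C (q : K))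
    rw [eval₂_sub, eval₂_X_pow, eval₂_C, sub_eq_zero] at heval
    exact heval.trans (map_intCast _ q)
  have hmean := hasPrimeMean_of_isCyclotomicExtension_of_adjoin_eq_top K hd hroot
    AdjoinRoot.adjoinRoot_eq_top
  rwa [hfinrank, Nat.cast_mul, mul_inv] at hmean

end RadicalExtensions

/-! ### Power residues -/

section PowerResidues

theorem exists_pow_mul_eq_iff {G₀ : Type*} [CommGroupWithZero G₀] {a b : ℕ} (ha : a ≠ 0)
    (hb : b ≠ 0) (hab : a.Coprime b) {q : G₀} :
    (∃ x : G₀, x ^ (a * b) = q) ↔ (∃ x : G₀, x ^ a = q) ∧ ∃ x : G₀, x ^ b = q := by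
  refine ⟨fun ⟨x, hx⟩ => ⟨⟨x ^ b, by rw [← pow_mul, mul_comm b a, hx]⟩,
    ⟨x ^ a, by rw [← pow_mul, hx]⟩⟩, fun ⟨⟨x, hx⟩, ⟨y, hy⟩⟩ => ?_⟩
  rcases eq_or_ne q 0 with rfl | hq
  · exact ⟨0, zero_pow (mul_ne_zero ha hb)⟩
  have hbezout : a * a.gcdA b + b * a.gcdB b = 1 := by
    rw [← Nat.gcd_eq_gcd_ab, hab.gcd_eq_one, Nat.cast_one]
  have hy_pow : (y ^ a.gcdA b) ^ (a * b) = q ^ (a * a.gcdA b) := by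
    rw [← hy, ← zpow_natCast, ← zpow_natCast, ← zpow_mul, ← zpow_mul]
    congr 1
    push_cast
    ring
  have hx_pow : (x ^ a.gcdB b) ^ (a * b) = q ^ (b * a.gcdB b) := by
    rw [← hx, ← zpow_natCast, ← zpow_natCast, ← zpow_mul, ← zpow_mul]
    congr 1
    push_cast
    ring
  exact ⟨y ^ a.gcdA b * x ^ a.gcdB b, by
    rw [mul_pow, hy_pow, hx_pow, ← zpow_add₀ hq, hbezout, zpow_one]⟩

theorem exists_pow_eq_of_coprime_card_sub_one {G₀ : Type*} [GroupWithZero G₀] {n : ℕ} (hn : n ≠ 0)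
    (hcoprime : (Nat.card G₀ - 1).Coprime n) (a : G₀) : ∃ x : G₀, x ^ n = a := by
  rcases eq_or_ne a 0 with rfl | ha
  · exact ⟨0, zero_pow hn⟩
  · rw [← Nat.card_units] at hcoprime
    obtain ⟨u, hu⟩ := hcoprime.pow_left_bijective.surjective (Units.mk0 a ha)
    exact ⟨u, congrArg Units.val hu⟩

theorem exists_dvd_pow_sub_iff {p n : ℕ} {q : ℤ} :
    (∃ x : ℤ, (p : ℤ) ∣ x ^ n - q) ↔ ∃ x : ZMod p, x ^ n = q := by
  rw [ZMod.intCast_surjective.exists]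
  refine exists_congr fun x => ?_
  rw [← ZMod.intCast_zmod_eq_zero_iff_dvd, Int.cast_sub, Int.cast_pow, sub_eq_zero]

end PowerResidues

section MoebiusSums

open ArithmeticFunction
open scoped ArithmeticFunction.Moebius ArithmeticFunction.zeta

theorem prod_primeFactors_one_sub_mul_one_sub {R : Type*} [CommRing R] {f g : ArithmeticFunction R}
    (hf : f.IsMultiplicative) (hg : g.IsMultiplicative) {m : ℕ} (hm : Squarefree m) :
    ∏ l ∈ m.primeFactors, (1 - f l * (1 - g l)) =
      ∑ n ∈ m.divisors, μ n * ∑ d ∈ n.divisors, μ d * (f n * g d) := by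
  let h : ArithmeticFunction R := f.pmul ((μ : ArithmeticFunction R).pmul g * ζ)
  have hh : h.IsMultiplicative :=
    hf.pmul ((isMultiplicative_moebius.intCast.pmul hg).mul isMultiplicative_zeta.natCast)
  have h_apply (n : ℕ) : h n = ∑ d ∈ n.divisors, μ d * (f n * g d) := by
    simp only [h, pmul_apply, coe_mul_zeta_apply, intCoe_apply, Finset.mul_sum]
    exact Finset.sum_congr rfl fun d _ => by ring
  simp only [← h_apply]
  rw [← hh.prodPrimeFactors_one_sub_of_squarefree _ hm]
  refine Finset.prod_congr rfl fun l hl => ?_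
  have hl_prime := Nat.prime_of_mem_primeFactors hl
  simp only [h_apply, hl_prime.sum_divisors, moebius_apply_prime hl_prime, moebius_apply_one,
    hg.map_one]
  push_cast
  ring

open Classical in
/-- The indicator function of the set of positive integers satisfying `S`. An arithmetic function
has to vanish at `0`, so `S 0` is ignored. -/
noncomputable def arithmeticIndicator (S : ℕ → Prop) : ArithmeticFunction ℝ :=
  ⟨fun n => if n ≠ 0 ∧ S n then 1 else 0, by simp⟩

open Classical in
theorem arithmeticIndicator_apply {S : ℕ → Prop} {n : ℕ} (hn : n ≠ 0) :
    arithmeticIndicator S n = if S n then 1 else 0 := by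
  simp [arithmeticIndicator, hn]

theorem isMultiplicative_arithmeticIndicator {S : ℕ → Prop} (hone : S 1)
    (hmul : ∀ {a b : ℕ}, a ≠ 0 → b ≠ 0 → a.Coprime b → (S (a * b) ↔ S a ∧ S b)) :
    (arithmeticIndicator S).IsMultiplicative := by
  classical
  refine IsMultiplicative.iff_ne_zero.2 ⟨?_, fun {a b} ha hb hab => ?_⟩
  · rw [arithmeticIndicator_apply one_ne_zero, if_pos hone]
  · rw [arithmeticIndicator_apply (mul_ne_zero ha hb), arithmeticIndicator_apply ha,
      arithmeticIndicator_apply hb, ite_zero_mul_ite_zero, one_mul]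
    exact if_congr (hmul ha hb hab) rfl rfl

open Classical in
theorem ite_exists_pow_eq_eq_sum_moebius {p m : ℕ} (hp : p.Prime) (hm : Squarefree m) (q : ZMod p) :
    (if ∃ x : ZMod p, x ^ m = q then 1 else 0 : ℝ) =
      ∑ n ∈ m.divisors, μ n * ∑ d ∈ n.divisors,
        μ d * (if n ∣ p - 1 ∧ ∃ x : ZMod p, x ^ d = q then 1 else 0 : ℝ) := by
  have : Fact p.Prime := ⟨hp⟩
  let f := arithmeticIndicator (· ∣ p - 1)
  let g := arithmeticIndicator fun d => ∃ x : ZMod p, x ^ d = q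
  have hf : f.IsMultiplicative := isMultiplicative_arithmeticIndicator (one_dvd _)
    fun _ _ hab => ⟨fun h => ⟨dvd_of_mul_right_dvd h, dvd_of_mul_left_dvd h⟩,
      fun h => hab.mul_dvd_of_dvd_of_dvd h.1 h.2⟩
  have hg : g.IsMultiplicative := isMultiplicative_arithmeticIndicator ⟨q, pow_one q⟩
    fun ha hb hab => exists_pow_mul_eq_iff ha hb hab
  have hfactor : ∀ l ∈ m.primeFactors, 1 - f l * (1 - g l) = g l := fun l hl => by
    have hl_prime := Nat.prime_of_mem_primeFactors hl
    simp only [f, g, arithmeticIndicator_apply hl_prime.ne_zero]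
    by_cases hl_dvd : l ∣ p - 1
    · rw [if_pos hl_dvd, one_mul, sub_sub_cancel]
    · have hcoprime : (Nat.card (ZMod p) - 1).Coprime l := by
        rw [Nat.card_zmod]
        exact ((hl_prime.coprime_iff_not_dvd).2 hl_dvd).symm
      rw [if_neg hl_dvd, if_pos (exists_pow_eq_of_coprime_card_sub_one hl_prime.ne_zero hcoprime q),
        zero_mul, sub_zero]
  rw [← arithmeticIndicator_apply (S := fun d => ∃ x : ZMod p, x ^ d = q) hm.ne_zero,
    ← hg.prod_primeFactors hm, ← Finset.prod_congr rfl hfactor,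
    prod_primeFactors_one_sub_mul_one_sub hf hg hm]
  refine Finset.sum_congr rfl fun n hn => congrArg _ <| Finset.sum_congr rfl fun d hd =>
    congrArg _ ?_
  rw [arithmeticIndicator_apply (Nat.pos_of_mem_divisors hn).ne',
    arithmeticIndicator_apply (Nat.pos_of_mem_divisors hd).ne', ite_zero_mul_ite_zero, one_mul]
  congr

theorem sum_moebius_mul_inv_totient_mul_inv {m : ℕ} (hm : Squarefree m) :
    ∑ n ∈ m.divisors, μ n * ∑ d ∈ n.divisors, μ d * ((n.totient : ℝ)⁻¹ * (d : ℝ)⁻¹) =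
      m.totient / m := by
  let f : ArithmeticFunction ℝ := ⟨fun n => (n.totient : ℝ)⁻¹, by simp⟩
  let g : ArithmeticFunction ℝ := ⟨fun n => (n : ℝ)⁻¹, by simp⟩
  have hf : f.IsMultiplicative := ⟨by simp [f], fun hab => by
    simp [f, Nat.totient_mul hab, mul_comm]⟩
  have hg : g.IsMultiplicative := ⟨by simp [g], fun _ => by simp [g, mul_comm]⟩
  have hm0 : (m : ℝ) ≠ 0 := by exact_mod_cast hm.ne_zero
  have htotient : (m.totient : ℝ) = m * ∏ l ∈ m.primeFactors, (1 - (l : ℝ)⁻¹) := by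
    simpa using congrArg ((↑) : ℚ → ℝ) (Nat.totient_eq_mul_prod_factors m)
  rw [htotient, mul_div_cancel_left₀ _ hm0]
  refine (prod_primeFactors_one_sub_mul_one_sub hf hg hm).symm.trans <|
    Finset.prod_congr rfl fun l hl => ?_
  have hl_prime := Nat.prime_of_mem_primeFactors hl
  have hl0 : (l : ℝ) ≠ 0 := by exact_mod_cast hl_prime.ne_zero
  have hl1 : (l : ℝ) - 1 ≠ 0 := sub_ne_zero.2 (by exact_mod_cast hl_prime.ne_one)
  simp only [f, g, coe_mk, Nat.totient_prime hl_prime, Nat.cast_sub hl_prime.one_le, Nat.cast_one]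
  field_simp

open Classical in
theorem hasPrimeMean_exists_pow_eq {m : ℕ} (hm : Squarefree m) {q : ℤ} (hq : IsCoprime q (m : ℤ))
    (hpow : ∀ l : ℕ, l.Prime → l ∣ m → ¬∃ x : ℤ, x ^ l = q) :
    HasPrimeMean (fun p => if ∃ x : ZMod p, x ^ m = q then 1 else 0) (m.totient / m) := by
  rw [← sum_moebius_mul_inv_totient_mul_inv hm]
  refine (HasPrimeMean.sum fun n hn => (HasPrimeMean.sum fun d hd =>
    HasPrimeMean.const_mul ?_ _).const_mul _).congr
      fun p hp => (ite_exists_pow_eq_eq_sum_moebius hp hm q).symm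
  have hnm := Nat.dvd_of_mem_divisors hn
  have hdn := Nat.dvd_of_mem_divisors hd
  exact hasPrimeMean_dvd_sub_one_and_exists_pow_eq (hm.squarefree_of_dvd hnm) hdn
    (hq.of_isCoprime_of_dvd_right (Int.natCast_dvd_natCast.2 hnm))
    fun l hl hld => hpow l hl (hld.trans (hdn.trans hnm))

theorem hasPrimeMean_one : HasPrimeMean (fun _ => 1) 1 := by
  simpa using hasPrimeMean_exists_pow_eq squarefree_one (q := 1) isCoprime_one_left
    fun l hl hl_one => absurd (Nat.dvd_one.1 hl_one) hl.ne_one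

end MoebiusSums

open Filter in
open scoped Classical in
theorem stmt_13 (m : ℕ) (hm : 0 < m) (hsq : Squarefree m) (q : ℤ)
    (hco : IsCoprime q (m : ℤ))
    (hpow : ∀ p : ℕ, p.Prime → p ∣ m → ¬∃ x : ℤ, x ^ p = q) :
    Tendsto (fun y : ℕ =>
        (((Finset.range (y + 1)).filter
            (fun p : ℕ => p.Prime ∧ ∃ x : ℤ, (p : ℤ) ∣ x ^ m - q)).card : ℝ) /
          (((Finset.range (y + 1)).filter Nat.Prime).card : ℝ))
      atTop (nhds ((Nat.totient m : ℝ) / m)) := by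
  simp only [exists_dvd_pow_sub_iff]
  exact (hasPrimeMean_exists_pow_eq hsq hco hpow).tendsto_card_div_card hasPrimeMean_one
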